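/- arXiv:0902.3345 — 5 statements merged into one kernel-verified Lean document; each statement's English description precedes it below -/
import Mathlib

section
/- Let p = (p_1,…,p_m) be real polynomials in n variables such that S = S(p_1,…,p_m) is convex with non-empty interior. If there exists d ≥ 1 such that the d-th Lasserre relaxation of S with respect to p is exact, i.e. S(p)_d = S, then every face of S is exposed. -/
open MvPolynomial

/-- A face of a convex set `S ⊆ ℝⁿ`: a nonempty convex subset `F ⊆ S` such that whenever
`x, y ∈ S`, `λ ∈ (0,1)` and `λx + (1-λ)y ∈ F`, then `x, y ∈ F`. -/
def IsFaceOf {n : ℕ} (S F : Set (Fin n → ℝ)) : Prop :=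
  F.Nonempty ∧ Convex ℝ F ∧ F ⊆ S ∧
    ∀ x ∈ S, ∀ y ∈ S, ∀ l : ℝ, 0 < l → l < 1 →
      l • x + (1 - l) • y ∈ F → x ∈ F ∧ y ∈ F

/-- The affine-linear function `x ↦ c + a·x` on `ℝⁿ`. -/
def affEval {n : ℕ} (a : Fin n → ℝ) (c : ℝ) (x : Fin n → ℝ) : ℝ :=
  c + ∑ i, a i * x i

/-- `F` is an exposed face of `S`: either `F = S` or there is a nonzero affine-linear
function `ℓ` with `ℓ ≥ 0` on `S`, `{ℓ = 0} ∩ S ≠ ∅` and `{ℓ = 0} ∩ S = F`. -/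
def IsExposedFaceOf {n : ℕ} (S F : Set (Fin n → ℝ)) : Prop :=
  F = S ∨ ∃ (a : Fin n → ℝ) (c : ℝ), affEval a c ≠ 0 ∧
    (∀ x ∈ S, 0 ≤ affEval a c x) ∧
    ({x | affEval a c x = 0} ∩ S).Nonempty ∧
    {x | affEval a c x = 0} ∩ S = F

/-- The basic closed semialgebraic set `S(p₁,…,p_m) = {x | p₁(x) ≥ 0, …, p_m(x) ≥ 0}`. -/
def basicClosedSet {n m : ℕ} (p : Fin m → MvPolynomial (Fin n) ℝ) : Set (Fin n → ℝ) :=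
  {x | ∀ i, 0 ≤ eval x (p i)}

/-- `σ` is a sum of squares of polynomials. -/
def IsSOS {n : ℕ} (σ : MvPolynomial (Fin n) ℝ) : Prop :=
  ∃ (r : ℕ) (f : Fin r → MvPolynomial (Fin n) ℝ), σ = ∑ j, f j ^ 2

/-- The truncated quadratic module
`QM(p)_d = {Σᵢ σᵢ pᵢ | σᵢ sums of squares, deg (σᵢ pᵢ) ≤ d}`, where `p₀ = 1`. -/
def QM {n m : ℕ} (p : Fin m → MvPolynomial (Fin n) ℝ) (d : ℕ) :
    Set (MvPolynomial (Fin n) ℝ) :=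
  {q | ∃ σ : Fin (m + 1) → MvPolynomial (Fin n) ℝ,
    (∀ i, IsSOS (σ i)) ∧
    (∀ i, (σ i * (Fin.cons 1 p : Fin (m + 1) → MvPolynomial (Fin n) ℝ) i).totalDegree ≤ d) ∧
    q = ∑ i, σ i * (Fin.cons 1 p : Fin (m + 1) → MvPolynomial (Fin n) ℝ) i}

/-- The `d`-th Lasserre relaxation `S(p)_d = π(L(p)_d)`: the set of points
`(L(t₁),…,L(tₙ))` where `L` is a linear functional with `L ≥ 0` on `QM(p)_d` and
`L(1) = 1`.  (Since `QM(p)_d` consists of polynomials of degree at most `d`, only the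
restriction of `L` to `ℝ[t]_d` matters.) -/
noncomputable def lasserre {n m : ℕ} (p : Fin m → MvPolynomial (Fin n) ℝ) (d : ℕ) :
    Set (Fin n → ℝ) :=
  {x | ∃ L : MvPolynomial (Fin n) ℝ →ₗ[ℝ] ℝ,
    (∀ q ∈ QM p d, 0 ≤ L q) ∧ L 1 = 1 ∧ ∀ i, x i = L (X i)}

/-!
Let `x₀` be a relatively interior point of a face `F`. Summing finitely many affine functions that
are nonnegative on `S` and vanish at `x₀` gives one such function `w` on whose zero set in `S` they
all vanish; `w` vanishes on `F`, and we claim that it exposes `F`. Take `x₁ ∈ S` with `w x₁ = 0` and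
put `v = x₁ - x₀`. If `pᵢ x₀ = 0`, the linearization of `pᵢ` at `x₀` is nonnegative on `S`, so it
vanishes at `x₁`. Hence the restrictions `gᵢ(s) = pᵢ(x₀ + s v)` are nonnegative for small `s > 0`,
and `gᵢ(0) = 0` forces `gᵢ'(0) = 0`. For small `t > 0`, the functional
`g ↦ g(0) - t g'(0) + O(t²) ∑ₖ g(sₖ)` on univariate polynomials, with nodes `sₖ > 0` close to `0`,
is then nonnegative on all `σ gᵢ` with `σ ≥ 0` of bounded degree, and after normalization it
represents a point `x₀ - t' v`, `t' > 0`, of the Lasserre relaxation. By exactness this point lies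
in `S`, and since `x₀` lies strictly between it and `x₁`, the face `F` contains `x₁`.
-/

open Filter Topology
open scoped Polynomial

/-! ### Univariate polynomials near `0` -/

section FirstOrderRemainder

/-- The remainder `q(s) - q(0) - s q'(0)` of the first-order Taylor expansion of `q` at `0`, as a
linear functional of `q`. -/
noncomputable def firstOrderRemainder {R : Type*} [CommRing R] (s : R) : R[X] →ₗ[R] R :=
  Polynomial.leval s - Polynomial.lcoeff R 0 - s • Polynomial.lcoeff R 1

lemma firstOrderRemainder_apply {R : Type*} [CommRing R] (s : R) (q : R[X]) :
    firstOrderRemainder s q = q.eval s - q.coeff 0 - s * q.coeff 1 :=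
  rfl

lemma firstOrderRemainder_eq_sq_mul {R : Type*} [CommRing R] (s : R) (q : R[X]) :
    firstOrderRemainder s q = s ^ 2 * q.divX.divX.eval s := by
  have eval_eq (f : R[X]) : f.eval s = f.divX.eval s * s + f.coeff 0 := by
    simpa using congrArg (Polynomial.eval s) f.divX_mul_X_add.symm
  rw [firstOrderRemainder_apply, eval_eq q, eval_eq q.divX, Polynomial.coeff_divX]
  ring

lemma exists_abs_firstOrderRemainder_le (q : ℝ[X]) :
    ∃ K, 0 ≤ K ∧ ∀ s ∈ Set.Icc (-1 : ℝ) 1, |firstOrderRemainder s q| ≤ K * s ^ 2 := by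
  obtain ⟨K, hK⟩ := (isCompact_Icc (a := (-1 : ℝ)) (b := 1)).exists_bound_of_continuousOn
    q.divX.divX.continuous.continuousOn
  refine ⟨K, (norm_nonneg _).trans (hK 0 (by simp)), fun s hs => ?_⟩
  rw [firstOrderRemainder_eq_sq_mul, abs_mul, abs_sq, mul_comm]
  exact mul_le_mul_of_nonneg_right (hK s hs) (sq_nonneg s)

lemma linearMap_apply_eq_sum_eval_smul_basis {𝕜 M ι : Type*} [Field 𝕜] [AddCommGroup M]
    [Module 𝕜 M] [DecidableEq ι] {T : Finset ι} {v : ι → 𝕜} (hv : Set.InjOn v T)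
    (φ : 𝕜[X] →ₗ[𝕜] M) {q : 𝕜[X]} (hq : q.degree < T.card) :
    φ q = ∑ k ∈ T, q.eval (v k) • φ (Lagrange.basis T v k) := by
  conv_lhs => rw [Lagrange.eq_interpolate hv hq, Lagrange.interpolate_apply]
  simp only [← Polynomial.smul_eq_C_mul, map_sum, map_smul]

lemma exists_abs_firstOrderRemainder_le_sum (T : Finset ℝ) :
    ∃ K, 0 ≤ K ∧ ∀ q : ℝ[X], q.degree < T.card → ∀ s ∈ Set.Icc (-1 : ℝ) 1,
      |firstOrderRemainder s q| ≤ K * s ^ 2 * ∑ x ∈ T, |q.eval x| := by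
  choose K hK₀ hK using fun x => exists_abs_firstOrderRemainder_le (Lagrange.basis T id x)
  refine ⟨∑ x ∈ T, K x, Finset.sum_nonneg fun x _ => hK₀ x, fun q hq s hs => ?_⟩
  calc |firstOrderRemainder s q|
      = |∑ x ∈ T, q.eval x • firstOrderRemainder s (Lagrange.basis T id x)| := by
        rw [linearMap_apply_eq_sum_eval_smul_basis (Set.injOn_id _) _ hq]
        rfl
    _ ≤ ∑ x ∈ T, |q.eval x| * |firstOrderRemainder s (Lagrange.basis T id x)| := by
        simpa only [smul_eq_mul, abs_mul] using Finset.abs_sum_le_sum_abs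
          (fun x => q.eval x • firstOrderRemainder s (Lagrange.basis T id x)) T
    _ ≤ ∑ x ∈ T, |q.eval x| * ((∑ y ∈ T, K y) * s ^ 2) := by
        gcongr with x hx
        refine (hK x s hs).trans ?_
        gcongr
        exact Finset.single_le_sum (fun y _ => hK₀ y) hx
    _ = (∑ x ∈ T, K x) * s ^ 2 * ∑ x ∈ T, |q.eval x| := by
        rw [← Finset.sum_mul, mul_comm]

end FirstOrderRemainder

section RightOfZero

lemma coeff_zero_nonneg_of_eventually {g : ℝ[X]} (hg : ∀ᶠ s in 𝓝[>] 0, 0 ≤ g.eval s) :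
    0 ≤ g.coeff 0 := by
  rw [Polynomial.coeff_zero_eq_eval_zero]
  exact ge_of_tendsto ((g.continuous.tendsto 0).mono_left nhdsWithin_le_nhds) hg

lemma coeff_one_nonneg_of_eventually {g : ℝ[X]} (h₀ : g.coeff 0 = 0)
    (hg : ∀ᶠ s in 𝓝[>] 0, 0 ≤ g.eval s) : 0 ≤ g.coeff 1 := by
  rw [← Polynomial.coeff_divX]
  refine coeff_zero_nonneg_of_eventually ?_
  filter_upwards [hg, self_mem_nhdsWithin] with s hs hs_pos
  have eval_eq : g.eval s = g.divX.eval s * s := by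
    simpa [h₀] using congrArg (Polynomial.eval s) g.divX_mul_X_add.symm
  exact nonneg_of_mul_nonneg_left (eval_eq ▸ hs) hs_pos

lemma eventually_half_coeff_zero_le_eval {g : ℝ[X]} (hg : ∀ᶠ s in 𝓝[>] 0, 0 ≤ g.eval s) :
    ∀ᶠ s in 𝓝[>] 0, g.coeff 0 / 2 ≤ g.eval s := by
  rcases (coeff_zero_nonneg_of_eventually hg).eq_or_lt with h | h
  · simpa [← h] using hg
  · have hlim : Tendsto (g.eval ·) (𝓝[>] 0) (𝓝 (g.coeff 0)) := by
      rw [Polynomial.coeff_zero_eq_eval_zero]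
      exact (g.continuous.tendsto 0).mono_left nhdsWithin_le_nhds
    exact hlim.eventually_const_le (half_lt_self h)

lemma eventually_mul_lt (a : ℝ) {b : ℝ} (hb : 0 < b) : ∀ᶠ t in 𝓝[>] (0 : ℝ), t * a < b := by
  have hlim : Tendsto (· * a) (𝓝[>] (0 : ℝ)) (𝓝 (0 * a)) :=
    ((continuous_mul_const a).tendsto 0).mono_left nhdsWithin_le_nhds
  exact hlim.eventually_lt_const (by simpa using hb)

lemma eventually_mul_coeff_one_le_half_coeff_zero {g : ℝ[X]} (h₀ : 0 ≤ g.coeff 0)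
    (h₁ : g.coeff 0 = 0 → g.coeff 1 = 0) :
    ∀ᶠ t in 𝓝[>] (0 : ℝ), t * g.coeff 1 ≤ g.coeff 0 / 2 := by
  rcases h₀.eq_or_lt with h | h
  · simp [← h, h₁ h.symm]
  · exact (eventually_mul_lt _ (half_pos h)).mono fun _ => le_of_lt

lemma exists_finset_card_eq_of_eventually {P : ℝ → Prop} {a : ℝ} (hP : ∀ᶠ s in 𝓝[>] a, P s)
    (k : ℕ) : ∃ T : Finset ℝ, T.card = k ∧ ∀ s ∈ T, P s := by
  obtain ⟨b, hab, hb⟩ := mem_nhdsGT_iff_exists_Ioc_subset.1 hP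
  obtain ⟨T, hT, hcard⟩ := (Set.Ioc_infinite (Set.mem_Ioi.1 hab)).exists_subset_card_eq k
  exact ⟨T, hcard, fun s hs => hb (hT hs)⟩

end RightOfZero

section BackwardFunctional

/-- The functional `q ↦ q(0) - t q'(0) + c ∑ₓ q(x)`, with `x` ranging over the nodes in `T`. To
first order in `t` it evaluates `q` at `-t`; the sum over the nodes makes it nonnegative on suitable
polynomials that are only known to be nonnegative to the right of `0`. -/
noncomputable def backwardFunctional (T : Finset ℝ) (t c : ℝ) : ℝ[X] →ₗ[ℝ] ℝ :=
  Polynomial.lcoeff ℝ 0 - t • Polynomial.lcoeff ℝ 1 + c • ∑ x ∈ T, Polynomial.leval x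

lemma backwardFunctional_apply (T : Finset ℝ) (t c : ℝ) (q : ℝ[X]) :
    backwardFunctional T t c q = q.coeff 0 - t * q.coeff 1 + c * ∑ x ∈ T, q.eval x := by
  simp [backwardFunctional, LinearMap.sum_apply]

lemma exists_backwardFunctional_nonneg (T : Finset ℝ) :
    ∃ K, 0 ≤ K ∧ ∀ q : ℝ[X], q.degree < T.card → (∀ s, 0 ≤ q.eval s) →
      ∀ t ∈ Set.Icc (0 : ℝ) 1, 0 ≤ backwardFunctional T t (K * t ^ 2) q := by
  obtain ⟨K, hK₀, hK⟩ := exists_abs_firstOrderRemainder_le_sum T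
  refine ⟨K, hK₀, fun q hdeg hq t ht => ?_⟩
  have remainder_le :=
    (le_abs_self _).trans (hK q hdeg (-t) ⟨by linarith [ht.2], by linarith [ht.1]⟩)
  simp only [firstOrderRemainder_apply, neg_sq, abs_of_nonneg (hq _)] at remainder_le
  rw [backwardFunctional_apply]
  linarith [hq (-t)]

lemma backwardFunctional_mul_nonneg {T : Finset ℝ} {t c : ℝ} {σ g : ℝ[X]} (hc : 0 ≤ c)
    (hσ : ∀ s, 0 ≤ σ.eval s) (hσ_back : 0 ≤ backwardFunctional T (2 * t) c σ)
    (hg₀ : 0 ≤ g.coeff 0) (hg₁ : t * g.coeff 1 ≤ g.coeff 0 / 2)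
    (hgT : ∀ x ∈ T, g.coeff 0 / 2 ≤ g.eval x) : 0 ≤ backwardFunctional T t c (σ * g) := by
  have hσ₀ : 0 ≤ σ.coeff 0 := Polynomial.coeff_zero_eq_eval_zero σ ▸ hσ 0
  have sum_le : g.coeff 0 / 2 * ∑ x ∈ T, σ.eval x ≤ ∑ x ∈ T, (σ * g).eval x := by
    rw [Finset.mul_sum]
    refine Finset.sum_le_sum fun x hx => ?_
    rw [Polynomial.eval_mul, mul_comm]
    exact mul_le_mul_of_nonneg_left (hgT x hx) (hσ x)
  calc 0 ≤ σ.coeff 0 * (g.coeff 0 / 2 - t * g.coeff 1)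
        + g.coeff 0 / 2 * backwardFunctional T (2 * t) c σ
        + c * (∑ x ∈ T, (σ * g).eval x - g.coeff 0 / 2 * ∑ x ∈ T, σ.eval x) :=
        add_nonneg (add_nonneg (mul_nonneg hσ₀ (sub_nonneg.2 hg₁))
          (mul_nonneg (div_nonneg hg₀ zero_le_two) hσ_back)) (mul_nonneg hc (sub_nonneg.2 sum_le))
    _ = backwardFunctional T t c (σ * g) := by
        rw [backwardFunctional_apply, backwardFunctional_apply, Polynomial.mul_coeff_zero,
          Polynomial.mul_coeff_one]
        ring

theorem exists_linearMap_mul_nonneg {ι : Type*} [Finite ι] (g : ι → ℝ[X]) (d : ℕ)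
    (hg : ∀ i, ∀ᶠ s in 𝓝[>] 0, 0 ≤ (g i).eval s)
    (hg₁ : ∀ i, (g i).coeff 0 = 0 → (g i).coeff 1 = 0) :
    ∃ M : ℝ[X] →ₗ[ℝ] ℝ, 0 < M 1 ∧ M Polynomial.X < 0 ∧
      ∀ σ : ℝ[X], σ.natDegree ≤ d → (∀ s, 0 ≤ σ.eval s) → ∀ i, 0 ≤ M (σ * g i) := by
  obtain ⟨T, hcard, hT⟩ := exists_finset_card_eq_of_eventually
    (eventually_all.2 fun i => eventually_half_coeff_zero_le_eval (hg i)) (d + 1)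
  obtain ⟨K, hK₀, hK⟩ := exists_backwardFunctional_nonneg T
  have hg₀ i : 0 ≤ (g i).coeff 0 := coeff_zero_nonneg_of_eventually (hg i)
  obtain ⟨t, ht_pos, ht_half, ht_sum, ht⟩ : ∃ t : ℝ, 0 < t ∧ t * 2 < 1 ∧
      t * (4 * K * ∑ x ∈ T, x) < 1 ∧ ∀ i, t * (g i).coeff 1 ≤ (g i).coeff 0 / 2 :=
    (eventually_mem_nhdsWithin.and ((eventually_mul_lt _ one_pos).and
      ((eventually_mul_lt _ one_pos).and (eventually_all.2 fun i =>
        eventually_mul_coeff_one_le_half_coeff_zero (hg₀ i) (hg₁ i))))).exists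
  have hc : 0 ≤ K * (2 * t) ^ 2 := by positivity
  refine ⟨backwardFunctional T t (K * (2 * t) ^ 2), ?_, ?_, fun σ hdeg hσ i => ?_⟩
  · have M_one : backwardFunctional T t (K * (2 * t) ^ 2) 1 = 1 + K * (2 * t) ^ 2 * T.card := by
      simp [backwardFunctional_apply, Polynomial.coeff_one]
    rw [M_one]
    positivity
  · have M_X : backwardFunctional T t (K * (2 * t) ^ 2) Polynomial.X =
        -(t * (1 - t * (4 * K * ∑ x ∈ T, x))) := by
      simp only [backwardFunctional_apply, Polynomial.coeff_X_zero, Polynomial.coeff_X_one,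
        Polynomial.eval_X]
      ring
    rw [M_X]
    exact neg_lt_zero.2 (mul_pos ht_pos (sub_pos.2 ht_sum))
  · have hdeg' : σ.degree < T.card :=
      Polynomial.degree_le_natDegree.trans_lt (by exact_mod_cast (by omega : σ.natDegree < T.card))
    exact backwardFunctional_mul_nonneg hc hσ
      (hK σ hdeg' hσ (2 * t) ⟨by positivity, by linarith⟩) (hg₀ i) (ht i) fun x hx => hT x hx i

end BackwardFunctional

/-! ### Supporting affine functions and faces -/

section Support

lemma exists_sub_smul_mem_of_mem_intrinsicInterior {E : Type*} [NormedAddCommGroup E]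
    [NormedSpace ℝ E] {F : Set E} {x₀ x : E} (hx₀ : x₀ ∈ intrinsicInterior ℝ F)
    (hx : x ∈ affineSpan ℝ F) : ∃ t : ℝ, 0 < t ∧ x₀ - t • (x - x₀) ∈ F := by
  obtain ⟨y₀, hy₀, rfl⟩ := mem_intrinsicInterior.1 hx₀
  have : Nonempty (affineSpan ℝ F) := ⟨y₀⟩
  let line : ℝ →ᵃ[ℝ] affineSpan ℝ F := AffineMap.lineMap y₀ ⟨x, hx⟩
  have hlim : Tendsto (fun t : ℝ => line (-t)) (𝓝 0) (𝓝 y₀) := by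
    have hcont : Continuous fun t : ℝ => line (-t) :=
      AffineMap.lineMap_continuous.comp continuous_neg
    simpa [line] using hcont.tendsto 0
  obtain ⟨t, ht, ht_pos⟩ := (((hlim.mono_left nhdsWithin_le_nhds).eventually
    (mem_interior_iff_mem_nhds.1 hy₀)).and (self_mem_nhdsWithin (s := Set.Ioi (0 : ℝ)))).exists
  refine ⟨t, ht_pos, ?_⟩
  have line_eq : (line (-t) : E) = y₀ - t • (x - y₀) := by
    simp [line, AffineMap.lineMap_apply, sub_eq_neg_add]
  exact line_eq ▸ ht

lemma eq_zero_of_mem_intrinsicInterior {E : Type*} [NormedAddCommGroup E] [NormedSpace ℝ E]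
    {F : Set E} {x₀ x : E} {u : E →ᵃ[ℝ] ℝ} (hx₀ : x₀ ∈ intrinsicInterior ℝ F)
    (hu : ∀ y ∈ F, 0 ≤ u y) (hu₀ : u x₀ = 0) (hx : x ∈ F) : u x = 0 := by
  obtain ⟨t, ht, hmem⟩ :=
    exists_sub_smul_mem_of_mem_intrinsicInterior hx₀ (subset_affineSpan ℝ F hx)
  have u_eq : u (x₀ - t • (x - x₀)) = -(t * u x) := by
    rw [sub_eq_neg_add, ← vadd_eq_add, u.map_vadd, map_neg, map_smul, ← vsub_eq_sub x,
      u.linearMap_vsub]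
    simp [hu₀]
  have := u_eq ▸ hu _ hmem
  nlinarith [hu x hx]

variable {E : Type*} [AddCommGroup E] [Module ℝ E]

/-- The affine functions that are nonnegative on `S` and vanish at `x₀`; for `x₀ ∈ S` the
nonzero ones define the supporting hyperplanes of `S` at `x₀`. Of the cone structure only the
closure under addition is recorded. -/
def supportCone (S : Set E) (x₀ : E) : AddSubmonoid (E →ᵃ[ℝ] ℝ) where
  carrier := {u | (∀ x ∈ S, 0 ≤ u x) ∧ u x₀ = 0}
  zero_mem' := by simp
  add_mem' hu hw :=
    ⟨fun x hx => add_nonneg (hu.1 x hx) (hw.1 x hx), by simp [hu.2, hw.2]⟩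

lemma mem_supportCone {S : Set E} {x₀ : E} {u : E →ᵃ[ℝ] ℝ} :
    u ∈ supportCone S x₀ ↔ (∀ x ∈ S, 0 ≤ u x) ∧ u x₀ = 0 :=
  Iff.rfl

lemma exists_mem_supportCone_forall_eq_zero [FiniteDimensional ℝ E] (S : Set E) (x₀ : E) :
    ∃ w ∈ supportCone S x₀, ∀ x ∈ S, w x = 0 → ∀ u ∈ supportCone S x₀, u x = 0 := by
  obtain ⟨T, hT, hspan⟩ := (Submodule.fg_span_iff_fg_span_finset_subset _).1
    (IsNoetherian.noetherian (Submodule.span ℝ (supportCone S x₀ : Set (E →ᵃ[ℝ] ℝ))))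
  refine ⟨∑ u ∈ T, u, sum_mem hT, fun x hx hw u hu => ?_⟩
  let evalAt : (E →ᵃ[ℝ] ℝ) →ₗ[ℝ] ℝ := ⟨⟨fun u => u x, fun _ _ => rfl⟩, fun _ _ => rfl⟩
  have evalAt_eq_zero : ∀ u ∈ T, evalAt u = 0 := by
    refine (Finset.sum_eq_zero_iff_of_nonneg fun u hu => (hT hu).1 x hx).1 ?_
    exact (map_sum evalAt (fun u => u) T).symm.trans hw
  have span_le : Submodule.span ℝ (T : Set (E →ᵃ[ℝ] ℝ)) ≤ LinearMap.ker evalAt :=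
    Submodule.span_le.2 evalAt_eq_zero
  exact span_le (hspan ▸ Submodule.subset_span hu)

end Support

section Faces

variable {n : ℕ} {S F : Set (Fin n → ℝ)}

lemma IsFaceOf.mem_of_sub_smul_mem (hF : IsFaceOf S F) {x₀ x : Fin n → ℝ} (hx₀ : x₀ ∈ F)
    (hx : x ∈ S) {t : ℝ} (ht : 0 < t) (hmem : x₀ - t • (x - x₀) ∈ S) : x ∈ F := by
  obtain ⟨-, -, -, hface⟩ := hF
  refine (hface _ hmem x hx (1 / (1 + t)) (by positivity)
    ((div_lt_one (by positivity)).2 (by linarith)) ?_).2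
  convert hx₀ using 1
  ext j
  simp only [Pi.add_apply, Pi.smul_apply, Pi.sub_apply, smul_eq_mul]
  field_simp
  ring

lemma exists_affEval_eq (u : (Fin n → ℝ) →ᵃ[ℝ] ℝ) : ∃ a c, affEval a c = u := by
  refine ⟨fun i => u.linear fun j => if i = j then 1 else 0, u 0, ?_⟩
  funext x
  calc affEval (fun i => u.linear fun j => if i = j then 1 else 0) (u 0) x
      = u 0 + u.linear x := by
        rw [affEval, u.linear.pi_apply_eq_sum_univ x]
        simp only [smul_eq_mul, mul_comm]
    _ = u x := by rw [u.decomp', Pi.sub_apply, add_sub_cancel]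

theorem IsFaceOf.isExposedFaceOf_of_forall_supportCone (hF : IsFaceOf S F)
    (hS : ∀ x₀ ∈ S, ∀ x ∈ S, (∀ u ∈ supportCone S x₀, u x = 0) →
      ∃ t : ℝ, 0 < t ∧ x₀ - t • (x - x₀) ∈ S) :
    IsExposedFaceOf S F := by
  have ⟨hne, hconv, hFS, _⟩ := hF
  obtain ⟨x₀, hx₀⟩ := hne.intrinsicInterior hconv
  have hx₀F := intrinsicInterior_subset hx₀
  obtain ⟨w, hw, hw_zero⟩ := exists_mem_supportCone_forall_eq_zero S x₀
  have zeros_eq : {x | w x = 0} ∩ S = F := by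
    refine Set.Subset.antisymm (fun x ⟨hwx, hx⟩ => ?_) fun x hx => ⟨?_, hFS hx⟩
    · obtain ⟨t, ht, hmem⟩ := hS x₀ (hFS hx₀F) x hx (hw_zero x hx hwx)
      exact hF.mem_of_sub_smul_mem hx₀F hx ht hmem
    · exact eq_zero_of_mem_intrinsicInterior hx₀ (fun y hy => hw.1 y (hFS hy)) hw.2 hx
  obtain ⟨a, c, hac⟩ := exists_affEval_eq w
  rw [← hac] at zeros_eq
  by_cases hac₀ : affEval a c = 0
  · left
    simpa [hac₀] using zeros_eq.symm
  · exact Or.inr ⟨a, c, hac₀, hac ▸ hw.1, zeros_eq ▸ hne, zeros_eq⟩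

end Faces

/-! ### Restriction of polynomials to lines -/

section Line

variable {ι R : Type*} [CommSemiring R]

/-- Restriction of polynomials to the line `s ↦ x + s • v`. -/
noncomputable def restrictLine (x v : ι → R) : MvPolynomial ι R →ₐ[R] R[X] :=
  aeval fun j => Polynomial.C (x j) + Polynomial.C (v j) * Polynomial.X

lemma restrictLine_X (x v : ι → R) (j : ι) :
    restrictLine x v (X j) = Polynomial.C (x j) + Polynomial.C (v j) * Polynomial.X :=
  aeval_X _ _

lemma eval_restrictLine (x v : ι → R) (q : MvPolynomial ι R) (s : R) :
    (restrictLine x v q).eval s = eval (x + s • v) q := by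
  induction q using MvPolynomial.induction_on with
  | C a => simp [restrictLine, Polynomial.algebraMap_eq]
  | add p q hp hq => simp only [map_add, Polynomial.eval_add, hp, hq]
  | mul_X p j hp => simp [hp, restrictLine_X, mul_comm (v j)]

lemma coeff_zero_restrictLine (x v : ι → R) (q : MvPolynomial ι R) :
    (restrictLine x v q).coeff 0 = eval x q := by
  rw [Polynomial.coeff_zero_eq_eval_zero, eval_restrictLine, zero_smul, add_zero]

lemma natDegree_restrictLine_le (x v : ι → R) (q : MvPolynomial ι R) :
    (restrictLine x v q).natDegree ≤ q.totalDegree := by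
  have natDegree_line_le (j : ι) :
      (Polynomial.C (x j) + Polynomial.C (v j) * Polynomial.X).natDegree ≤ 1 := by
    rw [add_comm]
    exact Polynomial.natDegree_linear_le
  rw [← mul_one q.totalDegree]
  exact aeval_natDegree_le q le_rfl _ natDegree_line_le

variable [Fintype ι]

/-- The differential of the polynomial `q` at the point `x`. -/
noncomputable def differentialAt (q : MvPolynomial ι R) (x : ι → R) : (ι → R) →ₗ[R] R :=
  ∑ j, eval x (pderiv j q) • LinearMap.proj j

lemma differentialAt_apply (q : MvPolynomial ι R) (x v : ι → R) :
    differentialAt q x v = ∑ j, eval x (pderiv j q) * v j := by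
  simp [differentialAt, LinearMap.sum_apply]

lemma coeff_one_restrictLine (x v : ι → R) (q : MvPolynomial ι R) :
    (restrictLine x v q).coeff 1 = differentialAt q x v := by
  classical
  rw [differentialAt_apply]
  induction q using MvPolynomial.induction_on with
  | C a => simp [restrictLine, Polynomial.algebraMap_eq]
  | add p q hp hq => simp [hp, hq, Finset.sum_add_distrib, add_mul]
  | mul_X p j hp =>
    have product_rule : ∑ k, eval x (pderiv k (p * X j)) * v k =
        eval x p * v j + (∑ k, eval x (pderiv k p) * v k) * x j := by
      simp [Derivation.leibniz, pderiv_X, Pi.single_apply, apply_ite, mul_add,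
        Finset.sum_add_distrib, Finset.mul_sum, mul_comm, mul_left_comm]
    rw [product_rule, map_mul, Polynomial.mul_coeff_one, hp, coeff_zero_restrictLine,
      restrictLine_X]
    simp

/-- The linear part `y ↦ dq(x)(y - x)` of the Taylor expansion of `q` at `x`, without the constant
term `q(x)`. -/
noncomputable def linearizationAt {R : Type*} [CommRing R] (q : MvPolynomial ι R) (x : ι → R) :
    (ι → R) →ᵃ[R] R :=
  (differentialAt q x).toAffineMap - AffineMap.const R _ (differentialAt q x x)

lemma linearizationAt_apply {R : Type*} [CommRing R] (q : MvPolynomial ι R) (x y : ι → R) :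
    linearizationAt q x y = (restrictLine x (y - x) q).coeff 1 := by
  rw [coeff_one_restrictLine, map_sub]
  rfl

end Line

section LineReal

variable {ι : Type*} {S : Set (ι → ℝ)} {x₀ x : ι → ℝ} {q : MvPolynomial ι ℝ}

lemma eventually_eval_restrictLine_nonneg (hS : StarConvex ℝ x₀ S) (hx : x ∈ S)
    (hq : ∀ y ∈ S, 0 ≤ eval y q) :
    ∀ᶠ s in 𝓝[>] 0, 0 ≤ (restrictLine x₀ (x - x₀) q).eval s := by
  filter_upwards [Ioc_mem_nhdsGT one_pos] with s hs
  rw [eval_restrictLine]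
  exact hq _ (hS.add_smul_sub_mem hx hs.1.le hs.2)

lemma linearizationAt_mem_supportCone [Fintype ι] (hS : StarConvex ℝ x₀ S)
    (hq : ∀ y ∈ S, 0 ≤ eval y q) (hq₀ : eval x₀ q = 0) :
    linearizationAt q x₀ ∈ supportCone S x₀ := by
  refine mem_supportCone.2 ⟨fun x hx => ?_, ?_⟩
  · rw [linearizationAt_apply]
    exact coeff_one_nonneg_of_eventually (by rw [coeff_zero_restrictLine, hq₀])
      (eventually_eval_restrictLine_nonneg hS hx hq)
  · rw [linearizationAt_apply, coeff_one_restrictLine, sub_self, map_zero]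

end LineReal

/-! ### Lasserre relaxations -/

section Lasserre

variable {n m : ℕ} {p : Fin m → MvPolynomial (Fin n) ℝ} {d : ℕ}

lemma IsSOS.eval_nonneg {σ : MvPolynomial (Fin n) ℝ} (hσ : IsSOS σ) (x : Fin n → ℝ) :
    0 ≤ eval x σ := by
  obtain ⟨r, f, rfl⟩ := hσ
  simp only [map_sum, map_pow]
  exact Finset.sum_nonneg fun j _ => sq_nonneg _

lemma convex_lasserre (p : Fin m → MvPolynomial (Fin n) ℝ) (d : ℕ) : Convex ℝ (lasserre p d) := by
  rintro x ⟨L, hL, hL1, hLx⟩ y ⟨L', hL', hL'1, hL'y⟩ a b ha hb hab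
  refine ⟨a • L + b • L', fun q hq => ?_, ?_, fun i => ?_⟩
  · exact add_nonneg (mul_nonneg ha (hL q hq)) (mul_nonneg hb (hL' q hq))
  · simp [hL1, hL'1, hab]
  · simp [hLx, hL'y]

lemma add_smul_mem_lasserre {x v : Fin n → ℝ} {M : ℝ[X] →ₗ[ℝ] ℝ} (hM1 : 0 < M 1)
    (hM : ∀ σ : ℝ[X], σ.natDegree ≤ d → (∀ s, 0 ≤ σ.eval s) →
      ∀ i, 0 ≤ M (σ * restrictLine x v ((Fin.cons 1 p : Fin (m + 1) → _) i))) :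
    x + (M Polynomial.X / M 1) • v ∈ lasserre p d := by
  refine ⟨(M 1)⁻¹ • (M ∘ₗ (restrictLine x v).toLinearMap), ?_, ?_, fun j => ?_⟩
  · rintro _ ⟨σ, hσ, hdeg, rfl⟩
    rw [map_sum]
    refine Finset.sum_nonneg fun i _ => mul_nonneg (inv_nonneg.2 hM1.le) ?_
    set P : Fin (m + 1) → MvPolynomial (Fin n) ℝ := Fin.cons 1 p
    rcases eq_or_ne (σ i * P i) 0 with h0 | h0
    · simp [h0]
    have hσ_deg : (σ i).totalDegree ≤ d :=
      (totalDegree_le_of_dvd_of_isDomain (dvd_mul_right _ _) h0).trans (hdeg i)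
    simpa using hM _ ((natDegree_restrictLine_le x v (σ i)).trans hσ_deg)
      (fun s => eval_restrictLine x v (σ i) s ▸ (hσ i).eval_nonneg _) i
  · simp [hM1.ne']
  · have restrictLine_X_eq : restrictLine x v (X j) = x j • 1 + v j • Polynomial.X := by
      rw [restrictLine_X, Polynomial.smul_eq_C_mul, Polynomial.smul_eq_C_mul, mul_one]
    simp only [LinearMap.smul_apply, LinearMap.comp_apply, AlgHom.toLinearMap_apply,
      restrictLine_X_eq, map_add, map_smul, Pi.add_apply, Pi.smul_apply, smul_eq_mul]
    field_simp

lemma exists_sub_smul_mem_lasserre {x v : Fin n → ℝ}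
    (hp : ∀ i, ∀ᶠ s in 𝓝[>] 0, 0 ≤ (restrictLine x v (p i)).eval s)
    (hp₁ : ∀ i, eval x (p i) = 0 → (restrictLine x v (p i)).coeff 1 = 0) :
    ∃ t : ℝ, 0 < t ∧ x - t • v ∈ lasserre p d := by
  obtain ⟨M, hM1, hMX, hM⟩ := exists_linearMap_mul_nonneg
    (fun i => restrictLine x v ((Fin.cons 1 p : Fin (m + 1) → _) i)) d
    (Fin.cases (by simp) (by simpa using hp))
    (Fin.cases (by simp) (by simpa [coeff_zero_restrictLine] using hp₁))
  refine ⟨-(M Polynomial.X / M 1), neg_pos.2 (div_neg_of_neg_of_pos hMX hM1), ?_⟩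
  rw [neg_smul, sub_neg_eq_add]
  exact add_smul_mem_lasserre hM1 hM

theorem lasserreExact_implies_facesExposed_general {F : Set (Fin n → ℝ)}
    (hexact : lasserre p d = basicClosedSet p) (hF : IsFaceOf (basicClosedSet p) F) :
    IsExposedFaceOf (basicClosedSet p) F := by
  refine hF.isExposedFaceOf_of_forall_supportCone fun x₀ hx₀ x hx hzero => ?_
  have hstar : StarConvex ℝ x₀ (basicClosedSet p) := (hexact ▸ convex_lasserre p d).starConvex hx₀
  have hp i : ∀ y ∈ basicClosedSet p, 0 ≤ eval y (p i) := fun y hy => hy i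
  rw [← hexact]
  refine exists_sub_smul_mem_lasserre
    (fun i => eventually_eval_restrictLine_nonneg hstar hx (hp i)) fun i hi => ?_
  rw [← linearizationAt_apply]
  exact hzero _ (linearizationAt_mem_supportCone hstar (hp i) hi)

end Lasserre

/-- If `S = S(p₁,…,p_m)` is convex with non-empty interior and some
Lasserre relaxation `S(p)_d` (`d ≥ 1`) of `S` is exact, i.e. `S(p)_d = S`, then every face
of `S` is exposed. -/
theorem lasserreExact_implies_facesExposed {n m : ℕ}
    (p : Fin m → MvPolynomial (Fin n) ℝ) (S : Set (Fin n → ℝ))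
    (hS : S = basicClosedSet p) (hconv : Convex ℝ S) (hint : (interior S).Nonempty)
    (hexact : ∃ d : ℕ, 1 ≤ d ∧ lasserre p d = S) :
    ∀ F : Set (Fin n → ℝ), IsFaceOf S F → IsExposedFaceOf S F := by
  subst hS
  obtain ⟨d, -, hd⟩ := hexact
  exact fun F hF => lasserreExact_implies_facesExposed_general hd hF
end

section
/- Let p = (p_1,…,p_m) be real polynomials in n variables such that S = S(p_1,…,p_m) is convex with non-empty interior. Suppose there exists d ≥ 1 such that every affine-linear polynomial ℓ with ℓ ≥ 0 on S is contained in QM(p)_d. Then every face of S is exposed. -/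
open MvPolynomial

/-!
Let `x₀` be a relative interior point of a face `F`, and let `φ` be a relative interior point of the
cone of functionals that attain their minimum over `S` at `x₀`. The claim is that `φ` exposes `F`.
Otherwise some `y ∈ S \ F` satisfies `ψ y = ψ x₀` for every `ψ` in that cone, and `S` does not
extend from `y` beyond `x₀`. For an interior point `u` of `S` there are then boundary points
`x₀ + a • (y - x₀) + b • (u - x₀)` of `S` with `b > 0` converging to `x₀`. Take supporting
functionals of norm one there, written as `∑ i, σ i * q i` with multipliers of bounded degree; by
compactness both the functionals and the multipliers converge, to `ψ` and `τ i`. As `ψ - ψ x₀`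
vanishes on the segment from `x₀` to `y`, so does every `τ i * q i`. Differentiating
`ψ - ψ x₀ = ∑ i, τ i * q i` at `x₀` in the direction `u - x₀` yields an `i` with `τ i > 0` at `x₀`
and `q i` increasing in that direction. This `q i` vanishes on the line through `x₀` and `y`, hence
is positive at the boundary points near `x₀`, where `σ i` is positive too. But the supporting
function vanishes there.
-/

section Convexity

open Filter Topology

variable {E : Type*} [NormedAddCommGroup E] [NormedSpace ℝ E] {S : Set E} {x x₀ u v : E}

lemma exists_sub_smul_mem_of_mem_intrinsicInterior_s1 (hx₀ : x₀ ∈ intrinsicInterior ℝ S)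
    (hx : x ∈ S) : ∃ ε : ℝ, 0 < ε ∧ x₀ - ε • (x - x₀) ∈ S := by
  obtain ⟨z, hz, rfl⟩ := mem_intrinsicInterior.1 hx₀
  let line : ℝ → affineSpan ℝ S := fun t =>
    ⟨AffineMap.lineMap (z : E) x (-t),
      AffineMap.lineMap_mem _ z.2 (subset_affineSpan ℝ S hx)⟩
  have line_continuous : Continuous line := by
    refine Continuous.subtype_mk ?_ _
    simp only [AffineMap.lineMap_apply_module']
    fun_prop
  have line_zero : line 0 = z := Subtype.ext (by simp [line])
  have eventually_mem : ∀ᶠ t in 𝓝 (0 : ℝ), line t ∈ interior ((↑) ⁻¹' S : Set (affineSpan ℝ S)) :=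
    line_continuous.continuousAt.eventually
      (by rw [line_zero]; exact isOpen_interior.mem_nhds hz)
  obtain ⟨ε, hmem, hε⟩ :=
    ((eventually_mem.filter_mono nhdsWithin_le_nhds).and
      (self_mem_nhdsWithin (s := Set.Ioi 0))).exists
  have hline : line ε ∈ ((↑) ⁻¹' S : Set (affineSpan ℝ S)) := interior_subset hmem
  refine ⟨ε, hε, ?_⟩
  convert Set.mem_preimage.1 hline using 1
  simp only [line, AffineMap.lineMap_apply_module']
  module

lemma nonempty_inter_frontier_of_isPreconnected {X : Type*} [TopologicalSpace X] {s t : Set X}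
    (ht : IsPreconnected t) (hts : (t ∩ s).Nonempty) (hts' : (t ∩ sᶜ).Nonempty) :
    (t ∩ frontier s).Nonempty := by
  by_contra! hempty
  obtain ⟨a, hat, has⟩ := hts
  obtain ⟨b, hbt, hbs⟩ := hts'
  have cover : t ⊆ interior s ∪ (closure s)ᶜ := by
    intro c hct
    by_contra hc
    rw [Set.mem_union, Set.mem_compl_iff, not_or, not_not] at hc
    exact Set.eq_empty_iff_forall_notMem.1 hempty c ⟨hct, hc.2, hc.1⟩
  have disjoint : Disjoint (interior s) (closure s)ᶜ :=
    Set.disjoint_compl_right_iff_subset.2 (interior_subset.trans subset_closure)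
  rcases ht.subset_or_subset isOpen_interior isClosed_closure.isOpen_compl disjoint cover with h | h
  · exact hbs (interior_subset (h hbt))
  · exact h hat (subset_closure has)

lemma exists_mem_frontier_of_sub_smul_notMem (hS : Convex ℝ S) (hcl : IsClosed S) (hx₀ : x₀ ∈ S)
    (hu : u ∈ S) {δ : ℝ} (hδ : 0 < δ) (hδ1 : δ ≤ 1) (hv : x₀ - δ • v ∉ S) :
    ∃ ab : ℝ × ℝ, ‖ab‖ ≤ δ ∧ 0 < ab.2 ∧ x₀ + ab.1 • v + ab.2 • (u - x₀) ∈ frontier S := by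
  have hmem : x₀ + δ • (u - x₀) ∈ S := hS.add_smul_sub_mem hx₀ hu ⟨hδ.le, hδ1⟩
  obtain ⟨_, ⟨r, s, hr, hs, hrs, rfl⟩, hfr⟩ := nonempty_inter_frontier_of_isPreconnected
    (convex_segment (x₀ - δ • v) (x₀ + δ • (u - x₀))).isPreconnected
    ⟨_, right_mem_segment ℝ _ _, hmem⟩ ⟨_, left_mem_segment ℝ _ _, hv⟩
  have hs0 : s ≠ 0 := by
    rintro rfl
    obtain rfl : r = 1 := by linarith
    exact hv (by simpa using hcl.frontier_subset hfr)
  refine ⟨(-(r * δ), s * δ), ?_, by positivity, ?_⟩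
  · rw [Prod.norm_mk, norm_neg, Real.norm_of_nonneg (by positivity),
      Real.norm_of_nonneg (by positivity)]
    exact max_le (mul_le_of_le_one_left hδ.le (by linarith))
      (mul_le_of_le_one_left hδ.le (by linarith))
  · convert hfr using 1
    obtain rfl : r = 1 - s := by linarith
    module

lemma frequently_mem_frontier_of_forall_sub_smul_notMem (hS : Convex ℝ S) (hcl : IsClosed S)
    (hx₀ : x₀ ∈ S) (hu : u ∈ S) (hv : ∀ ε : ℝ, 0 < ε → x₀ - ε • v ∉ S) :
    ∃ᶠ ab : ℝ × ℝ in 𝓝 0, 0 < ab.2 ∧ x₀ + ab.1 • v + ab.2 • (u - x₀) ∈ frontier S := by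
  refine Metric.nhds_basis_closedBall.frequently_iff.2 fun ε hε => ?_
  obtain ⟨ab, hab, hpos, hfr⟩ := exists_mem_frontier_of_sub_smul_notMem hS hcl hx₀ hu
    (lt_min hε one_pos) (min_le_right ε 1) (hv _ (lt_min hε one_pos))
  exact ⟨ab, mem_closedBall_zero_iff.2 (hab.trans (min_le_left ε 1)), hpos, hfr⟩

/-- The inner normal cone of `S` at `x`: the functionals whose minimum over `S ∪ {x}` is attained
at `x`. The point `x` need not lie in `S`. -/
def innerNormalCone (S : Set E) (x : E) : Set (StrongDual ℝ E) :=
  {φ | ∀ y ∈ S, φ x ≤ φ y}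

lemma zero_mem_innerNormalCone : 0 ∈ innerNormalCone S x := fun _ _ => le_rfl

lemma convex_innerNormalCone : Convex ℝ (innerNormalCone S x) := by
  intro φ hφ ψ hψ a b ha hb _ y hy
  exact add_le_add (mul_le_mul_of_nonneg_left (hφ y hy) ha)
    (mul_le_mul_of_nonneg_left (hψ y hy) hb)

lemma exists_mem_innerNormalCone_norm_eq_one (hS : Convex ℝ S) (hint : (interior S).Nonempty)
    (hx : x ∉ interior S) : ∃ φ ∈ innerNormalCone S x, ‖φ‖ = 1 := by
  obtain ⟨f, hf0, hf⟩ := geometric_hahn_banach_of_nonempty_interior_point hS hx hint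
  refine ⟨-(‖f‖⁻¹ • f), fun y hy => ?_, by simpa using norm_smul_inv_norm (𝕜 := ℝ) hf0⟩
  exact neg_le_neg (mul_le_mul_of_nonneg_left (hf y hy) (inv_nonneg.2 (norm_nonneg f)))

lemma lt_of_mem_innerNormalCone_of_mem_interior {φ : StrongDual ℝ E}
    (hφ : φ ∈ innerNormalCone S x) (hφ0 : φ ≠ 0) (hu : u ∈ interior S) : φ x < φ u := by
  refine (hφ u (interior_subset hu)).lt_of_ne fun heq => hφ0 ?_
  have hmin : IsLocalMin φ u := by
    filter_upwards [mem_interior_iff_mem_nhds.1 hu] with y hy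
    exact heq ▸ hφ y hy
  exact hmin.hasFDerivAt_eq_zero φ.hasFDerivAt

lemma tendsto_dual_apply {κ : Type*} {l : Filter κ} {φ : κ → StrongDual ℝ E} {ψ : StrongDual ℝ E}
    {z : κ → E} (hφ : Tendsto φ l (𝓝 ψ)) (hz : Tendsto z l (𝓝 x)) :
    Tendsto (fun k => φ k (z k)) l (𝓝 (ψ x)) :=
  (isBoundedBilinearMap_apply.continuous.tendsto (ψ, x)).comp (hφ.prodMk_nhds hz)

lemma exists_tendsto_mem_innerNormalCone [FiniteDimensional ℝ E] {κ : Type*} {𝓤 : Ultrafilter κ}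
    {z : κ → E} (hz : Tendsto z 𝓤 (𝓝 x)) {φ : κ → StrongDual ℝ E}
    (hφ : ∀ k, φ k ∈ innerNormalCone S (z k)) (hnorm : ∀ k, ‖φ k‖ = 1) :
    ∃ ψ ∈ innerNormalCone S x, ψ ≠ 0 ∧ Tendsto φ 𝓤 (𝓝 ψ) := by
  have : ProperSpace (StrongDual ℝ E) := FiniteDimensional.proper ℝ _
  obtain ⟨ψ, hψ1, (hψ : Tendsto φ 𝓤 (𝓝 ψ))⟩ :=
    (isCompact_sphere (0 : StrongDual ℝ E) 1).ultrafilter_le_nhds (𝓤.map φ)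
      (le_principal_iff.2 (Filter.mem_map.2 (univ_mem' fun k => by simp [hnorm k])))
  refine ⟨ψ, fun y hy => ?_, ne_zero_of_mem_unit_sphere ⟨ψ, hψ1⟩, hψ⟩
  exact le_of_tendsto_of_tendsto' (tendsto_dual_apply hψ hz)
    (tendsto_dual_apply hψ tendsto_const_nhds) fun k => hφ k y hy

lemma eq_of_mem_innerNormalCone_of_mem_intrinsicInterior {φ : StrongDual ℝ E}
    (hφ : φ ∈ innerNormalCone S x₀) (hx₀ : x₀ ∈ intrinsicInterior ℝ S) (hx : x ∈ S) :
    φ x = φ x₀ := by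
  obtain ⟨ε, hε, hmem⟩ := exists_sub_smul_mem_of_mem_intrinsicInterior_s1 hx₀ hx
  have hle := hφ _ hmem
  simp only [map_sub, map_smul, smul_eq_mul] at hle
  nlinarith [hφ x hx]

lemma exists_mem_innerNormalCone_forall_eq [FiniteDimensional ℝ E] (S : Set E) (x : E) :
    ∃ φ ∈ innerNormalCone S x, ∀ y ∈ S, φ y = φ x → ∀ ψ ∈ innerNormalCone S x, ψ y = ψ x := by
  obtain ⟨φ, hφ⟩ :=
    Set.Nonempty.intrinsicInterior (convex_innerNormalCone (S := S) (x := x))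
      ⟨0, zero_mem_innerNormalCone⟩
  refine ⟨φ, intrinsicInterior_subset hφ, fun y hy hyx ψ hψ => (hψ y hy).antisymm' ?_⟩
  obtain ⟨ε, hε, hmem⟩ := exists_sub_smul_mem_of_mem_intrinsicInterior_s1 hφ hψ
  have hle := hmem y hy
  simp only [sub_apply, smul_apply, smul_eq_mul] at hle
  nlinarith

end Convexity

section Calculus

open Filter Topology

variable {E : Type*} [NormedAddCommGroup E] [NormedSpace ℝ E] {x : E}

lemma eventually_pos_of_hasStrictFDerivAt {f : E → ℝ} {f' : StrongDual ℝ E} {v w : E}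
    (hf : HasStrictFDerivAt f f' x) (hw : 0 < f' w) (hv : ∀ᶠ t : ℝ in 𝓝 0, f (x + t • v) = 0) :
    ∀ᶠ ab : ℝ × ℝ in 𝓝 0, 0 < ab.2 → 0 < f (x + ab.1 • v + ab.2 • w) := by
  obtain ⟨c, hc, hcw⟩ : ∃ c > 0, c * ‖w‖ < f' w := exists_pos_mul_lt hw ‖w‖ |>.imp (by
    simp [mul_comm])
  have hlim : Tendsto (fun ab : ℝ × ℝ => (x + ab.1 • v + ab.2 • w, x + ab.1 • v)) (𝓝 0)
      (𝓝 (x, x)) := by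
    have : Continuous fun ab : ℝ × ℝ => (x + ab.1 • v + ab.2 • w, x + ab.1 • v) := by fun_prop
    simpa using this.tendsto 0
  filter_upwards [hlim.eventually (hf.isLittleO.def hc), continuous_fst.tendsto 0 |>.eventually hv]
    with ab hbound hzero hb
  have hdist : |f (x + ab.1 • v + ab.2 • w) - ab.2 * f' w| ≤ c * (ab.2 * ‖w‖) := by
    simpa [hzero, norm_smul, abs_of_pos hb] using hbound
  have hsmall : c * (ab.2 * ‖w‖) < ab.2 * f' w := by
    rw [mul_left_comm]
    exact mul_lt_mul_of_pos_left hcw hb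
  linarith [(abs_le.1 hdist).1]

lemma hasFDerivAt_sum_mul_of_nonneg {ι : Type*} [Fintype ι] {g f : ι → E → ℝ}
    {f' : ι → StrongDual ℝ E} (hg : ∀ i, DifferentiableAt ℝ (g i) x)
    (hf : ∀ i, HasFDerivAt (f i) (f' i) x) (hg0 : ∀ i y, 0 ≤ g i y)
    (hgf : ∀ i, g i x * f i x = 0) :
    HasFDerivAt (fun y => ∑ i, g i y * f i y) (∑ i, g i x • f' i) x := by
  refine HasFDerivAt.fun_sum fun i _ => ?_
  have smul_fderiv : f i x • fderiv ℝ (g i) x = 0 := by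
    rcases mul_eq_zero.1 (hgf i) with hgx | hfx
    · have hmin : IsLocalMin (g i) x := Eventually.of_forall fun y => hgx ▸ hg0 i y
      rw [hmin.fderiv_eq_zero, smul_zero]
    · rw [hfx, zero_smul]
  simpa only [smul_fderiv, add_zero] using (hg i).hasFDerivAt.fun_mul (hf i)

end Calculus

section Polynomials

open Filter Topology

lemma exists_tendsto_dual_of_separating {V κ : Type*} [AddCommGroup V] [Module ℝ V]
    [FiniteDimensional ℝ V] {l : Filter κ} {Φ : Set (Module.Dual ℝ V)}
    (hΦ : ∀ z ≠ 0, ∃ φ ∈ Φ, φ z ≠ 0) {f : κ → V}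
    (hf : ∀ φ ∈ Φ, ∃ c, Tendsto (fun k => φ (f k)) l (𝓝 c)) (φ : Module.Dual ℝ V) :
    ∃ c, Tendsto (fun k => φ (f k)) l (𝓝 c) := by
  have hφ : φ ∈ Submodule.span ℝ Φ := Submodule.span_eq_top_of_ne_zero hΦ ▸ Submodule.mem_top
  induction hφ using Submodule.span_induction with
  | mem φ hφ => exact hf φ hφ
  | zero => exact ⟨0, tendsto_const_nhds⟩
  | add φ ψ _ _ hφ hψ =>
    obtain ⟨a, ha⟩ := hφ
    obtain ⟨b, hb⟩ := hψ
    exact ⟨a + b, ha.add hb⟩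
  | smul r φ _ hφ =>
    obtain ⟨a, ha⟩ := hφ
    exact ⟨r * a, ha.const_mul r⟩

lemma isClosed_setOf_forall_eval_nonneg {α ι : Type*} (q : ι → MvPolynomial α ℝ) :
    IsClosed {x : α → ℝ | ∀ i, 0 ≤ eval x (q i)} := by
  rw [Set.ofPred_forall]
  exact isClosed_iInter fun i => isClosed_le continuous_const (MvPolynomial.continuous_eval (q i))

variable {α κ : Type*} [Finite α]

lemma eq_zero_of_eval_eq_zero_of_isOpen {U : Set (α → ℝ)} (hU : IsOpen U) (hne : U.Nonempty)
    {f : MvPolynomial α ℝ} (hf : ∀ x ∈ U, eval x f = 0) : f = 0 := by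
  cases nonempty_fintype α
  obtain ⟨u, hu⟩ := hne
  obtain ⟨ε, hε, hball⟩ := Metric.isOpen_iff.1 hU u hu
  refine MvPolynomial.funext_set (fun i => Metric.ball (u i) ε) (fun i => ?_) fun x hx => ?_
  · rw [Real.ball_eq_Ioo]
    exact Set.Ioo_infinite (by linarith)
  · rw [map_zero]
    exact hf x (hball (by rwa [ball_pi _ hε]))

lemma exists_tendsto_coeff {l : Filter κ} {U : Set (α → ℝ)}
    (hU : ∀ g : MvPolynomial α ℝ, (∀ x ∈ U, eval x g = 0) → g = 0)
    {f : κ → MvPolynomial α ℝ} {d : ℕ} (hdeg : ∀ k, (f k).totalDegree ≤ d)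
    (hf : ∀ x ∈ U, ∃ c, Tendsto (fun k => eval x (f k)) l (𝓝 c)) (s : α →₀ ℕ) :
    ∃ c, Tendsto (fun k => coeff s (f k)) l (𝓝 c) := by
  let V := restrictTotalDegree α ℝ d
  let evalAt (x : α → ℝ) : Module.Dual ℝ V := (aeval x).toLinearMap.comp V.subtype
  have separating : ∀ g ≠ 0, ∃ φ ∈ evalAt '' U, φ g ≠ 0 := by
    intro g hg
    by_contra! hzero
    exact hg (Subtype.ext (hU g fun x hx => hzero _ (Set.mem_image_of_mem evalAt hx)))
  exact exists_tendsto_dual_of_separating separating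
    (f := fun k => ⟨f k, (mem_restrictTotalDegree _ _ _).2 (hdeg k)⟩)
    (Set.forall_mem_image.2 hf) ((lcoeff ℝ s).comp V.subtype)

lemma exists_tendsto_eval {l : Filter κ} {U : Set (α → ℝ)}
    (hU : ∀ g : MvPolynomial α ℝ, (∀ x ∈ U, eval x g = 0) → g = 0)
    {f : κ → MvPolynomial α ℝ} {d : ℕ} (hdeg : ∀ k, (f k).totalDegree ≤ d)
    (hf : ∀ x ∈ U, ∃ c, Tendsto (fun k => eval x (f k)) l (𝓝 c)) :
    ∃ g : MvPolynomial α ℝ, ∀ (z : κ → α → ℝ) (x : α → ℝ), Tendsto z l (𝓝 x) →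
      Tendsto (fun k => eval (z k) (f k)) l (𝓝 (eval x g)) := by
  classical
  cases nonempty_fintype α
  choose c hc using exists_tendsto_coeff hU hdeg hf
  let T : Finset (α →₀ ℕ) := Finset.Iic (Finsupp.equivFunOnFinite.symm fun _ => d)
  have support_subset (k : κ) : (f k).support ⊆ T := fun s hs => Finset.mem_Iic.2 fun i =>
    (monomial_le_degreeOf i hs).trans ((degreeOf_le_totalDegree _ _).trans (hdeg k))
  have eval_eq_sum (k : κ) (x : α → ℝ) :
      eval x (f k) = ∑ s ∈ T, coeff s (f k) * ∏ i, x i ^ s i := by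
    rw [eval_eq']
    refine Finset.sum_subset (support_subset k) fun s _ hs => ?_
    rw [notMem_support_iff.1 hs, zero_mul]
  refine ⟨∑ s ∈ T, monomial s (c s), fun z x hz => ?_⟩
  simp only [eval_eq_sum, map_sum, eval_monomial, Finsupp.prod_pow]
  exact tendsto_finsetSum _ fun s _ => (hc s).mul
    (tendsto_finsetProd _ fun i _ => (tendsto_pi_nhds.1 hz i).pow _)

lemma eventually_eval_add_smul_eq_zero {f g : MvPolynomial α ℝ} {x v : α → ℝ}
    (hfg : ∀ t ∈ Set.Icc (0 : ℝ) 1, eval (x + t • v) f * eval (x + t • v) g = 0)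
    (hf : eval x f ≠ 0) : ∀ᶠ t : ℝ in 𝓝 0, eval (x + t • v) g = 0 := by
  cases nonempty_fintype α
  have analytic (q : MvPolynomial α ℝ) : AnalyticAt ℝ (fun t : ℝ => eval (x + t • v) q) 0 :=
    AnalyticAt.aeval_mvPolynomial (fun i => by simp only [Pi.add_apply, Pi.smul_apply]; fun_prop) q
  have frequently_zero : ∃ᶠ t : ℝ in 𝓝[≠] 0, eval (x + t • v) f * eval (x + t • v) g = 0 := by
    have : ∀ᶠ t : ℝ in 𝓝[>] 0, eval (x + t • v) f * eval (x + t • v) g = 0 := by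
      filter_upwards [Ioc_mem_nhdsGT one_pos] with t ht using hfg t ⟨ht.1.le, ht.2⟩
    exact this.frequently.filter_mono (nhdsWithin_mono 0 fun _ ht => ne_of_gt ht)
  filter_upwards [((analytic f).mul (analytic g)).frequently_zero_iff_eventually_zero.1
      frequently_zero, (analytic f).continuousAt.eventually_ne (by simpa using hf)] with t hfgt hft
  exact (mul_eq_zero.1 hfgt).resolve_left hft

lemma exists_totalDegree_le_one_eval_eq (φ : StrongDual ℝ (α → ℝ)) (r : ℝ) :
    ∃ f : MvPolynomial α ℝ, f.totalDegree ≤ 1 ∧ ∀ y, eval y f = φ y - r := by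
  classical
  cases nonempty_fintype α
  refine ⟨∑ i, C (φ (Pi.single i 1)) * X i - C r, ?_, fun y => ?_⟩
  · refine (totalDegree_sub _ _).trans (max_le (totalDegree_finsetSum_le fun i _ => ?_) (by simp))
    exact (totalDegree_mul _ _).trans (by simp)
  · conv_rhs => rw [pi_eq_sum_univ' y]
    simp [mul_comm]

end Polynomials

section Certificates

open Filter Topology

variable {α ι κ : Type*} [Fintype ι] {q : ι → MvPolynomial α ℝ}

/-- Multipliers `σ i`, nonnegative on the whole space, that express the function `f` as
`∑ i, σ i * q i`. As in a quadratic module, but with nonnegative polynomials in place of sums of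
squares; `f` is a function because it will be an affine functional. -/
structure IsPSDCertificate (q : ι → MvPolynomial α ℝ) (f : (α → ℝ) → ℝ)
    (σ : ι → MvPolynomial α ℝ) : Prop where
  nonneg : ∀ i x, 0 ≤ eval x (σ i)
  eq_sum : ∀ x, f x = ∑ i, eval x (σ i) * eval x (q i)

namespace IsPSDCertificate

variable {f : (α → ℝ) → ℝ} {σ : ι → MvPolynomial α ℝ} {x : α → ℝ}

lemma mul_le (hσ : IsPSDCertificate q f σ) (hx : ∀ i, 0 ≤ eval x (q i)) (i : ι) :
    eval x (σ i) * eval x (q i) ≤ f x := by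
  rw [hσ.eq_sum]
  exact Finset.single_le_sum (f := fun i => eval x (σ i) * eval x (q i))
    (fun j _ => mul_nonneg (hσ.nonneg j x) (hx j)) (Finset.mem_univ i)

lemma mul_eq_zero (hσ : IsPSDCertificate q f σ) (hx : ∀ i, 0 ≤ eval x (q i)) (hfx : f x = 0)
    (i : ι) : eval x (σ i) * eval x (q i) = 0 :=
  (hfx ▸ hσ.mul_le hx i).antisymm (mul_nonneg (hσ.nonneg i x) (hx i))

end IsPSDCertificate

lemma exists_tendsto_of_nonneg_of_le {𝓤 : Ultrafilter κ} {a b : κ → ℝ} {c : ℝ}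
    (ha : ∀ k, 0 ≤ a k) (hab : ∀ k, a k ≤ b k) (hb : Tendsto b 𝓤 (𝓝 c)) :
    ∃ r, Tendsto a 𝓤 (𝓝 r) := by
  have hmem : ∀ᶠ k in (𝓤 : Filter κ), a k ∈ Set.Icc 0 (c + 1) := by
    filter_upwards [hb.eventually_le_const (lt_add_one c)] with k hk
    exact ⟨ha k, (hab k).trans hk⟩
  obtain ⟨r, -, hr⟩ := isCompact_Icc.ultrafilter_le_nhds (𝓤.map a) (le_principal_iff.2 hmem)
  exact ⟨r, hr⟩

lemma eq_zero_of_eval_eq_zero_of_ne_zero [Finite α] {U : Set (α → ℝ)} (hU : IsOpen U)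
    (hne : U.Nonempty) {p g : MvPolynomial α ℝ} (hp : p ≠ 0)
    (hg : ∀ x ∈ U, eval x p ≠ 0 → eval x g = 0) : g = 0 := by
  have hmul : p * g = 0 := eq_zero_of_eval_eq_zero_of_isOpen hU hne fun x hx => by
    rw [map_mul, mul_eq_zero]
    exact or_iff_not_imp_left.2 (hg x hx)
  exact (mul_eq_zero.1 hmul).resolve_left hp

namespace IsPSDCertificate

lemma exists_tendsto [Finite α] {𝓤 : Ultrafilter κ} (hq : ∀ i, q i ≠ 0) {U : Set (α → ℝ)}
    (hU : IsOpen U) (hne : U.Nonempty) (hqU : ∀ x ∈ U, ∀ i, 0 ≤ eval x (q i))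
    {f : κ → (α → ℝ) → ℝ} {g : (α → ℝ) → ℝ} (hf : ∀ x, Tendsto (fun k => f k x) 𝓤 (𝓝 (g x)))
    {σ : κ → ι → MvPolynomial α ℝ} (hσ : ∀ k, IsPSDCertificate q (f k) (σ k))
    {d : ℕ} (hdeg : ∀ k i, (σ k i).totalDegree ≤ d) :
    ∃ τ, IsPSDCertificate q g τ ∧ ∀ i (z : κ → α → ℝ) (x : α → ℝ), Tendsto z 𝓤 (𝓝 x) →
      Tendsto (fun k => eval (z k) (σ k i)) 𝓤 (𝓝 (eval x (τ i))) := by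
  have tendsto_at (i : ι) (x : α → ℝ) (hx : x ∈ {x ∈ U | eval x (q i) ≠ 0}) :
      ∃ c, Tendsto (fun k => eval x (σ k i)) 𝓤 (𝓝 c) := by
    refine exists_tendsto_of_nonneg_of_le (fun k => (hσ k).nonneg i x) (fun k => ?_)
      ((hf x).div_const (eval x (q i)))
    exact (le_div_iff₀ ((hqU x hx.1 i).lt_of_ne' hx.2)).2 ((hσ k).mul_le (hqU x hx.1) i)
  choose τ hτ using fun i => exists_tendsto_eval
    (fun p hp => eq_zero_of_eval_eq_zero_of_ne_zero hU hne (hq i) fun x hxU hx =>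
      hp x (Set.mem_sep hxU hx))
    (fun k => hdeg k i) (tendsto_at i)
  have tendsto_eval (i : ι) (x : α → ℝ) :
      Tendsto (fun k => eval x (σ k i)) 𝓤 (𝓝 (eval x (τ i))) := hτ i _ x tendsto_const_nhds
  refine ⟨τ, ⟨fun i x => ?_, fun x => ?_⟩, hτ⟩
  · exact ge_of_tendsto' (tendsto_eval i x) fun k => (hσ k).nonneg i x
  · refine tendsto_nhds_unique (hf x) ?_
    simp only [(hσ _).eq_sum]
    exact tendsto_finsetSum _ fun i _ => (tendsto_eval i x).mul_const _

variable [Finite α] {φ : StrongDual ℝ (α → ℝ)} {τ : ι → MvPolynomial α ℝ} {x₀ v w : α → ℝ}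

lemma exists_pos_fderiv (hτ : IsPSDCertificate q (fun x => φ x - φ x₀) τ)
    (hq : ∀ i, 0 ≤ eval x₀ (q i)) (hw : 0 < φ w) :
    ∃ i, 0 < eval x₀ (τ i) ∧ 0 < fderiv ℝ (fun x => eval x (q i)) x₀ w := by
  cases nonempty_fintype α
  have differentiableAt (p : MvPolynomial α ℝ) : DifferentiableAt ℝ (fun x => eval x p) x₀ :=
    (AnalyticOnNhd.eval_mvPolynomial p x₀ trivial).differentiableAt
  have hasFDerivAt_sum := hasFDerivAt_sum_mul_of_nonneg (fun i => differentiableAt (τ i))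
    (fun i => (differentiableAt (q i)).hasFDerivAt) hτ.nonneg
    (hτ.mul_eq_zero hq (sub_self (φ x₀)))
  simp only [← hτ.eq_sum] at hasFDerivAt_sum
  have φ_eq := (φ.hasFDerivAt.sub_const (φ x₀)).unique hasFDerivAt_sum
  have sum_pos : ∑ _i : ι, (0 : ℝ) <
      ∑ i, eval x₀ (τ i) * fderiv ℝ (fun x => eval x (q i)) x₀ w := by
    rw [φ_eq] at hw
    simpa using hw
  obtain ⟨i, -, hi⟩ := Finset.exists_lt_of_sum_lt sum_pos
  have hτi : 0 < eval x₀ (τ i) := (hτ.nonneg i x₀).lt_of_ne' (left_ne_zero_of_mul hi.ne')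
  exact ⟨i, hτi, pos_of_mul_pos_right hi hτi.le⟩

lemma exists_eventually_pos (hτ : IsPSDCertificate q (fun x => φ x - φ x₀) τ)
    (hq : ∀ t ∈ Set.Icc (0 : ℝ) 1, ∀ i, 0 ≤ eval (x₀ + t • v) (q i)) (hv : φ v = 0)
    (hw : 0 < φ w) :
    ∃ i, 0 < eval x₀ (τ i) ∧
      ∀ᶠ ab : ℝ × ℝ in 𝓝 0, 0 < ab.2 → 0 < eval (x₀ + ab.1 • v + ab.2 • w) (q i) := by
  cases nonempty_fintype α
  obtain ⟨i, hτi, hqi⟩ :=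
    hτ.exists_pos_fderiv (by simpa using hq 0 ⟨le_rfl, zero_le_one⟩) hw
  have hzero : ∀ᶠ t : ℝ in 𝓝 0, eval (x₀ + t • v) (q i) = 0 :=
    eventually_eval_add_smul_eq_zero
      (fun t ht => hτ.mul_eq_zero (hq t ht) (by simp [hv]) i) hτi.ne'
  exact ⟨i, hτi, eventually_pos_of_hasStrictFDerivAt
    (AnalyticOnNhd.eval_mvPolynomial (q i) x₀ trivial).hasStrictFDerivAt hqi hzero⟩

end IsPSDCertificate

lemma exists_sub_smul_mem_of_forall_innerNormalCone_eq [Fintype α] {S : Set (α → ℝ)}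
    (hS : Convex ℝ S) (hcl : IsClosed S) (hint : (interior S).Nonempty) (hq : ∀ i, q i ≠ 0)
    (hqS : ∀ x ∈ S, ∀ i, 0 ≤ eval x (q i)) {d : ℕ}
    (hcert : ∀ x, ∀ φ ∈ innerNormalCone S x,
      ∃ σ, IsPSDCertificate q (fun y => φ y - φ x) σ ∧ ∀ i, (σ i).totalDegree ≤ d)
    {x₀ y : α → ℝ} (hx₀ : x₀ ∈ S) (hy : y ∈ S) (heq : ∀ φ ∈ innerNormalCone S x₀, φ y = φ x₀) :
    ∃ ε : ℝ, 0 < ε ∧ x₀ - ε • (y - x₀) ∈ S := by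
  by_contra! hleave
  obtain ⟨u, hu⟩ := hint
  obtain ⟨ab, hab, hfr⟩ := exists_seq_forall_of_frequently
    (frequently_mem_frontier_of_forall_sub_smul_notMem hS hcl hx₀ (interior_subset hu) hleave)
  let z (k : ℕ) : α → ℝ := x₀ + (ab k).1 • (y - x₀) + (ab k).2 • (u - x₀)
  have ab_tendsto : Tendsto ab (hyperfilter ℕ) (𝓝 0) := hab.mono_left Nat.hyperfilter_le_atTop
  have z_tendsto : Tendsto z (hyperfilter ℕ) (𝓝 x₀) := by
    have : Continuous fun c : ℝ × ℝ => x₀ + c.1 • (y - x₀) + c.2 • (u - x₀) := by fun_prop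
    simpa [z, Function.comp_def] using (this.tendsto 0).comp ab_tendsto
  choose φ hφ hφ_norm using fun k => exists_mem_innerNormalCone_norm_eq_one hS ⟨u, hu⟩ (hfr k).2.2
  choose σ hσ hdeg using fun k => hcert (z k) (φ k) (hφ k)
  obtain ⟨ψ, hψ, hψ0, φ_tendsto⟩ := exists_tendsto_mem_innerNormalCone z_tendsto hφ hφ_norm
  obtain ⟨τ, hτ, σ_tendsto⟩ := IsPSDCertificate.exists_tendsto hq isOpen_interior ⟨u, hu⟩
    (fun x hx => hqS x (interior_subset hx))
    (fun x => (tendsto_dual_apply φ_tendsto (tendsto_const_nhds (x := x))).sub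
      (tendsto_dual_apply φ_tendsto z_tendsto)) hσ hdeg
  obtain ⟨i, hτi, hqi⟩ := hτ.exists_eventually_pos (v := y - x₀) (w := u - x₀)
    (fun t ht => hqS _ (hS.add_smul_sub_mem hx₀ hy ht)) (by simp [heq ψ hψ])
    (by simpa using lt_of_mem_innerNormalCone_of_mem_interior hψ hψ0 hu)
  obtain ⟨k, hqk, hσk⟩ := ((ab_tendsto.eventually hqi).and
    ((σ_tendsto i z x₀ z_tendsto).eventually_const_lt hτi)).exists
  have product_zero := (hσ k).mul_eq_zero (hqS (z k) (hcl.frontier_subset (hfr k).2))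
    (sub_self (φ k (z k))) i
  exact (mul_pos hσk (hqk (hfr k).1)).ne' product_zero

/-- The truncated module of the `∑ i, σ i * q i` with nonnegative multipliers `σ i` and all products
of total degree at most `d`. It contains the truncated quadratic module of `q`. -/
def psdModule (q : ι → MvPolynomial α ℝ) (d : ℕ) : Set (MvPolynomial α ℝ) :=
  {f | ∃ σ, IsPSDCertificate q (fun x => eval x f) σ ∧ ∀ i, (σ i * q i).totalDegree ≤ d}

-- Discarding the zero `q i` turns the bound on `σ i * q i` into one on `σ i`.
lemma exists_isPSDCertificate_of_mem_psdModule [Fintype {i // q i ≠ 0}] {d : ℕ}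
    {f : MvPolynomial α ℝ} (hf : f ∈ psdModule q d) :
    ∃ σ, IsPSDCertificate (fun i : {i // q i ≠ 0} => q i) (fun x => eval x f) σ ∧
      ∀ i, (σ i).totalDegree ≤ d := by
  obtain ⟨σ, hσ, hdeg⟩ := hf
  refine ⟨fun i => σ i, ⟨fun i => hσ.nonneg i, fun x => ?_⟩, fun i => ?_⟩
  · rw [hσ.eq_sum]
    refine (Fintype.sum_of_injective Subtype.val Subtype.val_injective _ _ (fun i hi => ?_)
      fun _ => rfl).symm
    have hqi : q i = 0 := by simpa using hi
    rw [hqi, map_zero, mul_zero]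
  · rcases eq_or_ne (σ i) 0 with hzero | hne
    · simp [hzero]
    · have := hdeg i
      rw [totalDegree_mul_of_isDomain hne i.2] at this
      exact le_of_add_le_left this

lemma exists_isPSDCertificate_of_mem_innerNormalCone [Fintype α] [Fintype {i // q i ≠ 0}]
    {S : Set (α → ℝ)} {d : ℕ} (h : ∀ l : MvPolynomial α ℝ, l.totalDegree ≤ 1 →
      (∀ x ∈ S, 0 ≤ eval x l) → l ∈ psdModule q d)
    {x : α → ℝ} {φ : StrongDual ℝ (α → ℝ)} (hφ : φ ∈ innerNormalCone S x) :
    ∃ σ, IsPSDCertificate (fun i : {i // q i ≠ 0} => q i) (fun y => φ y - φ x) σ ∧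
      ∀ i, (σ i).totalDegree ≤ d := by
  obtain ⟨l, hl, l_eval⟩ := exists_totalDegree_le_one_eval_eq φ (φ x)
  simpa only [l_eval] using exists_isPSDCertificate_of_mem_psdModule
    (h l hl fun y hy => by rw [l_eval]; exact sub_nonneg.2 (hφ y hy))

end Certificates

section Faces

variable {n : ℕ} {S F : Set (Fin n → ℝ)} {x₀ y : Fin n → ℝ}

lemma IsFaceOf.mem_of_sub_smul_mem_s1 (hF : IsFaceOf S F) (hx₀ : x₀ ∈ F) (hy : y ∈ S) {ε : ℝ}
    (hε : 0 < ε) (hmem : x₀ - ε • (y - x₀) ∈ S) : y ∈ F := by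
  obtain ⟨-, -, -, hface⟩ := hF
  have hcomb : (ε / (1 + ε)) • y + (1 - ε / (1 + ε)) • (x₀ - ε • (y - x₀)) = x₀ := by
    match_scalars <;> field_simp <;> ring
  refine (hface y hy _ hmem (ε / (1 + ε)) (by positivity) ?_ (hcomb.symm ▸ hx₀)).1
  rw [div_lt_one (by positivity)]
  linarith

lemma isExposedFaceOf_of_mem_innerNormalCone {φ : StrongDual ℝ (Fin n → ℝ)}
    (hφ : φ ∈ innerNormalCone S x₀) (hx₀ : x₀ ∈ S) :
    IsExposedFaceOf S {y ∈ S | φ y = φ x₀} := by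
  have affEval_eq (y : Fin n → ℝ) :
      affEval (fun i => φ (Pi.single i 1)) (-φ x₀) y = φ y - φ x₀ := by
    conv_rhs => rw [pi_eq_sum_univ' y]
    simp only [affEval, map_sum, map_smul, smul_eq_mul, mul_comm (φ _)]
    ring
  have inter_eq : {y | affEval (fun i => φ (Pi.single i 1)) (-φ x₀) y = 0} ∩ S =
      {y ∈ S | φ y = φ x₀} := by
    ext y
    simp only [affEval_eq, sub_eq_zero, Set.mem_inter_iff, Set.mem_ofPred_eq, and_comm]
  by_cases hzero : affEval (fun i => φ (Pi.single i 1)) (-φ x₀) = 0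
  · left
    rw [← inter_eq, hzero]
    simp
  · refine .inr ⟨_, _, hzero, fun y hy => ?_, ⟨x₀, ?_, hx₀⟩, inter_eq⟩
    · rw [affEval_eq]
      exact sub_nonneg.2 (hφ y hy)
    · rw [Set.mem_ofPred_eq, affEval_eq, sub_self]

end Faces

section QuadraticModules

variable {n m : ℕ} (p : Fin m → MvPolynomial (Fin n) ℝ)

lemma QM_subset_psdModule (d : ℕ) : QM p d ⊆ psdModule (Fin.cons 1 p) d := by
  rintro f ⟨σ, hσ, hdeg, rfl⟩
  refine ⟨σ, ⟨fun i x => ?_, fun x => by simp only [map_sum, map_mul]⟩, hdeg⟩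
  obtain ⟨r, g, hg⟩ := hσ i
  rw [hg, map_sum]
  exact Finset.sum_nonneg fun j _ => by rw [map_pow]; exact sq_nonneg _

lemma basicClosedSet_eq_cons_one : basicClosedSet p =
    {x | ∀ i, 0 ≤ eval x ((Fin.cons 1 p : Fin (m + 1) → MvPolynomial (Fin n) ℝ) i)} := by
  simp [basicClosedSet, Fin.forall_fin_succ]

end QuadraticModules

theorem linearInQM_implies_facesExposed_general {n : ℕ} {ι : Type*} [Fintype ι]
    (q : ι → MvPolynomial (Fin n) ℝ) (S : Set (Fin n → ℝ))
    (hS : S = {x | ∀ i, 0 ≤ eval x (q i)}) (hconv : Convex ℝ S) (hint : (interior S).Nonempty)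
    (d : ℕ) (h : ∀ l : MvPolynomial (Fin n) ℝ, l.totalDegree ≤ 1 →
      (∀ x ∈ S, 0 ≤ eval x l) → l ∈ psdModule q d) :
    ∀ F : Set (Fin n → ℝ), IsFaceOf S F → IsExposedFaceOf S F := by
  classical
  intro F hF
  have hcl : IsClosed S := hS ▸ isClosed_setOf_forall_eval_nonneg q
  obtain ⟨x₀, hx₀⟩ := hF.1.intrinsicInterior hF.2.1
  have hx₀F : x₀ ∈ F := intrinsicInterior_subset hx₀
  have hx₀S : x₀ ∈ S := hF.2.2.1 hx₀F
  obtain ⟨φ, hφ, hφ_max⟩ := exists_mem_innerNormalCone_forall_eq S x₀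
  suffices F = {y ∈ S | φ y = φ x₀} from this ▸ isExposedFaceOf_of_mem_innerNormalCone hφ hx₀S
  refine Set.Subset.antisymm (fun y hy => ⟨hF.2.2.1 hy, ?_⟩) fun y ⟨hy, hφy⟩ => ?_
  · exact eq_of_mem_innerNormalCone_of_mem_intrinsicInterior
      (fun z hz => hφ z (hF.2.2.1 hz)) hx₀ hy
  · obtain ⟨ε, hε, hmem⟩ := exists_sub_smul_mem_of_forall_innerNormalCone_eq hconv hcl hint
      (fun i : {i // q i ≠ 0} => i.2) (fun x hx i => (hS.subset hx) i)
      (fun _ _ => exists_isPSDCertificate_of_mem_innerNormalCone h) hx₀S hy (hφ_max y hy hφy)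
    exact hF.mem_of_sub_smul_mem_s1 hx₀F hy hε hmem

/-- If `S = S(p₁,…,p_m)` is convex with non-empty interior and there is
`d ≥ 1` such that every affine-linear polynomial `ℓ` with `ℓ ≥ 0` on `S` lies in
`QM(p)_d`, then every face of `S` is exposed. -/
theorem linearInQM_implies_facesExposed {n m : ℕ}
    (p : Fin m → MvPolynomial (Fin n) ℝ) (S : Set (Fin n → ℝ))
    (hS : S = basicClosedSet p) (hconv : Convex ℝ S) (hint : (interior S).Nonempty)
    (h : ∃ d : ℕ, 1 ≤ d ∧ ∀ l : MvPolynomial (Fin n) ℝ, l.totalDegree ≤ 1 →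
      (∀ x ∈ S, 0 ≤ eval x l) → l ∈ QM p d) :
    ∀ F : Set (Fin n → ℝ), IsFaceOf S F → IsExposedFaceOf S F := by
  obtain ⟨d, -, hd⟩ := h
  exact linearInQM_implies_facesExposed_general (Fin.cons 1 p) S
    (hS.trans (basicClosedSet_eq_cons_one p)) hconv hint d
    fun l hl hpos => QM_subset_psdModule p d (hd l hl hpos)
end

section
/- Let p = (p_1,…,p_m) be real polynomials in n variables and assume S = S(p_1,…,p_m) has non-empty interior. For every d ∈ ℕ the following are equivalent: (1) conv(S) ⊆ S(p)_d ⊆ closure(conv(S)); (2) every affine-linear polynomial ℓ of degree ≤ 1 with ℓ ≥ 0 on S is contained in QM(p)_d. -/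
open MvPolynomial

/-!
If an affine `ℓ ∉ QM(p)_d` can be separated from `QM(p)_d` by a functional `L` with `L 1 = 1`, then
`ℓ` is negative at the point `(L t₁, …, L tₙ)` of the relaxation, because `L ℓ = ℓ(L t₁, …, L tₙ)`
for affine `ℓ`; conversely, members of `QM(p)_d` of degree at most one are nonnegative on the
relaxation. So everything reduces to the separation, the closed convex hull of `S` being cut out by
the affine polynomials nonnegative on `S`.

The cone `QM(p)_d` is generated by the values of finitely many quadratic maps `f ↦ f² pᵢ` on
finite-dimensional spaces, since leading forms of squares cannot cancel. As `S` has interior, the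
cone contains no line. Hence for `ℓ ∉ QM(p)_d` the larger cone generated by `QM(p)_d` and `-ℓ`
contains no line either, so `0` is not in the convex hull of `-ℓ` and the images of the unit
spheres. That hull is compact, and a functional strictly positive on it is negative at `ℓ`.
-/

section ConvexCone

variable {E : Type*} [AddCommGroup E] [Module ℝ E]

theorem convexHull_eq_iUnion_image_stdSimplex [FiniteDimensional ℝ E] (s : Set E) :
    convexHull ℝ s = ⋃ k ∈ Finset.range (Module.finrank ℝ E + 2),
      (fun q : (Fin k → ℝ) × (Fin k → E) ↦ ∑ j, q.1 j • q.2 j) ''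
        (stdSimplex ℝ (Fin k) ×ˢ Set.univ.pi fun _ ↦ s) := by
  ext x
  simp only [Set.mem_iUnion]
  constructor
  · intro hx
    obtain ⟨ι, _, z, w, hz, hind, hw, hw1, rfl⟩ := eq_pos_convex_span_of_mem_convexHull hx
    have hcard : Fintype.card ι ≤ Module.finrank ℝ E + 1 :=
      hind.card_le_finrank_succ.trans (Nat.succ_le_succ (Submodule.finrank_le _))
    let e := (Fintype.equivFin ι).symm
    exact ⟨Fintype.card ι, Finset.mem_range.2 (by lia), (w ∘ e, z ∘ e),
      ⟨⟨fun j ↦ (hw _).le, (e.sum_comp w).trans hw1⟩, fun j _ ↦ hz ⟨_, rfl⟩⟩,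
      e.sum_comp fun i ↦ w i • z i⟩
  · rintro ⟨k, -, ⟨w, z⟩, ⟨⟨hw, hw1⟩, hz⟩, rfl⟩
    exact (convex_convexHull ℝ s).sum_mem (fun j _ ↦ hw j) hw1
      fun j _ ↦ subset_convexHull ℝ s (hz j trivial)

theorem isCompact_convexHull [FiniteDimensional ℝ E] [TopologicalSpace E]
    [IsTopologicalAddGroup E] [ContinuousSMul ℝ E] {s : Set E} (hs : IsCompact s) :
    IsCompact (convexHull ℝ s) := by
  rw [convexHull_eq_iUnion_image_stdSimplex]
  refine Finset.isCompact_biUnion _ fun k _ ↦ ?_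
  exact ((isCompact_stdSimplex ℝ (Fin k)).prod (isCompact_univ_pi fun _ ↦ hs)).image (by fun_prop)

variable {K : PointedCone ℝ E}

theorem convex_diff_singleton_zero_of_salient (hK : (K : ConvexCone ℝ E).Salient) :
    Convex ℝ ((K : Set E) \ {0}) := by
  rintro x ⟨hx, hx0⟩ y ⟨hy, hy0⟩ a b ha hb hab
  refine ⟨K.convex hx hy ha hb hab, fun hsum ↦ ?_⟩
  have hax : a • x ∈ K := K.smul_mem ha hx
  have hby : b • y ∈ K := K.smul_mem hb hy
  have hax0 : a • x = 0 := by
    by_contra hne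
    exact hK _ hax hne (by rwa [neg_eq_of_add_eq_zero_right hsum])
  have hby0 : b • y = 0 := by simpa [hax0] using hsum
  have ha0 : a = 0 := (smul_eq_zero.1 hax0).resolve_right hx0
  have hb0 : b = 0 := (smul_eq_zero.1 hby0).resolve_right hy0
  simp [ha0, hb0] at hab

theorem salient_sup_hull_neg_of_notMem (hK : (K : ConvexCone ℝ E).Salient) {v : E} (hv : v ∉ K) :
    ((K ⊔ PointedCone.hull ℝ {-v} : PointedCone ℝ E) : ConvexCone ℝ E).Salient := by
  intro x hx hx0 hnegx
  obtain ⟨y, hy, _, hav, rfl⟩ := Submodule.mem_sup.1 hx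
  obtain ⟨z, hz, _, hbv, hzx⟩ := Submodule.mem_sup.1 hnegx
  obtain ⟨⟨a, ha⟩, rfl⟩ := Submodule.mem_span_singleton.1 hav
  obtain ⟨⟨b, hb⟩, rfl⟩ := Submodule.mem_span_singleton.1 hbv
  simp only [Nonneg.mk_smul] at hx0 hzx
  have hyz : (a + b) • v = y + z := by
    rw [← sub_eq_zero, ← sub_eq_zero.2 hzx.symm]
    module
  have hab : a + b = 0 := by
    by_contra hne
    have hmem : (a + b) • v ∈ K := hyz ▸ K.add_mem hy hz
    exact hv ((K.smul_mem_iff (by positivity)).1 hmem)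
  obtain ⟨rfl, rfl⟩ : a = 0 ∧ b = 0 := ⟨by linarith, by linarith⟩
  simp only [zero_smul, add_zero] at hx0 hzx
  exact hK y hy hx0 (hzx ▸ hz)

variable [FiniteDimensional ℝ E] [TopologicalSpace E] [IsTopologicalAddGroup E]
  [ContinuousSMul ℝ E] [LocallyConvexSpace ℝ E] [T2Space E]

theorem exists_strongDual_pos_on_isCompact {T : Set E} (hT : IsCompact T)
    (hK : (K : ConvexCone ℝ E).Salient) (hTK : T ⊆ (K : Set E) \ {0}) :
    ∃ f : StrongDual ℝ E, ∀ x ∈ T, 0 < f x := by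
  have h0 : (0 : E) ∉ convexHull ℝ T := fun h ↦
    (convexHull_min hTK (convex_diff_singleton_zero_of_salient hK) h).2 rfl
  obtain ⟨f, u, hu, hf⟩ := geometric_hahn_banach_point_closed (convex_convexHull ℝ T)
    (isCompact_convexHull hT).isClosed h0
  rw [map_zero] at hu
  exact ⟨f, fun x hx ↦ hu.trans (hf x (subset_convexHull ℝ T hx))⟩

theorem exists_strongDual_pos_on_isCompact_neg_of_notMem {T : Set E} (hT : IsCompact T)
    (hK : (K : ConvexCone ℝ E).Salient) (hTK : T ⊆ (K : Set E) \ {0}) {v : E} (hv : v ∉ K) :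
    ∃ f : StrongDual ℝ E, (∀ x ∈ T, 0 < f x) ∧ f v < 0 := by
  have hv0 : v ≠ 0 := fun h ↦ hv (h ▸ K.zero_mem)
  have hsub : insert (-v) T ⊆
      ((K ⊔ PointedCone.hull ℝ {-v} : PointedCone ℝ E) : Set E) \ {0} := by
    refine Set.insert_subset ⟨?_, by simpa using hv0⟩ fun x hx ↦ ⟨?_, (hTK hx).2⟩
    · exact Submodule.mem_sup_right (PointedCone.subset_hull (Set.mem_singleton _))
    · exact Submodule.mem_sup_left (hTK hx).1
  obtain ⟨f, hf⟩ := exists_strongDual_pos_on_isCompact (hT.insert (-v))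
    (salient_sup_hull_neg_of_notMem hK hv) hsub
  exact ⟨f, fun x hx ↦ hf x (Set.mem_insert_of_mem _ hx),
    by simpa using hf (-v) (Set.mem_insert _ _)⟩

end ConvexCone

section QuadraticMap

variable {E W : Type*} [AddCommGroup E] [Module ℝ E]

theorem continuous_quadraticMap {𝕜 E W : Type*} [NontriviallyNormedField 𝕜] [CompleteSpace 𝕜]
    [Invertible (2 : 𝕜)] [NormedAddCommGroup E] [NormedSpace 𝕜 E] [NormedAddCommGroup W]
    [NormedSpace 𝕜 W] [FiniteDimensional 𝕜 W] (Q : QuadraticMap 𝕜 W E) : Continuous Q := by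
  let B := (QuadraticMap.associated Q).toContinuousBilinearMap
  have hQ : ⇑Q = fun w ↦ B w w :=
    funext fun w ↦ (QuadraticMap.associated_eq_self_apply 𝕜 Q w).symm
  rw [hQ]
  exact B.continuous.clm_apply continuous_id

theorem nonneg_quadraticMap_of_nonneg_on_sphere [NormedAddCommGroup W] [NormedSpace ℝ W]
    (Q : QuadraticMap ℝ W ℝ) (hQ : ∀ w ∈ Metric.sphere (0 : W) 1, 0 ≤ Q w) (w : W) :
    0 ≤ Q w := by
  rcases eq_or_ne w 0 with rfl | hw
  · simp
  · have hunit : ‖w‖⁻¹ • w ∈ Metric.sphere (0 : W) 1 := by simp [norm_smul, hw]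
    have hscale : Q w = (‖w‖ * ‖w‖) * Q (‖w‖⁻¹ • w) := by
      rw [← smul_eq_mul, ← Q.map_smul, smul_inv_smul₀ (norm_ne_zero_iff.2 hw)]
    have := hQ _ hunit
    rw [hscale]; positivity

variable {ι : Type*} [Finite ι] {W : ι → Type*} [∀ i, AddCommGroup (W i)] [∀ i, Module ℝ (W i)]
  [∀ i, FiniteDimensional ℝ (W i)] {K : PointedCone ℝ E}

theorem exists_dual_nonneg_quadraticMap_neg_of_finiteDimensional [FiniteDimensional ℝ E]
    (hK : (K : ConvexCone ℝ E).Salient) (Q : ∀ i, QuadraticMap ℝ (W i) E)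
    (hQ : ∀ i, (Q i).Anisotropic) (hQK : ∀ i w, Q i w ∈ K) {v : E} (hv : v ∉ K) :
    ∃ f : Module.Dual ℝ E, (∀ i w, 0 ≤ f (Q i w)) ∧ f v < 0 := by
  let e := (Module.finBasis ℝ E).equivFun
  let : NormedAddCommGroup E := NormedAddCommGroup.induced E _ e e.injective
  let : NormedSpace ℝ E := NormedSpace.induced ℝ E _ e
  let e' := fun i ↦ (Module.finBasis ℝ (W i)).equivFun
  let : ∀ i, NormedAddCommGroup (W i) := fun i ↦
    NormedAddCommGroup.induced (W i) _ (e' i) (e' i).injective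
  let : ∀ i, NormedSpace ℝ (W i) := fun i ↦ NormedSpace.induced ℝ (W i) _ (e' i)
  have : ∀ i, ProperSpace (W i) := fun i ↦ FiniteDimensional.proper ℝ (W i)
  have hcompact : IsCompact (⋃ i, Q i '' Metric.sphere 0 1) :=
    isCompact_iUnion fun i ↦ (isCompact_sphere 0 1).image (continuous_quadraticMap (Q i))
  have hsub : (⋃ i, Q i '' Metric.sphere 0 1) ⊆ (K : Set E) \ {0} := by
    refine Set.iUnion_subset fun i ↦ Set.image_subset_iff.2 fun w hw ↦ ⟨hQK i w, fun h0 ↦ ?_⟩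
    exact ne_zero_of_mem_unit_sphere ⟨w, hw⟩ (hQ i w h0)
  obtain ⟨f, hf, hfv⟩ := exists_strongDual_pos_on_isCompact_neg_of_notMem hcompact hK hsub hv
  refine ⟨f.toLinearMap, fun i ↦ ?_, hfv⟩
  exact nonneg_quadraticMap_of_nonneg_on_sphere (f.toLinearMap.compQuadraticMap (Q i)) fun w hw ↦
    (hf _ (Set.mem_iUnion_of_mem i (Set.mem_image_of_mem _ hw))).le

theorem finiteDimensional_span_range_quadraticMap {k E W : Type*} [Field k] [Invertible (2 : k)]
    [AddCommGroup E] [Module k E] [AddCommGroup W] [Module k W] [FiniteDimensional k W]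
    (Q : QuadraticMap k W E) : FiniteDimensional k (Submodule.span k (Set.range Q)) := by
  have hfg : (Submodule.map₂ (QuadraticMap.associated Q) ⊤ ⊤).FG :=
    Module.Finite.fg_top.map₂ _ Module.Finite.fg_top
  have := Module.Finite.iff_fg.2 hfg
  refine Submodule.finiteDimensional_of_le
    (S₂ := Submodule.map₂ (QuadraticMap.associated Q) ⊤ ⊤) ?_
  rw [Submodule.span_le]
  rintro _ ⟨w, rfl⟩
  rw [← QuadraticMap.associated_eq_self_apply k Q w]
  exact Submodule.apply_mem_map₂ _ Submodule.mem_top Submodule.mem_top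

theorem exists_dual_nonneg_quadraticMap_neg
    (hK : (K : ConvexCone ℝ E).Salient) (Q : ∀ i, QuadraticMap ℝ (W i) E)
    (hQ : ∀ i, (Q i).Anisotropic) (hQK : ∀ i w, Q i w ∈ K) {v : E} (hv : v ∉ K) :
    ∃ f : Module.Dual ℝ E, (∀ i w, 0 ≤ f (Q i w)) ∧ f v < 0 := by
  let V : Submodule ℝ E := (⨆ i, Submodule.span ℝ (Set.range (Q i))) ⊔ Submodule.span ℝ {v}
  have hQV : ∀ i w, Q i w ∈ V := fun i w ↦ Submodule.mem_sup_left
    (Submodule.mem_iSup_of_mem i (Submodule.subset_span (Set.mem_range_self w)))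
  have hvV : v ∈ V := Submodule.mem_sup_right (Submodule.mem_span_singleton_self v)
  have := fun i ↦ finiteDimensional_span_range_quadraticMap (Q i)
  have : FiniteDimensional ℝ V := inferInstance
  obtain ⟨π, hπ⟩ := V.subtype.exists_leftInverse_of_injective V.ker_subtype
  have hπV : ∀ x (hx : x ∈ V), π x = ⟨x, hx⟩ := fun x hx ↦ LinearMap.congr_fun hπ ⟨x, hx⟩
  obtain ⟨f, hf, hfv⟩ := exists_dual_nonneg_quadraticMap_neg_of_finiteDimensional
    (K := K.comap V.subtype) (Q := fun i ↦ π.compQuadraticMap (Q i)) (v := ⟨v, hvV⟩)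
    (fun x hx hx0 ↦ hK x hx (by simpa using hx0))
    (fun i w hw ↦ hQ i w (by simpa [hπV _ (hQV i w)] using hw))
    (fun i w ↦ by simpa [hπV _ (hQV i w)] using hQK i w) hv
  exact ⟨f ∘ₗ π, hf, by simpa [hπV v hvV] using hfv⟩

end QuadraticMap

section TotalDegree

variable {σ R : Type*}

theorem homogeneousComponent_mul_of_totalDegree_le [CommSemiring R] {f g : MvPolynomial σ R}
    {a b : ℕ} (hf : f.totalDegree ≤ a) (hg : g.totalDegree ≤ b) :
    homogeneousComponent (a + b) (f * g) =
      homogeneousComponent a f * homogeneousComponent b g := by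
  classical
  ext s
  have hf0 : ∀ u : σ →₀ ℕ, a < u.degree → coeff u f = 0 := fun u hu ↦
    coeff_eq_zero_of_totalDegree_lt (hf.trans_lt hu)
  have hg0 : ∀ v : σ →₀ ℕ, b < v.degree → coeff v g = 0 := fun v hv ↦
    coeff_eq_zero_of_totalDegree_lt (hg.trans_lt hv)
  have hterm : ∀ u v : σ →₀ ℕ, u + v = s →
      (if s.degree = a + b then coeff u f * coeff v g else 0) =
        (if u.degree = a then coeff u f else 0) * (if v.degree = b then coeff v g else 0) := by
    rintro u v rfl
    rw [map_add]
    grind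
  simp only [coeff_homogeneousComponent, coeff_mul, Finset.ite_sum_zero]
  exact Finset.sum_congr rfl fun uv huv ↦
    hterm uv.1 uv.2 (Finset.HasAntidiagonal.mem_antidiagonal.1 huv)

theorem homogeneousComponent_totalDegree_ne_zero [CommSemiring R] {f : MvPolynomial σ R}
    (hf : f ≠ 0) : homogeneousComponent f.totalDegree f ≠ 0 := by
  obtain ⟨s, hs, hdeg⟩ := Finset.exists_mem_eq_sup f.support (support_nonempty.2 hf)
    fun s ↦ s.sum fun _ e ↦ e
  have hcoeff : coeff s (homogeneousComponent f.totalDegree f) = coeff s f := by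
    rw [coeff_homogeneousComponent, if_pos]
    exact hdeg.symm
  exact fun h ↦ mem_support_iff.1 hs (by rw [← hcoeff, h, coeff_zero])

variable [CommRing R] [LinearOrder R] [IsStrictOrderedRing R] {ι : Type*} {s : Finset ι}
  {f : ι → MvPolynomial σ R}

theorem eq_zero_of_sum_sq_eq_zero (h : ∑ i ∈ s, f i ^ 2 = 0) {j : ι} (hj : j ∈ s) : f j = 0 := by
  refine MvPolynomial.funext fun x ↦ ?_
  have hx : ∑ i ∈ s, eval x (f i) ^ 2 = 0 := by simpa using congrArg (eval x) h
  simpa using (Finset.sum_eq_zero_iff_of_nonneg fun i _ ↦ sq_nonneg _).1 hx j hj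

theorem two_mul_totalDegree_le_totalDegree_sum_sq {j : ι} (hj : j ∈ s) :
    2 * (f j).totalDegree ≤ (∑ i ∈ s, f i ^ 2).totalDegree := by
  obtain ⟨k, hk, hmax⟩ := s.exists_max_image (fun i ↦ (f i).totalDegree) ⟨j, hj⟩
  refine (Nat.mul_le_mul_left 2 (hmax j hj)).trans (not_lt.1 fun hlt ↦ ?_)
  set N := (f k).totalDegree
  have hsum : ∑ i ∈ s, homogeneousComponent N (f i) ^ 2 = 0 := by
    rw [← homogeneousComponent_eq_zero _ _ hlt, map_sum]
    refine Finset.sum_congr rfl fun i hi ↦ ?_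
    rw [sq, sq, two_mul, homogeneousComponent_mul_of_totalDegree_le (hmax i hi) (hmax i hi)]
  have hk0 : f k = 0 := by
    by_contra hne
    exact homogeneousComponent_totalDegree_ne_zero hne (eq_zero_of_sum_sq_eq_zero hsum hk)
  simp [N, hk0] at hlt

end TotalDegree

section Affine

variable {σ : Type*}

theorem apply_eq_eval_of_totalDegree_le_one {R : Type*} [CommSemiring R] {l : MvPolynomial σ R}
    (hl : l.totalDegree ≤ 1) (L : MvPolynomial σ R →ₗ[R] R) (hL : L 1 = 1) :
    L l = eval (fun i ↦ L (X i)) l := by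
  suffices ∀ s ∈ l.support, L (monomial s 1) = eval (fun i ↦ L (X i)) (monomial s 1) by
    have hmon : ∀ s, monomial s (coeff s l) = coeff s l • monomial s (1 : R) := by
      simp [smul_monomial]
    rw [l.as_sum, map_sum, map_sum]
    refine Finset.sum_congr rfl fun s hs ↦ ?_
    rw [hmon, map_smul, this s hs, smul_eval, smul_eq_mul]
  intro s hs
  have hdeg : s.degree ≤ 1 := (le_totalDegree hs).trans hl
  rcases Nat.le_one_iff_eq_zero_or_eq_one.1 hdeg with h0 | h1
  · rw [(Finsupp.degree_eq_zero_iff s).1 h0]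
    simpa using hL
  · obtain ⟨i, rfl⟩ := (Finsupp.sum_eq_one_iff s).1 h1
    change L (X i) = eval _ (X i)
    simp

theorem eval_add_smul_of_totalDegree_le_one {R : Type*} [CommSemiring R] {l : MvPolynomial σ R}
    (hl : l.totalDegree ≤ 1) (x y : σ → R) {a b : R} (hab : a + b = 1) :
    eval (a • x + b • y) l = a * eval x l + b * eval y l := by
  have h := apply_eq_eval_of_totalDegree_le_one hl
    (a • (aeval x).toLinearMap + b • (aeval y).toLinearMap) (by simp [hab])
  simpa [aeval_eq_eval, Pi.add_def] using h.symm

theorem convex_setOf_eval_nonneg_of_totalDegree_le_one {l : MvPolynomial σ ℝ}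
    (hl : l.totalDegree ≤ 1) : Convex ℝ {x | 0 ≤ eval x l} := by
  intro x (hx : 0 ≤ eval x l) y (hy : 0 ≤ eval y l) a b ha hb hab
  rw [Set.mem_ofPred_eq, eval_add_smul_of_totalDegree_le_one hl x y hab]
  positivity

theorem exists_totalDegree_le_one_eval_eq_sub [Finite σ] (f : Module.Dual ℝ (σ → ℝ)) (u : ℝ) :
    ∃ l : MvPolynomial σ ℝ, l.totalDegree ≤ 1 ∧ ∀ x, eval x l = u - f x := by
  classical
  have := Fintype.ofFinite σ
  refine ⟨C u - ∑ i, C (f (Pi.single i 1)) * X i, ?_, fun x ↦ ?_⟩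
  · refine (totalDegree_sub _ _).trans (max_le (by simp) ?_)
    exact totalDegree_finsetSum_le fun i _ ↦ (totalDegree_mul _ _).trans (by simp)
  · have hfx : f x = ∑ i, x i * f (Pi.single i 1) := by
      conv_lhs => rw [pi_eq_sum_univ' x]
      simp
    simp [hfx, mul_comm]

theorem mem_closure_convexHull_iff_eval_nonneg [Finite σ] {s : Set (σ → ℝ)} {x : σ → ℝ} :
    x ∈ closure (convexHull ℝ s) ↔ ∀ l : MvPolynomial σ ℝ, l.totalDegree ≤ 1 →
      (∀ y ∈ s, 0 ≤ eval y l) → 0 ≤ eval x l := by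
  constructor
  · intro hx l hl hs
    have hclosed : IsClosed {y | 0 ≤ eval y l} :=
      isClosed_le continuous_const (MvPolynomial.continuous_eval l)
    exact closure_minimal (convexHull_min hs (convex_setOf_eval_nonneg_of_totalDegree_le_one hl))
      hclosed hx
  · intro h
    by_contra hx
    obtain ⟨f, u, hf, hu⟩ := geometric_hahn_banach_closed_point
      (convex_convexHull ℝ s).closure isClosed_closure hx
    obtain ⟨l, hl, hle⟩ := exists_totalDegree_le_one_eval_eq_sub f.toLinearMap u
    have hlx := h l hl fun y hy ↦ by
      rw [hle]
      exact sub_nonneg.2 (hf y (subset_closure (subset_convexHull ℝ s hy))).le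
    rw [hle] at hlx
    exact hu.not_ge (sub_nonneg.1 hlx)

theorem eq_zero_of_eval_eq_zero_of_interior_nonempty [Finite σ] {s : Set (σ → ℝ)}
    (hs : (interior s).Nonempty) {q : MvPolynomial σ ℝ} (hq : ∀ x ∈ s, eval x q = 0) : q = 0 := by
  have := Fintype.ofFinite σ
  obtain ⟨x, hx⟩ := hs
  obtain ⟨ε, hε, hball⟩ := Metric.isOpen_iff.1 isOpen_interior x hx
  refine funext_set (fun i ↦ Metric.ball (x i) ε) (fun i ↦ ?_) fun y hy ↦ ?_
  · rw [Real.ball_eq_Ioo]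
    exact Set.Ioo_infinite (by linarith)
  · rw [← ball_pi x hε] at hy
    rw [map_zero, hq y (interior_subset (hball hy))]

end Affine

section SquareMultipliers

variable {σ K : Type*} [Field K] {d : ℕ} {g : MvPolynomial σ K}

/-- The multipliers `f` for which `f * f * g` is visibly of degree at most `d`. Only `f = 0` is
admitted when `g = 0`, which makes `f ↦ f * f * g` anisotropic on this space. -/
def squareMultipliers (d : ℕ) (g : MvPolynomial σ K) : Submodule K (MvPolynomial σ K) where
  carrier := {f | f = 0 ∨ g ≠ 0 ∧ 2 * f.totalDegree + g.totalDegree ≤ d}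
  zero_mem' := Or.inl rfl
  add_mem' := by
    rintro f f' (rfl | ⟨hg, hf⟩) (rfl | ⟨hg', hf'⟩)
    · simp
    · simpa using Or.inr ⟨hg', hf'⟩
    · simpa using Or.inr ⟨hg, hf⟩
    · have := totalDegree_add f f'
      exact Or.inr ⟨hg, by lia⟩
  smul_mem' := by
    rintro c f (rfl | ⟨hg, hf⟩)
    · simp
    · have := totalDegree_smul_le c f
      exact Or.inr ⟨hg, by lia⟩

instance [Finite σ] : FiniteDimensional K (squareMultipliers d g) := by
  refine Submodule.finiteDimensional_of_le (S₂ := restrictTotalDegree σ K d) ?_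
  rintro f (rfl | ⟨-, hf⟩)
  · exact zero_mem _
  · exact (mem_restrictTotalDegree σ d f).2 (by lia)

theorem totalDegree_mul_self_mul_le (f : squareMultipliers d g) :
    ((f : MvPolynomial σ K) * f * g).totalDegree ≤ d := by
  obtain ⟨f, rfl | ⟨-, hf⟩⟩ := f
  · simp
  · have := totalDegree_mul (f * f) g
    have := totalDegree_mul f f
    lia

/-- The quadratic map `f ↦ f * f * g` on the multipliers of degree bound `d`. -/
noncomputable def weightedSquare (d : ℕ) (g : MvPolynomial σ K) :
    QuadraticMap K (squareMultipliers d g) (MvPolynomial σ K) :=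
  ((LinearMap.mulRight K g).compQuadraticMap QuadraticMap.sq).comp (Submodule.subtype _)

theorem weightedSquare_apply (f : squareMultipliers d g) :
    weightedSquare d g f = (f : MvPolynomial σ K) * f * g :=
  rfl

theorem weightedSquare_anisotropic (d : ℕ) (g : MvPolynomial σ K) :
    (weightedSquare d g).Anisotropic := by
  rintro ⟨f, rfl | ⟨hg, hf⟩⟩ h0
  · rfl
  · rw [weightedSquare_apply, mul_eq_zero, or_iff_left hg, mul_self_eq_zero] at h0
    exact Subtype.ext h0

theorem mem_squareMultipliers_of_totalDegree_sum_sq_mul_le [LinearOrder K] [IsStrictOrderedRing K]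
    {ι : Type*} {s : Finset ι} {f : ι → MvPolynomial σ K} (hg : g ≠ 0)
    (hd : ((∑ i ∈ s, f i ^ 2) * g).totalDegree ≤ d) {j : ι} (hj : j ∈ s) :
    f j ∈ squareMultipliers d g := by
  by_cases hsum : ∑ i ∈ s, f i ^ 2 = 0
  · exact Or.inl (eq_zero_of_sum_sq_eq_zero hsum hj)
  · rw [totalDegree_mul_of_isDomain hsum hg] at hd
    have := two_mul_totalDegree_le_totalDegree_sum_sq (f := f) hj
    exact Or.inr ⟨hg, by lia⟩

end SquareMultipliers

namespace IsSOS

variable {n : ℕ} {a b : MvPolynomial (Fin n) ℝ}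

theorem zero : IsSOS (0 : MvPolynomial (Fin n) ℝ) := ⟨0, Fin.elim0, by simp⟩

theorem mul_self (f : MvPolynomial (Fin n) ℝ) : IsSOS (f * f) := ⟨1, fun _ ↦ f, by simp [sq]⟩

theorem add (ha : IsSOS a) (hb : IsSOS b) : IsSOS (a + b) := by
  obtain ⟨r, f, rfl⟩ := ha
  obtain ⟨s, g, rfl⟩ := hb
  exact ⟨r + s, Fin.append f g, by simp [Fin.sum_univ_add]⟩

theorem smul (ha : IsSOS a) {c : ℝ} (hc : 0 ≤ c) : IsSOS (c • a) := by
  obtain ⟨r, f, rfl⟩ := ha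
  exact ⟨r, fun j ↦ √c • f j, by simp [smul_pow, Real.sq_sqrt hc, Finset.smul_sum]⟩

theorem eval_nonneg_s2 (ha : IsSOS a) (x : Fin n → ℝ) : 0 ≤ eval x a := by
  obtain ⟨r, f, rfl⟩ := ha
  simp only [map_sum, map_pow]
  positivity

end IsSOS

namespace QM

variable {n m : ℕ} {p : Fin m → MvPolynomial (Fin n) ℝ} {d : ℕ}

/-- The generators `p₀ = 1, p₁, …, p_m` of the quadratic module, as they occur in `QM`. -/
noncomputable abbrev generator (p : Fin m → MvPolynomial (Fin n) ℝ) :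
    Fin (m + 1) → MvPolynomial (Fin n) ℝ :=
  Fin.cons 1 p

/-- `QM p d` as a convex cone. -/
def cone (p : Fin m → MvPolynomial (Fin n) ℝ) (d : ℕ) :
    PointedCone ℝ (MvPolynomial (Fin n) ℝ) where
  carrier := QM p d
  zero_mem' := ⟨fun _ ↦ 0, fun _ ↦ IsSOS.zero, by simp, by simp⟩
  add_mem' := by
    rintro _ _ ⟨s, hs, hsd, rfl⟩ ⟨t, ht, htd, rfl⟩
    refine ⟨fun i ↦ s i + t i, fun i ↦ (hs i).add (ht i), fun i ↦ ?_, ?_⟩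
    · rw [add_mul]
      exact (totalDegree_add _ _).trans (max_le (hsd i) (htd i))
    · simp only [add_mul, Finset.sum_add_distrib]
  smul_mem' := by
    rintro ⟨c, hc⟩ _ ⟨s, hs, hsd, rfl⟩
    refine ⟨fun i ↦ c • s i, fun i ↦ (hs i).smul hc, fun i ↦ ?_, ?_⟩
    · rw [smul_mul_assoc]
      exact (totalDegree_smul_le _ _).trans (hsd i)
    · simp only [smul_mul_assoc, Finset.smul_sum, Nonneg.mk_smul]

theorem mul_self_mul_generator_mem {i : Fin (m + 1)} {f : MvPolynomial (Fin n) ℝ}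
    (hd : (f * f * generator p i).totalDegree ≤ d) : f * f * generator p i ∈ QM p d := by
  refine ⟨Pi.single i (f * f), fun k ↦ ?_, fun k ↦ ?_, ?_⟩
  · obtain rfl | hk := eq_or_ne k i
    · simpa using IsSOS.mul_self f
    · simpa [hk] using IsSOS.zero
  · obtain rfl | hk := eq_or_ne k i
    · simpa using hd
    · simp [hk]
  · simp [Pi.single_apply]

theorem one_mem : (1 : MvPolynomial (Fin n) ℝ) ∈ QM p d := by
  simpa using mul_self_mul_generator_mem (p := p) (d := d) (i := 0) (f := 1) (by simp)

theorem eval_nonneg_s2 {q : MvPolynomial (Fin n) ℝ} (hq : q ∈ QM p d) {x : Fin n → ℝ}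
    (hx : x ∈ basicClosedSet p) : 0 ≤ eval x q := by
  obtain ⟨s, hs, -, rfl⟩ := hq
  have hgen : ∀ i, 0 ≤ eval x (generator p i) := Fin.cases (by simp) fun i ↦ by simpa using hx i
  simp only [map_sum, map_mul]
  exact Finset.sum_nonneg fun i _ ↦ mul_nonneg ((hs i).eval_nonneg_s2 x) (hgen i)

theorem cone_salient (hint : (interior (basicClosedSet p)).Nonempty) :
    (cone p d : ConvexCone ℝ (MvPolynomial (Fin n) ℝ)).Salient := by
  intro q hq hq0 hnq
  refine hq0 (eq_zero_of_eval_eq_zero_of_interior_nonempty hint fun x hx ↦ ?_)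
  have hneg : 0 ≤ eval x (-q) := eval_nonneg_s2 hnq hx
  rw [map_neg] at hneg
  exact le_antisymm (neg_nonneg.1 hneg) (eval_nonneg_s2 hq hx)

theorem nonneg_of_nonneg_weightedSquare {L : Module.Dual ℝ (MvPolynomial (Fin n) ℝ)}
    (hL : ∀ i f, 0 ≤ L (weightedSquare d (generator p i) f)) {q : MvPolynomial (Fin n) ℝ}
    (hq : q ∈ QM p d) : 0 ≤ L q := by
  obtain ⟨s, hs, hsd, rfl⟩ := hq
  rw [map_sum]
  refine Finset.sum_nonneg fun i _ ↦ ?_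
  obtain ⟨r, f, hf⟩ := hs i
  have hd := hsd i
  rw [hf] at hd ⊢
  rcases eq_or_ne (generator p i) 0 with h0 | h0
  · simp [h0]
  rw [Finset.sum_mul, map_sum]
  refine Finset.sum_nonneg fun j hj ↦ ?_
  have hmem := mem_squareMultipliers_of_totalDegree_sum_sq_mul_le h0 hd hj
  simpa only [weightedSquare_apply, sq] using hL i ⟨f j, hmem⟩

theorem exists_dual_nonneg_neg_of_notMem (hint : (interior (basicClosedSet p)).Nonempty)
    {l : MvPolynomial (Fin n) ℝ} (hl : l ∉ QM p d) :
    ∃ L : Module.Dual ℝ (MvPolynomial (Fin n) ℝ), (∀ q ∈ QM p d, 0 ≤ L q) ∧ L l < 0 := by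
  obtain ⟨L, hL, hLl⟩ := exists_dual_nonneg_quadraticMap_neg (cone_salient (d := d) hint)
    (fun i ↦ weightedSquare d (generator p i)) (fun i ↦ weightedSquare_anisotropic d _)
    (fun i f ↦ mul_self_mul_generator_mem (totalDegree_mul_self_mul_le f)) hl
  exact ⟨L, fun q hq ↦ nonneg_of_nonneg_weightedSquare hL hq, hLl⟩

-- A separating functional may vanish at `1`; adding a point evaluation makes it normalizable.
theorem exists_dual_nonneg_apply_one_eq_one_neg_of_notMem
    (hint : (interior (basicClosedSet p)).Nonempty) {l : MvPolynomial (Fin n) ℝ}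
    (hl : l ∉ QM p d) :
    ∃ L : Module.Dual ℝ (MvPolynomial (Fin n) ℝ),
      (∀ q ∈ QM p d, 0 ≤ L q) ∧ L 1 = 1 ∧ L l < 0 := by
  obtain ⟨M, hM, hMl⟩ := exists_dual_nonneg_neg_of_notMem hint hl
  obtain ⟨x, hx⟩ := hint.mono interior_subset
  obtain ⟨t, ht, htl⟩ : ∃ t : ℝ, 0 ≤ t ∧ t * M l + eval x l < 0 := by
    refine ⟨(|eval x l| + 1) / -M l, by have := neg_pos.2 hMl; positivity, ?_⟩
    have : (|eval x l| + 1) / -M l * M l = -(|eval x l| + 1) := by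
      field_simp [hMl.ne]
    linarith [le_abs_self (eval x l)]
  let N : Module.Dual ℝ (MvPolynomial (Fin n) ℝ) := t • M + (aeval x).toLinearMap
  have hN : ∀ q, N q = t * M q + eval x q := fun q ↦ rfl
  have hN1 : 0 < N 1 := by
    have := hM 1 one_mem
    rw [hN, (eval x).map_one]
    positivity
  refine ⟨(N 1)⁻¹ • N, fun q hq ↦ ?_, inv_mul_cancel₀ hN1.ne', ?_⟩
  · have := hM q hq
    have := eval_nonneg_s2 hq hx
    rw [LinearMap.smul_apply, smul_eq_mul, hN q]
    positivity
  · exact mul_neg_of_pos_of_neg (inv_pos.2 hN1) htl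

end QM

namespace lasserre

variable {n m : ℕ} (p : Fin m → MvPolynomial (Fin n) ℝ) (d : ℕ)

theorem basicClosedSet_subset : basicClosedSet p ⊆ lasserre p d := fun x hx ↦
  ⟨(aeval x).toLinearMap, fun _ hq ↦ QM.eval_nonneg_s2 hq hx, by simp, by simp⟩

theorem convex : Convex ℝ (lasserre p d) := by
  rintro x ⟨L, hL, hL1, hLx⟩ y ⟨M, hM, hM1, hMy⟩ a b ha hb hab
  refine ⟨a • L + b • M, fun q hq ↦ ?_, by simp [hL1, hM1, hab], by simp [hLx, hMy]⟩
  exact add_nonneg (mul_nonneg ha (hL q hq)) (mul_nonneg hb (hM q hq))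

theorem convexHull_subset : convexHull ℝ (basicClosedSet p) ⊆ lasserre p d :=
  convexHull_min (basicClosedSet_subset p d) (convex p d)

variable {p d}

theorem eval_nonneg_of_mem_QM {x : Fin n → ℝ} (hx : x ∈ lasserre p d)
    {l : MvPolynomial (Fin n) ℝ} (hl : l.totalDegree ≤ 1) (hlQ : l ∈ QM p d) : 0 ≤ eval x l := by
  obtain ⟨L, hL, hL1, hLx⟩ := hx
  rw [show x = fun i ↦ L (X i) from funext hLx, ← apply_eq_eval_of_totalDegree_le_one hl L hL1]
  exact hL l hlQ

theorem exists_mem_eval_neg_of_notMem_QM (hint : (interior (basicClosedSet p)).Nonempty)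
    {l : MvPolynomial (Fin n) ℝ} (hl : l.totalDegree ≤ 1) (hlQ : l ∉ QM p d) :
    ∃ x ∈ lasserre p d, eval x l < 0 := by
  obtain ⟨L, hL, hL1, hLl⟩ := QM.exists_dual_nonneg_apply_one_eq_one_neg_of_notMem hint hlQ
  exact ⟨fun i ↦ L (X i), ⟨L, hL, hL1, fun _ ↦ rfl⟩,
    apply_eq_eval_of_totalDegree_le_one hl L hL1 ▸ hLl⟩

end lasserre

/-- If `S = S(p₁,…,p_m)` has non-empty interior then, for every `d`, the
following are equivalent: (1) `conv(S) ⊆ S(p)_d ⊆ closure(conv(S))`; (2) every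
affine-linear polynomial `ℓ` with `ℓ ≥ 0` on `S` lies in `QM(p)_d`. -/
theorem lasserre_exact_iff_linear_in_QM {n m : ℕ}
    (p : Fin m → MvPolynomial (Fin n) ℝ)
    (hint : (interior (basicClosedSet p)).Nonempty) (d : ℕ) :
    (convexHull ℝ (basicClosedSet p) ⊆ lasserre p d ∧
        lasserre p d ⊆ closure (convexHull ℝ (basicClosedSet p))) ↔
      (∀ l : MvPolynomial (Fin n) ℝ, l.totalDegree ≤ 1 →
        (∀ x ∈ basicClosedSet p, 0 ≤ eval x l) → l ∈ QM p d) := by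
  constructor
  · rintro ⟨-, hsub⟩ l hl hnonneg
    by_contra hlQ
    obtain ⟨x, hx, hxl⟩ := lasserre.exists_mem_eval_neg_of_notMem_QM hint hl hlQ
    exact hxl.not_ge (mem_closure_convexHull_iff_eval_nonneg.1 (hsub hx) l hl hnonneg)
  · intro h
    refine ⟨lasserre.convexHull_subset p d, fun x hx ↦ ?_⟩
    exact mem_closure_convexHull_iff_eval_nonneg.2 fun l hl hnonneg ↦
      lasserre.eval_nonneg_of_mem_QM hx hl (h l hl hnonneg)
end

section
/- Let A(t) = A_0 + t_1 A_1 + ⋯ + t_n A_n be a linear matrix polynomial of dimension k and S = S(A) its spectrahedron. For every linear subspace U of ℝ^k, the set F_U = {x ∈ S | U ⊆ ker(A(x))} is either empty or a face of S, and conversely every face of S equals F_U for some linear subspace U of ℝ^k. -/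
open MvPolynomial

/-- The linear matrix polynomial `A(x) = A₀ + x₁A₁ + ⋯ + xₙAₙ` evaluated at `x`. -/
def matPoly {n k : ℕ} (A0 : Matrix (Fin k) (Fin k) ℝ) (A : Fin n → Matrix (Fin k) (Fin k) ℝ)
    (x : Fin n → ℝ) : Matrix (Fin k) (Fin k) ℝ :=
  A0 + ∑ i, x i • A i

/-- The spectrahedron `S(A) = {x ∈ ℝⁿ | A(x) ⪰ 0}`. -/
def spectrahedron {n k : ℕ} (A0 : Matrix (Fin k) (Fin k) ℝ)
    (A : Fin n → Matrix (Fin k) (Fin k) ℝ) : Set (Fin n → ℝ) :=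
  {x | (matPoly A0 A x).PosSemidef}

/-!
Two positive semidefinite matrices satisfy `ker P ⊆ ker Q` exactly when `Q ≤ c • P` in the Loewner
order for some real `c`. If `z` lies strictly between two points `x`, `y` of the spectrahedron, then
`A x ≤ c • A z`, so `ker A z ⊆ ker A x`; hence every nonempty `F_U` is a face. Conversely, a face
`F` contains a point `z` with smallest kernel `U`, and `F ⊆ F_U`. If `x ∈ F_U`, then
`A x ≤ c • A z`, so the segment from `x` to `z` can be prolonged a little beyond `z` inside the
spectrahedron. Thus `z ∈ F` lies strictly between `x` and another point of the spectrahedron, which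
forces `x ∈ F`.
-/

open scoped MatrixOrder ComplexOrder

theorem exists_comp_eq_of_ker_le_ker {K V W W' : Type*} [DivisionRing K] [AddCommGroup V]
    [Module K V] [AddCommGroup W] [Module K W] [AddCommGroup W'] [Module K W']
    {f : V →ₗ[K] W} {g : V →ₗ[K] W'} (h : f.ker ≤ g.ker) :
    ∃ m : W →ₗ[K] W', m ∘ₗ f = g := by
  obtain ⟨s, hs⟩ := LinearMap.exists_leftInverse_of_injective (f.ker.liftQ f le_rfl)
    (f.ker.ker_liftQ_eq_bot f le_rfl le_rfl)
  refine ⟨f.ker.liftQ g h ∘ₗ s, LinearMap.ext fun v ↦ ?_⟩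
  have hsv : s (f v) = f.ker.mkQ v := LinearMap.congr_fun hs (f.ker.mkQ v)
  rw [LinearMap.comp_apply, LinearMap.comp_apply, hsv, Submodule.mkQ_apply, Submodule.liftQ_apply]

theorem exists_mul_eq_of_ker_mulVecLin_le {K l m n : Type*} [Field K] [Fintype m] [Fintype n]
    {B : Matrix m n K} {D : Matrix l n K} (h : B.mulVecLin.ker ≤ D.mulVecLin.ker) :
    ∃ M : Matrix l m K, M * B = D := by
  classical
  obtain ⟨f, hf⟩ := exists_comp_eq_of_ker_le_ker h
  refine ⟨f.toMatrix', Matrix.mulVec_injective (funext fun v ↦ ?_)⟩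
  rw [← Matrix.mulVec_mulVec, LinearMap.toMatrix'_mulVec]
  exact LinearMap.congr_fun hf v

section LoewnerOrder

variable {𝕜 ι : Type*} [RCLike 𝕜] {P Q : Matrix ι ι 𝕜}

theorem exists_le_smul_one [Finite ι] [DecidableEq ι] (hQ : Q.IsHermitian) :
    ∃ c : ℝ, 0 < c ∧ Q ≤ c • (1 : Matrix ι ι 𝕜) := by
  have := Fintype.ofFinite ι
  obtain ⟨b, hb⟩ := Q.finite_real_spectrum.bddAbove
  refine ⟨max b 1, by positivity, ?_⟩
  rw [← Algebra.algebraMap_eq_smul_one]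
  exact le_algebraMap_of_spectrum_le (fun t ht ↦ (hb ht).trans (le_max_left b 1)) hQ

variable [Fintype ι]

theorem ker_mulVecLin_le_of_le_smul {c : ℝ} (hQ : 0 ≤ Q) (hQP : Q ≤ c • P) :
    P.mulVecLin.ker ≤ Q.mulVecLin.ker := by
  intro v hv
  rw [LinearMap.mem_ker, Matrix.mulVecLin_apply] at hv ⊢
  have hsub : 0 ≤ star v ⬝ᵥ (c • P - Q).mulVec v := hQP.dotProduct_mulVec_nonneg v
  rw [Matrix.sub_mulVec, Matrix.smul_mulVec, hv, smul_zero, zero_sub, dotProduct_neg,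
    neg_nonneg] at hsub
  have hQ' : Q.PosSemidef := Matrix.nonneg_iff_posSemidef.mp hQ
  exact (hQ'.dotProduct_mulVec_zero_iff v).mp (hsub.antisymm (hQ'.dotProduct_mulVec_nonneg v))

theorem exists_le_smul_of_ker_mulVecLin_le (hP : 0 ≤ P) (hQ : 0 ≤ Q)
    (hker : P.mulVecLin.ker ≤ Q.mulVecLin.ker) : ∃ c : ℝ, 0 < c ∧ Q ≤ c • P := by
  classical
  obtain ⟨B, rfl⟩ := CStarAlgebra.nonneg_iff_eq_star_mul_self.mp hP
  obtain ⟨D, rfl⟩ := CStarAlgebra.nonneg_iff_eq_star_mul_self.mp hQ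
  simp only [Matrix.star_eq_conjTranspose, Matrix.ker_mulVecLin_conjTranspose_mul_self] at hker
  obtain ⟨M, rfl⟩ := exists_mul_eq_of_ker_mulVecLin_le hker
  obtain ⟨c, hc, hMc⟩ := exists_le_smul_one (Matrix.isHermitian_conjTranspose_mul_self M)
  refine ⟨c, hc, ?_⟩
  calc star (M * B) * (M * B) = star B * (star M * M) * B := by simp only [star_mul, mul_assoc]
    _ ≤ star B * (c • 1) * B := star_left_conjugate_le_conjugate hMc B
    _ = c • (star B * B) := by rw [mul_smul_comm, mul_one, smul_mul_assoc]

end LoewnerOrder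

section AffineFamily

variable {E 𝕜 ι : Type*} [AddCommGroup E] [Module ℝ E] [RCLike 𝕜]

/-- The spectrahedron of an affine family `A` of matrices over `ℝ` or `ℂ`, parametrized by a real
vector space: the points where `A` is positive semidefinite, written as nonnegativity in the
Loewner order, which includes that `A x` is Hermitian. -/
def affineSpectrahedron (A : E →ᵃ[ℝ] Matrix ι ι 𝕜) : Set E :=
  {x | 0 ≤ A x}

theorem convex_affineSpectrahedron (A : E →ᵃ[ℝ] Matrix ι ι 𝕜) :
    Convex ℝ (affineSpectrahedron A) := by
  intro x hx y hy a b ha hb hab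
  have hAx : (A x).PosSemidef := Matrix.nonneg_iff_posSemidef.mp hx
  have hAy : (A y).PosSemidef := Matrix.nonneg_iff_posSemidef.mp hy
  change 0 ≤ A (a • x + b • y)
  rw [Convex.combo_affine_apply hab]
  exact ((hAx.smul ha).add (hAy.smul hb)).nonneg

variable [Fintype ι]

/-- The set `F_U` of those points `x` of the spectrahedron of `A` with `U ⊆ ker (A x)`. -/
def kernelFace (A : E →ᵃ[ℝ] Matrix ι ι 𝕜) (U : Submodule 𝕜 (ι → 𝕜)) : Set E :=
  {x ∈ affineSpectrahedron A | U ≤ (A x).mulVecLin.ker}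

variable {A : E →ᵃ[ℝ] Matrix ι ι 𝕜} {x y z : E} {F : Set E}

theorem convex_kernelFace (A : E →ᵃ[ℝ] Matrix ι ι 𝕜) (U : Submodule 𝕜 (ι → 𝕜)) :
    Convex ℝ (kernelFace A U) := by
  rintro x ⟨hx, hUx⟩ y ⟨hy, hUy⟩ a b ha hb hab
  refine ⟨convex_affineSpectrahedron A hx hy ha hb hab, fun v hv ↦ ?_⟩
  have hxv : (A x).mulVec v = 0 := hUx hv
  have hyv : (A y).mulVec v = 0 := hUy hv
  rw [LinearMap.mem_ker, Matrix.mulVecLin_apply, Convex.combo_affine_apply hab, Matrix.add_mulVec,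
    Matrix.smul_mulVec, Matrix.smul_mulVec, hxv, hyv, smul_zero, smul_zero, add_zero]

theorem ker_le_ker_left_of_mem_openSegment (hx : x ∈ affineSpectrahedron A)
    (hy : y ∈ affineSpectrahedron A) (hz : z ∈ openSegment ℝ x y) :
    (A z).mulVecLin.ker ≤ (A x).mulVecLin.ker := by
  obtain ⟨a, b, ha, hb, hab, rfl⟩ := hz
  refine ker_mulVecLin_le_of_le_smul (c := a⁻¹) hx ?_
  calc A x = a⁻¹ • a • A x := (inv_smul_smul₀ ha.ne' _).symm
    _ ≤ a⁻¹ • (a • A x + b • A y) :=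
      smul_le_smul_of_nonneg_left (le_add_of_nonneg_right (smul_nonneg hb.le hy))
        (inv_nonneg.mpr ha.le)
    _ = a⁻¹ • A (a • x + b • y) := by rw [Convex.combo_affine_apply hab]

theorem isExtreme_kernelFace (A : E →ᵃ[ℝ] Matrix ι ι 𝕜) (U : Submodule 𝕜 (ι → 𝕜)) :
    IsExtreme ℝ (affineSpectrahedron A) (kernelFace A U) where
  subset := Set.sep_subset _ _
  left_mem_of_mem_openSegment _ hx _ hy _ hz hzxy :=
    ⟨hx, hz.2.trans (ker_le_ker_left_of_mem_openSegment hx hy hzxy)⟩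

theorem exists_mem_forall_ker_le_ker (hne : F.Nonempty) (hconv : Convex ℝ F)
    (hsub : F ⊆ affineSpectrahedron A) :
    ∃ z ∈ F, ∀ x ∈ F, (A z).mulVecLin.ker ≤ (A x).mulVecLin.ker := by
  obtain ⟨z, hz, hmin⟩ :=
    exists_minimalFor_of_wellFoundedLT (· ∈ F) (fun x ↦ (A x).mulVecLin.ker) hne
  refine ⟨z, hz, fun x hx ↦ ?_⟩
  have hzm : midpoint ℝ z x ∈ openSegment ℝ z x := midpoint_mem_openSegment z x
  have hxm : midpoint ℝ z x ∈ openSegment ℝ x z := openSegment_symm ℝ z x ▸ hzm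
  calc (A z).mulVecLin.ker ≤ (A (midpoint ℝ z x)).mulVecLin.ker :=
        hmin (hconv.openSegment_subset hz hx hzm)
          (ker_le_ker_left_of_mem_openSegment (hsub hz) (hsub hx) hzm)
    _ ≤ (A x).mulVecLin.ker := ker_le_ker_left_of_mem_openSegment (hsub hx) (hsub hz) hxm

theorem exists_mem_openSegment_of_ker_le_ker (hz : z ∈ affineSpectrahedron A)
    (hx : x ∈ affineSpectrahedron A) (hker : (A z).mulVecLin.ker ≤ (A x).mulVecLin.ker) :
    ∃ y ∈ affineSpectrahedron A, z ∈ openSegment ℝ x y := by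
  obtain ⟨c, hc, hxz⟩ := exists_le_smul_of_ker_mulVecLin_le hz hx hker
  refine ⟨(1 + c⁻¹) • z + (-c⁻¹) • x, ?_, (1 + c)⁻¹, c * (1 + c)⁻¹, by positivity, by positivity,
    by field_simp, ?_⟩
  · have hAy : A ((1 + c⁻¹) • z + (-c⁻¹) • x) = c⁻¹ • (A z + (c • A z - A x)) := by
      rw [Convex.combo_affine_apply (by ring), smul_add, smul_sub, inv_smul_smul₀ hc.ne']
      module
    change 0 ≤ A ((1 + c⁻¹) • z + (-c⁻¹) • x)
    rw [hAy]
    exact smul_nonneg (inv_nonneg.mpr hc.le) (add_nonneg hz (sub_nonneg.mpr hxz))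
  · match_scalars <;> field_simp <;> ring

theorem exists_eq_kernelFace (hne : F.Nonempty) (hconv : Convex ℝ F)
    (hF : IsExtreme ℝ (affineSpectrahedron A) F) :
    ∃ U : Submodule 𝕜 (ι → 𝕜), F = kernelFace A U := by
  obtain ⟨z, hz, hmin⟩ := exists_mem_forall_ker_le_ker hne hconv hF.subset
  refine ⟨(A z).mulVecLin.ker, Set.Subset.antisymm (fun x hx ↦ ⟨hF.subset hx, hmin x hx⟩) ?_⟩
  rintro x ⟨hx, hker⟩
  obtain ⟨y, hy, hzxy⟩ := exists_mem_openSegment_of_ker_le_ker (hF.subset hz) hx hker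
  exact hF.left_mem_of_mem_openSegment hx hy hz hzxy

theorem faces_of_spectrahedron_general (A : E →ᵃ[ℝ] Matrix ι ι 𝕜) :
    (∀ U : Submodule 𝕜 (ι → 𝕜),
        Convex ℝ (kernelFace A U) ∧ IsExtreme ℝ (affineSpectrahedron A) (kernelFace A U)) ∧
    (∀ F : Set E, F.Nonempty → Convex ℝ F → IsExtreme ℝ (affineSpectrahedron A) F →
        ∃ U : Submodule 𝕜 (ι → 𝕜), F = kernelFace A U) :=
  ⟨fun U ↦ ⟨convex_kernelFace A U, isExtreme_kernelFace A U⟩,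
    fun _ hne hconv hF ↦ exists_eq_kernelFace hne hconv hF⟩

end AffineFamily

section MatPoly

variable {n k : ℕ}

theorem isFaceOf_iff_isExtreme {S F : Set (Fin n → ℝ)} :
    IsFaceOf S F ↔ F.Nonempty ∧ Convex ℝ F ∧ IsExtreme ℝ S F := by
  refine and_congr_right fun _ ↦ and_congr_right fun _ ↦ ⟨fun ⟨hsub, hface⟩ ↦ ⟨hsub, ?_⟩,
    fun hF ↦ ⟨hF.subset, fun x hx y hy l hl0 hl1 hz ↦ ?_⟩⟩
  · rintro x hx y hy z hz ⟨a, b, ha, hb, hab, rfl⟩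
    obtain rfl : b = 1 - a := by linarith
    exact (hface x hx y hy a ha (by linarith) hz).1
  · have hseg : l • x + (1 - l) • y ∈ openSegment ℝ x y :=
      ⟨l, 1 - l, hl0, by linarith, by ring, rfl⟩
    exact ⟨hF.left_mem_of_mem_openSegment hx hy hz hseg,
      hF.right_mem_of_mem_openSegment hx hy hz hseg⟩

/-- The linear matrix polynomial `matPoly A0 A` as an affine map on `ℝⁿ`. -/
def matPolyAffineMap (A0 : Matrix (Fin k) (Fin k) ℝ) (A : Fin n → Matrix (Fin k) (Fin k) ℝ) :
    (Fin n → ℝ) →ᵃ[ℝ] Matrix (Fin k) (Fin k) ℝ :=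
  AffineMap.const ℝ (Fin n → ℝ) A0 + (Fintype.linearCombination ℝ A).toAffineMap

theorem affineSpectrahedron_matPolyAffineMap (A0 : Matrix (Fin k) (Fin k) ℝ)
    (A : Fin n → Matrix (Fin k) (Fin k) ℝ) :
    affineSpectrahedron (matPolyAffineMap A0 A) = spectrahedron A0 A :=
  Set.ext fun _ ↦ Matrix.nonneg_iff_posSemidef

theorem kernelFace_matPolyAffineMap (A0 : Matrix (Fin k) (Fin k) ℝ)
    (A : Fin n → Matrix (Fin k) (Fin k) ℝ) (U : Submodule ℝ (Fin k → ℝ)) :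
    kernelFace (matPolyAffineMap A0 A) U =
      {x ∈ spectrahedron A0 A | ∀ v ∈ U, (matPoly A0 A x).mulVec v = 0} := by
  rw [kernelFace, affineSpectrahedron_matPolyAffineMap]
  rfl

end MatPoly

/-- **Ramana–Goldman.** For every linear subspace `U` of `ℝᵏ` the set
`F_U = {x ∈ S | U ⊆ ker A(x)}` is empty or a face of the spectrahedron `S = S(A)`, and
every face of `S` is of this form. -/
theorem faces_of_spectrahedron {n k : ℕ}
    (A0 : Matrix (Fin k) (Fin k) ℝ) (A : Fin n → Matrix (Fin k) (Fin k) ℝ)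
    (hA0 : A0.IsSymm) (hA : ∀ i, (A i).IsSymm) (S : Set (Fin n → ℝ))
    (hS : S = spectrahedron A0 A) :
    (∀ U : Submodule ℝ (Fin k → ℝ),
        {x ∈ S | ∀ v ∈ U, (matPoly A0 A x).mulVec v = 0} = ∅ ∨
        IsFaceOf S {x ∈ S | ∀ v ∈ U, (matPoly A0 A x).mulVec v = 0}) ∧
    (∀ F : Set (Fin n → ℝ), IsFaceOf S F →
        ∃ U : Submodule ℝ (Fin k → ℝ),
          F = {x ∈ S | ∀ v ∈ U, (matPoly A0 A x).mulVec v = 0}) := by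
  subst hS
  simp only [← kernelFace_matPolyAffineMap]
  simp only [← affineSpectrahedron_matPolyAffineMap, isFaceOf_iff_isExtreme]
  obtain ⟨hkernel, hface⟩ := faces_of_spectrahedron_general (matPolyAffineMap A0 A)
  exact ⟨fun U ↦ (Set.eq_empty_or_nonempty _).imp_right fun hne ↦ ⟨hne, hkernel U⟩,
    fun F ⟨hne, hconv, hF⟩ ↦ hface F hne hconv hF⟩
end

section
/- Every face of a closed hyperbolicity cone is exposed: if P is a homogeneous real polynomial in m variables that is hyperbolic with respect to e ∈ ℝ^m \ {0}, and C is the closed hyperbolicity cone of P, then every face of C is an exposed face of C. -/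
open MvPolynomial

/-- The univariate polynomial `s ↦ P(x - s·e)`. -/
noncomputable def lineEvalSub {m : ℕ} (P : MvPolynomial (Fin m) ℝ) (x e : Fin m → ℝ) :
    Polynomial ℝ :=
  MvPolynomial.aeval (fun i => Polynomial.C (x i) - Polynomial.C (e i) * Polynomial.X) P

/-- `P` is hyperbolic with respect to `e`: `P(e) > 0` and for every `x ∈ ℝᵐ` all complex
zeros of the univariate polynomial `s ↦ P(x - s·e)` are real. -/
def IsHyperbolicWrt {m : ℕ} (P : MvPolynomial (Fin m) ℝ) (e : Fin m → ℝ) : Prop :=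
  0 < eval e P ∧
    ∀ x : Fin m → ℝ, ∀ z : ℂ, Polynomial.aeval z (lineEvalSub P x e) = 0 → z.im = 0

open Filter Topology Asymptotics
open scoped Polynomial

/-!
The closed cone `K` consists of the points `x` with `P(x + t·e) > 0` for all `t > 0`. By Gårding's
theorem `P` is hyperbolic with respect to every point `a` of the open cone, so for `y ∈ K` the
polynomial `t ↦ P(a + t·y)` is real-rooted with nonnegative coefficients; this bounds `D_y P(a)`
from both sides, and `a - ε·y` stays in the cone as soon as `ε · D_y P(a) < P(a)`.

Given a face `F`, choose `x ∈ F` minimizing the order of vanishing `r` of `t ↦ P(x + t·e)` at `0`.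
For `y ∈ K` the polynomial `t ↦ D_y P(x + t·e)` is nonnegative for `t > 0` and vanishes at `0` to
order at least `r - 1`, so its coefficient of degree `r - 1` is a linear functional of `y` which
is nonnegative on `K`. It exposes `F`: it vanishes on `y ∈ F` because `x + y ∈ F` has multiplicity
at least `r`, and if it vanishes on `y ∈ K` then `D_y P(x + t·e) = O(P(x + t·e))`, so that
`x - ε·y ∈ K` for some `ε > 0` and `y ∈ F`.
-/

/-! ### Univariate polynomials -/

section Univariate

theorem exists_isRoot_norm_sub_lt {K : Type*} [NormedField K] {p : K[X]} (hp : p.Splits)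
    {s : K} {ε : ℝ} (hε : 0 < ε) (h : ‖p.eval s‖ < ‖p.leadingCoeff‖ * ε ^ p.natDegree) :
    ∃ z, p.IsRoot z ∧ ‖s - z‖ < ε := by
  by_contra! hfar
  refine h.not_ge ?_
  have hprod : ‖(p.roots.map (s - ·)).prod‖ = (p.roots.map fun z => ‖s - z‖).prod :=
    (Multiset.prod_hom' p.roots (normHom (α := K)) (s - ·)).symm
  rw [hp.eval_eq_prod_roots, norm_mul, hprod, hp.natDegree_eq_card_roots]
  gcongr
  rw [← Multiset.prod_replicate, ← Multiset.map_const']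
  exact Multiset.prod_map_le_prod_map₀ _ _ (fun _ _ => hε.le)
    fun z hz => hfar z (Polynomial.isRoot_of_mem_roots hz)

theorem splits_of_complex_roots_real {g : ℝ[X]}
    (h : ∀ z : ℂ, Polynomial.aeval z g = 0 → z.im = 0) : g.Splits := by
  rcases eq_or_ne g 0 with rfl | hg
  · exact Polynomial.Splits.zero
  refine Polynomial.Splits.of_splits_map (algebraMap ℝ ℂ) (IsAlgClosed.splits _) fun z hz => ?_
  rw [Polynomial.mem_roots_map hg, ← Polynomial.aeval_def] at hz
  exact ⟨z.re, Complex.ext rfl (h z hz).symm⟩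

theorem exists_isRoot_of_eval_nonpos {g : ℝ[X]} (hlead : 0 < g.leadingCoeff) {t : ℝ}
    (ht : g.eval t ≤ 0) : ∃ s, t ≤ s ∧ g.IsRoot s := by
  have hdeg : 0 < g.degree := by
    by_contra! h
    rw [Polynomial.eq_C_of_degree_le_zero h] at hlead ht
    simp only [Polynomial.leadingCoeff_C, Polynomial.eval_C] at hlead ht
    exact hlead.not_ge ht
  have hlim := g.tendsto_atTop_of_leadingCoeff_nonneg hdeg hlead.le
  obtain ⟨u, hu, htu⟩ := ((hlim.eventually_ge_atTop 0).and (eventually_ge_atTop t)).exists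
  obtain ⟨s, hs, hroot⟩ := intermediate_value_Icc htu g.continuousOn ⟨ht, hu⟩
  exact ⟨s, hs.1, hroot⟩

section OrderedSemiring

variable {R : Type*} [Semiring R] [PartialOrder R] [IsOrderedRing R]

theorem coeff_mul_nonneg {p q : R[X]} (hp : ∀ n, 0 ≤ p.coeff n) (hq : ∀ n, 0 ≤ q.coeff n)
    (n : ℕ) : 0 ≤ (p * q).coeff n := by
  rw [Polynomial.coeff_mul]
  exact Finset.sum_nonneg fun i _ => mul_nonneg (hp _) (hq _)

theorem coeff_mul_pow_le_eval {p : R[X]} (hp : ∀ n, 0 ≤ p.coeff n) {w : R} (hw : 0 ≤ w)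
    (n : ℕ) : p.coeff n * w ^ n ≤ p.eval w := by
  rw [Polynomial.eval_eq_sum_range' (n := max (p.natDegree + 1) (n + 1)) (by simp)]
  exact Finset.single_le_sum (f := fun i => p.coeff i * w ^ i)
    (fun i _ => mul_nonneg (hp i) (pow_nonneg hw i)) (by simp)

end OrderedSemiring

theorem roots_neg_of_eval_pos {R : Type*} [CommRing R] [IsDomain R] [LinearOrder R] {g : R[X]}
    (hpos : ∀ t, 0 ≤ t → 0 < g.eval t) {r : R} (hr : r ∈ g.roots) : r < 0 := by
  by_contra! h
  exact (hpos r h).ne' (Polynomial.isRoot_of_mem_roots hr)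

section OrderedField

variable {R : Type*} [Field R] [LinearOrder R] [IsStrictOrderedRing R] {g : R[X]}

theorem leadingCoeff_pos_of_splits_of_eval_pos (hs : g.Splits)
    (hpos : ∀ t, 0 ≤ t → 0 < g.eval t) : 0 < g.leadingCoeff := by
  have hprod : 0 < (g.roots.map (0 - ·)).prod := by
    refine Multiset.prod_induction (0 < ·) _ (fun _ _ => mul_pos) one_pos fun x hx => ?_
    obtain ⟨r, hr, rfl⟩ := Multiset.mem_map.mp hx
    exact sub_pos.mpr (roots_neg_of_eval_pos hpos hr)
  have h0 := hpos 0 le_rfl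
  rw [hs.eval_eq_prod_roots] at h0
  exact pos_of_mul_pos_left h0 hprod.le

theorem coeff_nonneg_of_splits_of_eval_pos (hs : g.Splits)
    (hpos : ∀ t, 0 ≤ t → 0 < g.eval t) (n : ℕ) : 0 ≤ g.coeff n := by
  rw [hs.eq_prod_roots, Polynomial.coeff_C_mul]
  refine mul_nonneg (leadingCoeff_pos_of_splits_of_eval_pos hs hpos).le ?_
  refine Multiset.prod_induction (fun p : R[X] => ∀ n, 0 ≤ p.coeff n) _
    (fun _ _ => coeff_mul_nonneg) (fun n => ?_) (fun p hp n => ?_) n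
  · rw [Polynomial.coeff_one]
    positivity
  · obtain ⟨r, hr, rfl⟩ := Multiset.mem_map.mp hp
    have := roots_neg_of_eval_pos hpos hr
    rw [Polynomial.coeff_sub, Polynomial.coeff_X, Polynomial.coeff_C]
    split_ifs <;> linarith

theorem root_mul_le_neg_one_of_derivative_le (hs : g.Splits)
    (hpos : ∀ t, 0 ≤ t → 0 < g.eval t) {M : R} (hM : g.derivative.eval 0 ≤ M * g.eval 0)
    {r : R} (hr : r ∈ g.roots) : r * M ≤ -1 := by
  have hneg := fun {z} => roots_neg_of_eval_pos (r := z) hpos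
  have hsum := hs.eval_derivative_div_eval_of_ne_zero (hpos 0 le_rfl).ne'
  have hterm : 1 / (0 - r) ≤ (g.roots.map fun z => 1 / (0 - z)).sum := by
    refine Multiset.single_le_sum (fun x hx => ?_) _ (Multiset.mem_map_of_mem _ hr)
    obtain ⟨z, hz, rfl⟩ := Multiset.mem_map.mp hx
    exact one_div_nonneg.mpr (sub_pos.mpr (hneg hz)).le
  have hle : 1 / (0 - r) ≤ M :=
    hterm.trans (hsum ▸ (div_le_iff₀ (hpos 0 le_rfl)).mpr hM)
  rw [div_le_iff₀ (sub_pos.mpr (hneg hr))] at hle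
  linarith

theorem eval_neg_pos_of_derivative_le (hs : g.Splits)
    (hpos : ∀ t, 0 ≤ t → 0 < g.eval t) {M : R} (hM : g.derivative.eval 0 ≤ M * g.eval 0)
    {w : R} (hw : 0 ≤ w) (hwM : w * M < 1) : 0 < g.eval (-w) := by
  rw [hs.eval_eq_prod_roots]
  refine mul_pos (leadingCoeff_pos_of_splits_of_eval_pos hs hpos) ?_
  refine Multiset.prod_induction (0 < ·) _ (fun _ _ => mul_pos) one_pos fun x hx => ?_
  obtain ⟨r, hr, rfl⟩ := Multiset.mem_map.mp hx
  have hrM := root_mul_le_neg_one_of_derivative_le hs hpos hM hr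
  have hr0 := roots_neg_of_eval_pos hpos hr
  nlinarith

end OrderedField

theorem isTheta_eval_nhds_zero {K : Type*} [NormedField K] {p : K[X]} (hp : p ≠ 0) :
    (fun t => p.eval t) =Θ[𝓝 0] fun t => t ^ p.rootMultiplicity 0 := by
  obtain ⟨q, hq, hq0⟩ := Polynomial.exists_eq_pow_rootMultiplicity_mul_and_not_dvd p hp 0
  rw [Polynomial.dvd_iff_isRoot] at hq0
  have hone : (fun t => q.eval t) =Θ[𝓝 0] fun _ => (1 : K) :=
    ((isEquivalent_const_iff_tendsto hq0).mpr (q.continuous.tendsto 0)).isTheta.trans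
      (isTheta_const_const hq0 one_ne_zero)
  have hmul := (isTheta_refl (fun t : K => t ^ p.rootMultiplicity 0) (𝓝 0)).mul hone
  simp only [mul_one] at hmul
  have heval : (fun t => p.eval t) = fun t => t ^ p.rootMultiplicity 0 * q.eval t := by
    funext t
    conv_lhs => rw [hq]
    simp
  rwa [heval]

theorem isBigO_pow_iff_X_pow_dvd {K : Type*} [NormedField K] {p : K[X]} {k : ℕ}
    {l : Filter K} [l.NeBot] (hl : l ≤ 𝓝[≠] 0) :
    (fun t => p.eval t) =O[l] (fun t => t ^ k) ↔ Polynomial.X ^ k ∣ p := by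
  have hl0 : l ≤ 𝓝 0 := hl.trans nhdsWithin_le_nhds
  constructor
  · intro h
    rcases eq_or_ne p 0 with rfl | hp
    · exact dvd_zero _
    suffices k ≤ p.rootMultiplicity 0 by
      simpa using (pow_dvd_pow _ this).trans (p.pow_rootMultiplicity_dvd 0)
    by_contra! hlt
    have hlittle := h.trans_isLittleO ((isLittleO_pow_pow hlt).mono hl0)
    have hne : ∀ᶠ t in l, t ≠ 0 := hl self_mem_nhdsWithin
    exact isLittleO_irrefl (hne.mono fun t => pow_ne_zero _).frequently
      (((isTheta_eval_nhds_zero hp).2.mono hl0).trans_isLittleO hlittle)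
  · rintro ⟨q, rfl⟩
    have hone : (fun t => q.eval t) =O[l] fun _ => (1 : K) :=
      ((q.continuous.tendsto 0).mono_left hl0).isBigO_one K
    simpa using (isBigO_refl (fun t : K => t ^ k) l).mul hone

theorem X_pow_succ_dvd_iff_coeff_eq_zero {R : Type*} [Semiring R] {p : R[X]} {k : ℕ}
    (hk : Polynomial.X ^ k ∣ p) : Polynomial.X ^ (k + 1) ∣ p ↔ p.coeff k = 0 := by
  rw [Polynomial.X_pow_dvd_iff] at hk ⊢
  exact Nat.forall_lt_succ_right.trans (and_iff_right hk)

theorem coeff_nonneg_of_X_pow_dvd {g : ℝ[X]} {k : ℕ} (hk : Polynomial.X ^ k ∣ g)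
    (hpos : ∀ t, 0 < t → 0 ≤ g.eval t) : 0 ≤ g.coeff k := by
  obtain ⟨q, rfl⟩ := hk
  have hcoeff : (Polynomial.X ^ k * q).coeff k = q.eval 0 := by
    simpa [Polynomial.coeff_zero_eq_eval_zero] using Polynomial.coeff_X_pow_mul q k 0
  rw [hcoeff]
  refine ge_of_tendsto ((q.continuous.tendsto 0).mono_left nhdsWithin_le_nhds)
    (eventually_mem_nhdsWithin.mono fun t (ht : t ∈ Set.Ioi 0) => ?_)
  have := hpos t ht
  rw [Polynomial.eval_mul, Polynomial.eval_pow, Polynomial.eval_X] at this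
  exact nonneg_of_mul_nonneg_right this (pow_pos ht k)

end Univariate

/-! ### Restricting a polynomial to a line -/

section Line

theorem prod_map_toMultiset {ι M : Type*} [CommMonoid M] (s : ι →₀ ℕ) (f : ι → M) :
    (s.toMultiset.map f).prod = ∏ i ∈ s.support, f i ^ s i := by
  rw [Finsupp.toMultiset_map, Finsupp.prod_toMultiset,
    Finsupp.prod_mapDomain_index pow_zero pow_add, Finsupp.prod]

variable {σ R : Type*} [CommSemiring R]

/-- The univariate polynomial `t ↦ P(x + t·v)`, the restriction of `P` to the line through `x`
with direction `v`. -/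
noncomputable def lineRestrict (P : MvPolynomial σ R) (x v : σ → R) : R[X] :=
  aeval (fun i => Polynomial.C (x i) + Polynomial.C (v i) * Polynomial.X) P

theorem eval_lineRestrict (P : MvPolynomial σ R) (x v : σ → R) (t : R) :
    (lineRestrict P x v).eval t = eval (x + t • v) P := by
  rw [lineRestrict]
  induction P using MvPolynomial.induction_on with
  | C c => simp
  | add p q hp hq => simp [hp, hq]
  | mul_X p i hp => simp [hp, mul_comm t]

theorem map_lineRestrict {S : Type*} [CommSemiring S] (f : R →+* S) (P : MvPolynomial σ R)
    (x v : σ → R) :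
    (lineRestrict P x v).map f = lineRestrict (P.map f) (f ∘ x) (f ∘ v) := by
  rw [lineRestrict, lineRestrict]
  induction P using MvPolynomial.induction_on with
  | C c => simp
  | add p q hp hq => simp [hp, hq]
  | mul_X p i hp => simp [hp]

/-- The derivation `P ↦ D_y P = ∑ i, y i • ∂P/∂X i`, linear in the direction `y`. -/
noncomputable def directionalDeriv :
    (σ → R) →ₗ[R] Derivation R (MvPolynomial σ R) (MvPolynomial σ R) :=
  (mkDerivationEquiv R).toLinearMap ∘ₗ (Algebra.linearMap R (MvPolynomial σ R)).compLeft σ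

theorem directionalDeriv_X (y : σ → R) (i : σ) : directionalDeriv y (X i) = C (y i) :=
  mkDerivation_X _ _ _

theorem derivative_lineRestrict (P : MvPolynomial σ R) (x y : σ → R) :
    (lineRestrict P x y).derivative = lineRestrict (directionalDeriv y P) x y := by
  rw [lineRestrict, lineRestrict]
  induction P using MvPolynomial.induction_on with
  | C c => simp
  | add p q hp hq => simp [hp, hq]
  | mul_X p i hp => simp [hp, directionalDeriv_X, Derivation.leibniz]; ring

theorem coeff_zero_lineRestrict (P : MvPolynomial σ R) (x y : σ → R) :
    (lineRestrict P x y).coeff 0 = eval x P := by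
  rw [Polynomial.coeff_zero_eq_eval_zero, eval_lineRestrict, zero_smul, add_zero]

theorem coeff_one_lineRestrict (P : MvPolynomial σ R) (x y : σ → R) :
    (lineRestrict P x y).coeff 1 = eval x (directionalDeriv y P) := by
  simpa [derivative_lineRestrict, coeff_zero_lineRestrict, eq_comm] using
    (lineRestrict P x y).coeff_derivative 0

/-- The restriction `t ↦ (D_y P)(x + t·v)` of the directional derivative of `P` to a line, as a
linear map in the direction `y`. -/
noncomputable def lineRestrictDeriv (P : MvPolynomial σ R) (x v : σ → R) : (σ → R) →ₗ[R] R[X] where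
  toFun y := lineRestrict (directionalDeriv y P) x v
  map_add' y z := by simp [lineRestrict]
  map_smul' c y := by simp [lineRestrict]

theorem eval_lineRestrictDeriv (P : MvPolynomial σ R) (x v y : σ → R) (t : R) :
    (lineRestrictDeriv P x v y).eval t = eval (x + t • v) (directionalDeriv y P) :=
  eval_lineRestrict _ _ _ _

theorem natDegree_C_add_C_mul_X_le (a b : R) :
    (Polynomial.C a + Polynomial.C b * Polynomial.X).natDegree ≤ 1 := by
  compute_degree

theorem natDegree_lineRestrict_le (P : MvPolynomial σ R) (x v : σ → R) :
    (lineRestrict P x v).natDegree ≤ P.totalDegree :=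
  (aeval_natDegree_le P le_rfl _ fun _ => natDegree_C_add_C_mul_X_le _ _).trans_eq (mul_one _)

variable {P : MvPolynomial σ R} {d : ℕ}

theorem eval_smul_of_isHomogeneous (hP : P.IsHomogeneous d) (c : R) (v : σ → R) :
    eval (c • v) P = c ^ d * eval v P := by
  rw [eval_eq, eval_eq, Finset.mul_sum]
  refine Finset.sum_congr rfl fun s hs => ?_
  simp only [Pi.smul_apply, smul_eq_mul, mul_pow, Finset.prod_mul_distrib,
    Finset.prod_pow_eq_pow_sum, ← hP.degree_eq_sum_deg_support hs]
  ring

theorem coeff_lineRestrict (hP : P.IsHomogeneous d) (x v : σ → R) :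
    (lineRestrict P x v).coeff d = eval v P := by
  rw [lineRestrict, aeval_def, eval₂_eq, eval_eq, Polynomial.finsetSum_coeff]
  refine Finset.sum_congr rfl fun s hs => ?_
  rw [Polynomial.algebraMap_eq, Polynomial.coeff_C_mul]
  congr 1
  have hcard : Multiset.card s.toMultiset * 1 = d := by
    rw [Finsupp.card_toMultiset, mul_one, hP.degree_eq_sum_deg_support hs]
    rfl
  have hcoeff := Polynomial.coeff_multiset_prod_of_natDegree_le
    (s.toMultiset.map fun i => Polynomial.C (x i) + Polynomial.C (v i) * Polynomial.X) 1 <|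
      Multiset.forall_mem_map_iff.mpr fun i _ => natDegree_C_add_C_mul_X_le (x i) (v i)
  rw [Multiset.card_map, hcard, prod_map_toMultiset, Multiset.map_map,
    prod_map_toMultiset] at hcoeff
  simpa using hcoeff

theorem natDegree_lineRestrict (hP : P.IsHomogeneous d) (x : σ → R) {v : σ → R}
    (hv : eval v P ≠ 0) : (lineRestrict P x v).natDegree = d :=
  ((natDegree_lineRestrict_le P x v).trans hP.totalDegree_le).antisymm <|
    Polynomial.le_natDegree_of_ne_zero <| by rwa [coeff_lineRestrict hP]

theorem leadingCoeff_lineRestrict (hP : P.IsHomogeneous d) (x : σ → R) {v : σ → R}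
    (hv : eval v P ≠ 0) : (lineRestrict P x v).leadingCoeff = eval v P := by
  rw [Polynomial.leadingCoeff, natDegree_lineRestrict hP x hv, coeff_lineRestrict hP]

end Line

/-! ### Roots along parallel lines -/

section Roots

variable {σ K : Type*} [NormedField K] {Q : MvPolynomial σ K} {d : ℕ} {a : σ → K}

theorem isOpen_setOf_exists_root [IsAlgClosed K] (hQ : Q.IsHomogeneous d) (ha : eval a Q ≠ 0)
    {T : Set K} (hT : IsOpen T) : IsOpen {v | ∃ s ∈ T, eval (v + s • a) Q = 0} := by
  refine isOpen_iff_mem_nhds.mpr ?_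
  rintro v₀ ⟨s₀, hs₀, hroot⟩
  obtain ⟨ε, hε, hball⟩ := Metric.isOpen_iff.mp hT s₀ hs₀
  have hcont : Continuous fun v => ‖eval (v + s₀ • a) Q‖ :=
    ((continuous_eval Q).comp (continuous_add_const _)).norm
  have hsmall : ∀ᶠ v in 𝓝 v₀, ‖eval (v + s₀ • a) Q‖ < ‖eval a Q‖ * ε ^ d := by
    refine hcont.continuousAt.eventually_lt continuousAt_const ?_
    rw [hroot, norm_zero]
    positivity
  filter_upwards [hsmall] with v hv
  rw [← eval_lineRestrict, ← leadingCoeff_lineRestrict hQ v ha] at hv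
  rw [← natDegree_lineRestrict hQ v ha] at hv
  obtain ⟨z, hz, hzs⟩ := exists_isRoot_norm_sub_lt (IsAlgClosed.splits _) hε hv
  rw [Polynomial.IsRoot, eval_lineRestrict] at hz
  exact ⟨z, hball (by rwa [Metric.mem_ball, dist_comm, dist_eq_norm]), hz⟩

theorem eventually_eval_add_smul_ne_zero (hQ : Q.IsHomogeneous d) (ha : eval a Q ≠ 0)
    (v₀ : σ → K) :
    ∀ᶠ p in 𝓝 v₀ ×ˢ Bornology.cobounded K, eval (p.1 + p.2 • a) Q ≠ 0 := by
  have hlim : Tendsto (fun p : (σ → K) × K => eval (p.2⁻¹ • p.1 + a) Q)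
      (𝓝 v₀ ×ˢ Bornology.cobounded K) (𝓝 (eval a Q)) := by
    have hinv : Tendsto (fun p : (σ → K) × K => p.2⁻¹) (𝓝 v₀ ×ˢ Bornology.cobounded K) (𝓝 0) :=
      tendsto_inv₀_cobounded.comp tendsto_snd
    have h := (hinv.smul tendsto_fst).add_const a
    rw [zero_smul, zero_add] at h
    exact ((continuous_eval Q).tendsto a).comp h
  filter_upwards [hlim.eventually_ne ha,
    tendsto_snd.eventually (Bornology.eventually_ne_cobounded 0)] with p hp hs
  have hscale : p.1 + p.2 • a = p.2 • (p.2⁻¹ • p.1 + a) := by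
    rw [smul_add, smul_inv_smul₀ hs]
  rw [hscale, eval_smul_of_isHomogeneous hQ]
  exact mul_ne_zero (pow_ne_zero _ hs) hp

theorem isClosed_setOf_exists_root [ProperSpace K] (hQ : Q.IsHomogeneous d)
    (ha : eval a Q ≠ 0) {T : Set K} (hT : IsClosed T) :
    IsClosed {v | ∃ s ∈ T, eval (v + s • a) Q = 0} := by
  refine isOpen_compl_iff.mp (isOpen_iff_mem_nhds.mpr fun v₀ hv₀ => ?_)
  simp only [Set.mem_compl_iff, Set.mem_ofPred_eq, not_exists, not_and] at hv₀
  obtain ⟨near, hnear, far, hfar, hne⟩ :=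
    eventually_prod_iff.mp (eventually_eval_add_smul_ne_zero hQ ha v₀)
  have hcompact : IsCompact (closure {s | far s}ᶜ ∩ T) :=
    (Bornology.isBounded_def.mpr (by rwa [compl_compl])).isCompact_closure.inter_right hT
  have hcont : Continuous fun p : (σ → K) × K => eval (p.1 + p.2 • a) Q :=
    (continuous_eval Q).comp (by fun_prop)
  have hbounded : ∀ᶠ v in 𝓝 v₀, ∀ s ∈ closure {s | far s}ᶜ ∩ T, eval (v + s • a) Q ≠ 0 :=
    hcompact.eventually_forall_of_forall_eventually fun s hs =>
      hcont.continuousAt.eventually_ne (hv₀ s hs.2)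
  filter_upwards [hnear, hbounded] with v hv hvs
  rintro ⟨s, hs, hroot⟩
  by_cases hsfar : far s
  · exact hne hv hsfar hroot
  · exact hvs s ⟨subset_closure hsfar, hs⟩ hroot

end Roots

/-! ### Hyperbolicity cones -/

section Complexification

variable {σ : Type*}

/-- The inclusion of `σ → ℝ` into `σ → ℂ` as a real-linear map. -/
noncomputable def ofRealVec : (σ → ℝ) →ₗ[ℝ] (σ → ℂ) :=
  Complex.ofRealCLM.toLinearMap.compLeft σ

/-- The real polynomial `P` viewed as a polynomial with complex coefficients. -/
noncomputable def complexify (P : MvPolynomial σ ℝ) : MvPolynomial σ ℂ :=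
  P.map Complex.ofRealHom

theorem continuous_ofRealVec : Continuous (ofRealVec (σ := σ)) :=
  continuous_pi fun i => Complex.continuous_ofReal.comp (continuous_apply i)

theorem eval_ofRealVec_complexify (P : MvPolynomial σ ℝ) (x : σ → ℝ) :
    eval (ofRealVec x) (complexify P) = (eval x P : ℂ) := by
  rw [complexify, eval_map]
  exact (eval₂_comp_left Complex.ofRealHom (RingHom.id ℝ) x P).symm

theorem eval_ofRealVec_complexify_ne_zero {P : MvPolynomial σ ℝ} {x : σ → ℝ}
    (hx : eval x P ≠ 0) : eval (ofRealVec x) (complexify P) ≠ 0 := by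
  rwa [eval_ofRealVec_complexify, Complex.ofReal_ne_zero]

theorem isHomogeneous_complexify {P : MvPolynomial σ ℝ} {d : ℕ} (hP : P.IsHomogeneous d) :
    (complexify P).IsHomogeneous d :=
  hP.map _

theorem eval_add_ofReal_smul_complexify (P : MvPolynomial σ ℝ) (x v : σ → ℝ) (t : ℝ) :
    eval (ofRealVec x + (t : ℂ) • ofRealVec v) (complexify P) = (eval (x + t • v) P : ℂ) := by
  rw [← eval_ofRealVec_complexify, map_add, map_smul, Complex.coe_smul]

theorem aeval_lineRestrict (P : MvPolynomial σ ℝ) (x v : σ → ℝ) (z : ℂ) :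
    Polynomial.aeval z (lineRestrict P x v) =
      eval (ofRealVec x + z • ofRealVec v) (complexify P) := by
  rw [Polynomial.aeval_def, Polynomial.eval₂_eq_eval_map]
  exact (congrArg _ (map_lineRestrict Complex.ofRealHom P x v)).trans (eval_lineRestrict _ _ _ _)

end Complexification

theorem isHyperbolicWrt_iff {m : ℕ} {P : MvPolynomial (Fin m) ℝ} {e : Fin m → ℝ} :
    IsHyperbolicWrt P e ↔ 0 < eval e P ∧ ∀ (x : Fin m → ℝ) (z : ℂ),
      eval (ofRealVec x + z • ofRealVec e) (complexify P) = 0 → z.im = 0 := by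
  have hline : ∀ x (z : ℂ), Polynomial.aeval z (lineEvalSub P x e) =
      eval (ofRealVec x + (-z) • ofRealVec e) (complexify P) := fun x z => by
    have hneg : lineEvalSub P x e = lineRestrict P x (-e) := by
      simp [lineEvalSub, lineRestrict, sub_eq_add_neg]
    rw [hneg, aeval_lineRestrict, map_neg, smul_neg, neg_smul]
  refine and_congr_right fun _ => forall_congr' fun x => ⟨fun h z hz => ?_, fun h z hz => ?_⟩
  · simpa using h (-z) (by rwa [hline, neg_neg])
  · simpa using h (-z) (by rwa [← hline])

section Cone

variable {σ : Type*} {P : MvPolynomial σ ℝ} {d : ℕ} {e x : σ → ℝ}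

/-- The points `x` such that `P > 0` on the closed ray from `x` in direction `e`. For `P`
hyperbolic with respect to `e` this is the hyperbolicity cone,
see `connectedComponentIn_eq_openCone`. -/
def openCone (P : MvPolynomial σ ℝ) (e : σ → ℝ) : Set (σ → ℝ) :=
  {x | ∀ t : ℝ, 0 ≤ t → 0 < eval (x + t • e) P}

/-- The points `x` such that `P > 0` on the open ray from `x` in direction `e`. For `P`
hyperbolic with respect to `e` this is the closed hyperbolicity cone, see `closure_openCone`. -/
def closedCone (P : MvPolynomial σ ℝ) (e : σ → ℝ) : Set (σ → ℝ) :=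
  {x | ∀ t : ℝ, 0 < t → 0 < eval (x + t • e) P}

theorem eval_pos_of_mem_openCone (hx : x ∈ openCone P e) : 0 < eval x P := by
  simpa using hx 0 le_rfl

theorem openCone_subset_closedCone : openCone P e ⊆ closedCone P e :=
  fun _ hx t ht => hx t ht.le

theorem add_smul_mem_openCone (hx : x ∈ closedCone P e) {t : ℝ} (ht : 0 < t) :
    x + t • e ∈ openCone P e := fun s hs => by
  rw [add_assoc, ← add_smul]
  exact hx _ (add_pos_of_pos_of_nonneg ht hs)

theorem eval_smul_add_smul (hP : P.IsHomogeneous d) {c : ℝ} (hc : c ≠ 0) (x : σ → ℝ) (t : ℝ) :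
    eval (c • x + t • e) P = c ^ d * eval (x + (t / c) • e) P := by
  rw [← eval_smul_of_isHomogeneous hP, smul_add, smul_smul, mul_div_cancel₀ _ hc]

theorem smul_mem_closedCone (hP : P.IsHomogeneous d) (hx : x ∈ closedCone P e) {c : ℝ}
    (hc : 0 < c) : c • x ∈ closedCone P e := fun t ht => by
  rw [eval_smul_add_smul hP hc.ne']
  exact mul_pos (pow_pos hc d) (hx _ (div_pos ht hc))

theorem self_mem_openCone (hP : P.IsHomogeneous d) (he : 0 < eval e P) : e ∈ openCone P e := by
  intro t ht
  have hscale : e + t • e = (1 + t) • e := by rw [add_smul, one_smul]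
  rw [hscale, eval_smul_of_isHomogeneous hP]
  positivity

theorem zero_mem_closedCone (hP : P.IsHomogeneous d) (he : 0 < eval e P) :
    0 ∈ closedCone P e := fun t ht => by
  rw [zero_add, eval_smul_of_isHomogeneous hP]
  positivity

theorem exists_root_of_eval_nonpos (hP : P.IsHomogeneous d) (he : 0 < eval e P) {t : ℝ}
    (h : eval (x + t • e) P ≤ 0) : ∃ s, t ≤ s ∧ eval (x + s • e) P = 0 := by
  have hlead : 0 < (lineRestrict P x e).leadingCoeff := by
    rwa [leadingCoeff_lineRestrict hP x he.ne']
  simpa only [Polynomial.IsRoot, eval_lineRestrict] using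
    exists_isRoot_of_eval_nonpos hlead (t := t) (by rwa [eval_lineRestrict])

theorem mem_openCone_iff (hP : P.IsHomogeneous d) (he : 0 < eval e P) :
    x ∈ openCone P e ↔ ∀ s : ℝ, 0 ≤ s → eval (x + s • e) P ≠ 0 := by
  refine ⟨fun hx s hs => (hx s hs).ne', fun hx t ht => ?_⟩
  by_contra! h
  obtain ⟨s, hts, hs⟩ := exists_root_of_eval_nonpos hP he h
  exact hx s (ht.trans hts) hs

theorem mem_closedCone_iff (hP : P.IsHomogeneous d) (he : 0 < eval e P) :
    x ∈ closedCone P e ↔ ∀ s : ℝ, 0 < s → eval (x + s • e) P ≠ 0 := by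
  refine ⟨fun hx s hs => (hx s hs).ne', fun hx t ht => ?_⟩
  by_contra! h
  obtain ⟨s, hts, hs⟩ := exists_root_of_eval_nonpos hP he h
  exact hx s (ht.trans_le hts) hs

theorem isOpen_openCone (hP : P.IsHomogeneous d) (he : 0 < eval e P) :
    IsOpen (openCone P e) := by
  have hcompl : openCone P e = {x | ∃ s ∈ Set.Ici (0 : ℝ), eval (x + s • e) P = 0}ᶜ := by
    ext x
    simp [mem_openCone_iff hP he]
  rw [hcompl]
  exact (isClosed_setOf_exists_root hP he.ne' isClosed_Ici).isOpen_compl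

theorem starConvex_openCone (hP : P.IsHomogeneous d) (he : 0 < eval e P) :
    StarConvex ℝ e (openCone P e) := by
  intro x hx a b ha hb hab
  rcases hb.eq_or_lt with rfl | hb
  · obtain rfl : a = 1 := by linarith
    simpa using self_mem_openCone hP he
  · intro t ht
    rw [add_comm (a • e), add_assoc, ← add_smul, eval_smul_add_smul hP hb.ne']
    exact mul_pos (pow_pos hb d) (hx _ (div_nonneg (add_nonneg ha ht) hb.le))

end Cone

section Hyperbolic

variable {m d : ℕ} {P : MvPolynomial (Fin m) ℝ} {e : Fin m → ℝ}

theorem isClosed_closedCone (hP : P.IsHomogeneous d) (h : IsHyperbolicWrt P e) :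
    IsClosed (closedCone P e) := by
  have hcompl : (closedCone P e)ᶜ = ofRealVec ⁻¹' {v | ∃ s ∈ {s : ℂ | 0 < s.re},
      eval (v + s • ofRealVec e) (complexify P) = 0} := by
    ext x
    simp only [Set.mem_compl_iff, mem_closedCone_iff hP h.1, not_forall, not_not,
      Set.mem_preimage, Set.mem_ofPred_eq, exists_prop]
    constructor
    · rintro ⟨s, hs, hroot⟩
      exact ⟨s, hs, by rw [eval_add_ofReal_smul_complexify, hroot, Complex.ofReal_zero]⟩
    · rintro ⟨s, hs, hroot⟩
      have hreal : s = (s.re : ℂ) := Complex.ext rfl ((isHyperbolicWrt_iff.mp h).2 x s hroot)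
      rw [hreal, eval_add_ofReal_smul_complexify] at hroot
      exact ⟨s.re, hs, by exact_mod_cast hroot⟩
  rw [← isOpen_compl_iff, hcompl]
  exact (isOpen_setOf_exists_root (isHomogeneous_complexify hP)
    (eval_ofRealVec_complexify_ne_zero h.1.ne')
    (isOpen_lt continuous_const Complex.continuous_re)).preimage continuous_ofRealVec

theorem closure_openCone (hP : P.IsHomogeneous d) (h : IsHyperbolicWrt P e) :
    closure (openCone P e) = closedCone P e := by
  refine (closure_minimal openCone_subset_closedCone (isClosed_closedCone hP h)).antisymm
    fun x hx => ?_
  have hcont : Continuous fun t : ℝ => x + t • e := by fun_prop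
  have hlim : Tendsto (fun t : ℝ => x + t • e) (𝓝[>] 0) (𝓝 x) :=
    (hcont.tendsto' 0 x (by simp)).mono_left nhdsWithin_le_nhds
  exact mem_closure_of_tendsto hlim
    (eventually_mem_nhdsWithin.mono fun t ht => add_smul_mem_openCone hx ht)

theorem connectedComponentIn_eq_openCone (hP : P.IsHomogeneous d) (h : IsHyperbolicWrt P e) :
    connectedComponentIn {x | 0 < eval x P} e = openCone P e := by
  have he := self_mem_openCone hP h.1
  refine Set.Subset.antisymm ?_ ?_
  · refine isPreconnected_connectedComponentIn.subset_of_closure_inter_subset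
      (isOpen_openCone hP h.1) ⟨e, mem_connectedComponentIn h.1, he⟩ ?_
    rintro x ⟨hx, hxP⟩ t ht
    rw [closure_openCone hP h] at hx
    rcases ht.eq_or_lt with rfl | ht
    · simpa using connectedComponentIn_subset _ _ hxP
    · exact hx t ht
  · exact ((starConvex_openCone hP h.1).isPathConnected he).isConnected.isPreconnected
      |>.subset_connectedComponentIn he fun x hx => eval_pos_of_mem_openCone hx

end Hyperbolic

/-! ### Gårding's theorem -/

section Garding

variable {m d : ℕ} {P : MvPolynomial (Fin m) ℝ} {e a : Fin m → ℝ}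

theorem eval_smul_add_I_smul_ne_zero (hP : P.IsHomogeneous d) (h : IsHyperbolicWrt P e)
    (ha : a ∈ openCone P e) {α : ℝ} (hα : 0 < α) {s : ℂ} (hs : 0 ≤ s.im) :
    eval ((α * Complex.I) • ofRealVec e + s • ofRealVec a) (complexify P) ≠ 0 := by
  intro hroot
  have hPc := isHomogeneous_complexify hP
  have hαI : (α * Complex.I : ℂ) ≠ 0 := by simp [hα.ne']
  rcases eq_or_ne s 0 with rfl | hs0
  · rw [zero_smul, add_zero, eval_smul_of_isHomogeneous hPc, eval_ofRealVec_complexify] at hroot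
    exact mul_ne_zero (pow_ne_zero d hαI) (by exact_mod_cast h.1.ne') hroot
  obtain ⟨w, hw⟩ : ∃ w, α * Complex.I = s * w := ⟨_, (mul_div_cancel₀ _ hs0).symm⟩
  rw [hw, mul_smul, ← smul_add, eval_smul_of_isHomogeneous hPc, add_comm] at hroot
  have hline := (mul_eq_zero.mp hroot).resolve_left (pow_ne_zero d hs0)
  have hreal : w = (w.re : ℂ) := Complex.ext rfl ((isHyperbolicWrt_iff.mp h).2 a w hline)
  have him : α = s.im * w.re := by
    rw [hreal] at hw
    simpa using congrArg Complex.im hw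
  rw [hreal, eval_add_ofReal_smul_complexify] at hline
  exact (ha w.re (pos_of_mul_pos_right (him ▸ hα) hs).le).ne' (by exact_mod_cast hline)

theorem eval_add_I_smul_add_ofReal_smul_ne_zero (h : IsHyperbolicWrt P e) {α : ℝ} (hα : α ≠ 0)
    (x v : Fin m → ℝ) (r : ℝ) :
    eval (ofRealVec x + (α * Complex.I) • ofRealVec e + (r : ℂ) • ofRealVec v)
      (complexify P) ≠ 0 := by
  intro hroot
  rw [add_right_comm, Complex.coe_smul, ← map_smul, ← map_add] at hroot
  simpa [hα] using (isHyperbolicWrt_iff.mp h).2 _ _ hroot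

theorem eval_add_I_smul_add_smul_ne_zero (hP : P.IsHomogeneous d) (h : IsHyperbolicWrt P e)
    (ha : a ∈ openCone P e) {α : ℝ} (hα : 0 < α) (x : Fin m → ℝ) {s : ℂ} (hs : 0 ≤ s.im) :
    eval (ofRealVec x + (α * Complex.I) • ofRealVec e + s • ofRealVec a) (complexify P) ≠ 0 := by
  have hPc := isHomogeneous_complexify hP
  have hPa := eval_ofRealVec_complexify_ne_zero (eval_pos_of_mem_openCone ha).ne'
  let path : ℝ → Fin m → ℂ := fun β => ofRealVec (β • x) + (α * Complex.I) • ofRealVec e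
  have hpath : Continuous path :=
    (continuous_ofRealVec.comp (by fun_prop)).add continuous_const
  -- `B` is closed, open since no root is real, and misses `0`; it contains `1` if the claim fails.
  let B : Set ℝ := path ⁻¹' {v | ∃ s ∈ {s : ℂ | 0 ≤ s.im},
    eval (v + s • ofRealVec a) (complexify P) = 0}
  have hB_closed : IsClosed B := (isClosed_setOf_exists_root hPc hPa
    (isClosed_le continuous_const Complex.continuous_im)).preimage hpath
  have hB_eq : B = path ⁻¹' {v | ∃ s ∈ {s : ℂ | 0 < s.im},
      eval (v + s • ofRealVec a) (complexify P) = 0} := by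
    refine Set.Subset.antisymm ?_ fun β ⟨s, hs, hroot⟩ => ⟨s, Set.mem_ofPred.mpr hs.le, hroot⟩
    rintro β ⟨s, hs, hroot⟩
    refine ⟨s, Set.mem_ofPred.mpr (hs.lt_of_ne fun him => ?_), hroot⟩
    obtain ⟨r, rfl⟩ : ∃ r : ℝ, s = r := ⟨s.re, Complex.ext rfl him.symm⟩
    exact eval_add_I_smul_add_ofReal_smul_ne_zero h hα.ne' _ _ _ hroot
  have hB_open : IsOpen B := hB_eq ▸ (isOpen_setOf_exists_root hPc hPa
    (isOpen_lt continuous_const Complex.continuous_im)).preimage hpath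
  rcases isClopen_iff.mp ⟨hB_closed, hB_open⟩ with hB | hB
  · exact fun hroot => (hB ▸ ⟨s, hs, by simpa [path] using hroot⟩ : (1 : ℝ) ∈ (∅ : Set ℝ))
  · obtain ⟨s, hs, hroot⟩ : (0 : ℝ) ∈ B := hB ▸ Set.mem_univ 0
    exact absurd (by simpa [path] using hroot) (eval_smul_add_I_smul_ne_zero hP h ha hα hs)

theorem im_nonpos_of_eval_eq_zero (hP : P.IsHomogeneous d) (h : IsHyperbolicWrt P e)
    (ha : a ∈ openCone P e) {x : Fin m → ℝ} {s : ℂ}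
    (hroot : eval (ofRealVec x + s • ofRealVec a) (complexify P) = 0) : s.im ≤ 0 := by
  by_contra! hs
  have hPa := eval_ofRealVec_complexify_ne_zero (eval_pos_of_mem_openCone ha).ne'
  have hcont : Continuous fun α : ℝ => ofRealVec x + (α * Complex.I) • ofRealVec e := by fun_prop
  have hlim : Tendsto (fun α : ℝ => ofRealVec x + (α * Complex.I) • ofRealVec e) (𝓝[>] 0)
      (𝓝 (ofRealVec x)) := (hcont.tendsto' 0 _ (by simp)).mono_left nhdsWithin_le_nhds
  have hopen := isOpen_setOf_exists_root (isHomogeneous_complexify hP) hPa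
    (T := {z : ℂ | 0 < z.im}) (isOpen_lt continuous_const Complex.continuous_im)
  obtain ⟨α, ⟨z, hz, hzroot⟩, hα⟩ := ((hlim.eventually_mem (hopen.mem_nhds ⟨s, hs, hroot⟩)).and
    eventually_mem_nhdsWithin).exists
  exact eval_add_I_smul_add_smul_ne_zero hP h ha hα x (le_of_lt hz) hzroot

theorem isHyperbolicWrt_of_mem_openCone (hP : P.IsHomogeneous d) (h : IsHyperbolicWrt P e)
    (ha : a ∈ openCone P e) : IsHyperbolicWrt P a := by
  refine isHyperbolicWrt_iff.mpr ⟨eval_pos_of_mem_openCone ha, fun x s hroot => ?_⟩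
  refine (im_nonpos_of_eval_eq_zero hP h ha hroot).antisymm ?_
  have hneg : eval (ofRealVec (-x) + (-s) • ofRealVec a) (complexify P) = 0 := by
    have hvec : ofRealVec (-x) + (-s) • ofRealVec a =
        (-1 : ℂ) • (ofRealVec x + s • ofRealVec a) := by
      rw [map_neg, neg_one_smul, neg_add, neg_smul]
    rw [hvec, eval_smul_of_isHomogeneous (isHomogeneous_complexify hP)]
    exact mul_eq_zero_of_right _ hroot
  simpa using im_nonpos_of_eval_eq_zero hP h ha hneg

theorem openCone_eq_of_mem (hP : P.IsHomogeneous d) (h : IsHyperbolicWrt P e)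
    (ha : a ∈ openCone P e) : openCone P a = openCone P e := by
  rw [← connectedComponentIn_eq_openCone hP h] at ha ⊢
  rw [connectedComponentIn_eq ha, connectedComponentIn_eq_openCone hP]
  rw [connectedComponentIn_eq_openCone hP h] at ha
  exact isHyperbolicWrt_of_mem_openCone hP h ha

theorem closedCone_eq_of_mem (hP : P.IsHomogeneous d) (h : IsHyperbolicWrt P e)
    (ha : a ∈ openCone P e) : closedCone P a = closedCone P e := by
  rw [← closure_openCone hP h, ← openCone_eq_of_mem hP h ha,
    closure_openCone hP (isHyperbolicWrt_of_mem_openCone hP h ha)]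

end Garding

/-! ### Monotonicity along the cone -/

section Monotone

variable {m d : ℕ} {P : MvPolynomial (Fin m) ℝ} {e a x y : Fin m → ℝ}

theorem add_mem_openCone (hP : P.IsHomogeneous d) (h : IsHyperbolicWrt P e)
    (ha : a ∈ openCone P e) (hy : y ∈ closedCone P e) : a + y ∈ openCone P e := by
  rw [← closedCone_eq_of_mem hP h ha] at hy
  rw [← openCone_eq_of_mem hP h ha]
  simpa [add_comm a] using add_smul_mem_openCone hy one_pos

theorem add_mem_closedCone (hP : P.IsHomogeneous d) (h : IsHyperbolicWrt P e)
    (hx : x ∈ closedCone P e) (hy : y ∈ closedCone P e) : x + y ∈ closedCone P e := by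
  intro t ht
  rw [add_right_comm]
  exact eval_pos_of_mem_openCone (add_mem_openCone hP h (add_smul_mem_openCone hx ht) hy)

theorem splits_lineRestrict_self (hP : P.IsHomogeneous d) (h : IsHyperbolicWrt P e)
    (y : Fin m → ℝ) : (lineRestrict P e y).Splits := by
  refine splits_of_complex_roots_real fun z hz => ?_
  rcases eq_or_ne z 0 with rfl | hz0
  · rfl
  have hvec : ofRealVec e + z • ofRealVec y = z • (ofRealVec y + z⁻¹ • ofRealVec e) := by
    rw [smul_add, smul_inv_smul₀ hz0, add_comm]
  rw [aeval_lineRestrict, hvec, eval_smul_of_isHomogeneous (isHomogeneous_complexify hP)] at hz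
  have hinv := (isHyperbolicWrt_iff.mp h).2 y z⁻¹
    ((mul_eq_zero.mp hz).resolve_left (pow_ne_zero d hz0))
  simpa [Complex.inv_im, hz0] using hinv

theorem splits_lineRestrict_of_mem_openCone (hP : P.IsHomogeneous d) (h : IsHyperbolicWrt P e)
    (ha : a ∈ openCone P e) (y : Fin m → ℝ) : (lineRestrict P a y).Splits :=
  splits_lineRestrict_self hP (isHyperbolicWrt_of_mem_openCone hP h ha) y

theorem eval_lineRestrict_pos (hP : P.IsHomogeneous d) (h : IsHyperbolicWrt P e)
    (ha : a ∈ openCone P e) (hy : y ∈ closedCone P e) {t : ℝ} (ht : 0 ≤ t) :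
    0 < (lineRestrict P a y).eval t := by
  rw [eval_lineRestrict]
  rcases ht.eq_or_lt with rfl | ht
  · simpa using eval_pos_of_mem_openCone ha
  · exact eval_pos_of_mem_openCone
      (add_mem_openCone hP h ha (smul_mem_closedCone hP hy ht))

theorem coeff_lineRestrict_nonneg (hP : P.IsHomogeneous d) (h : IsHyperbolicWrt P e)
    (ha : a ∈ openCone P e) (hy : y ∈ closedCone P e) (n : ℕ) :
    0 ≤ (lineRestrict P a y).coeff n :=
  coeff_nonneg_of_splits_of_eval_pos (splits_lineRestrict_of_mem_openCone hP h ha y)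
    (fun _ => eval_lineRestrict_pos hP h ha hy) n

theorem eval_directionalDeriv_nonneg (hP : P.IsHomogeneous d) (h : IsHyperbolicWrt P e)
    (ha : a ∈ openCone P e) (hy : y ∈ closedCone P e) :
    0 ≤ eval a (directionalDeriv y P) := by
  simpa only [coeff_one_lineRestrict] using coeff_lineRestrict_nonneg hP h ha hy 1

theorem eval_le_eval_add (hP : P.IsHomogeneous d) (h : IsHyperbolicWrt P e)
    (ha : a ∈ openCone P e) (hy : y ∈ closedCone P e) : eval a P ≤ eval (a + y) P := by
  simpa [coeff_zero_lineRestrict, eval_lineRestrict] using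
    coeff_mul_pow_le_eval (coeff_lineRestrict_nonneg hP h ha hy) zero_le_one 0

theorem eval_directionalDeriv_mul_le (hP : P.IsHomogeneous d) (h : IsHyperbolicWrt P e)
    (ha : a ∈ openCone P e) (hy : y ∈ closedCone P e) {w : ℝ} (hw : 0 ≤ w) :
    eval a (directionalDeriv y P) * w ≤ eval (a + w • y) P := by
  simpa [coeff_one_lineRestrict, eval_lineRestrict] using
    coeff_mul_pow_le_eval (coeff_lineRestrict_nonneg hP h ha hy) hw 1

theorem sub_smul_mem_openCone (hP : P.IsHomogeneous d) (h : IsHyperbolicWrt P e)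
    (ha : a ∈ openCone P e) (hy : y ∈ closedCone P e) {M ε : ℝ}
    (hM : eval a (directionalDeriv y P) ≤ M * eval a P) (hε : 0 ≤ ε) (hεM : ε * M < 1) :
    a - ε • y ∈ openCone P e := by
  rw [← openCone_eq_of_mem hP h ha]
  intro t ht
  have hM0 : 0 ≤ M := nonneg_of_mul_nonneg_left
    ((eval_directionalDeriv_nonneg hP h ha hy).trans hM) (eval_pos_of_mem_openCone ha)
  have ht1 : 0 < 1 + t := by positivity
  have hvec : a - ε • y + t • a = (1 + t) • (a + (-(ε / (1 + t))) • y) := by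
    rw [smul_add, smul_smul, mul_neg, mul_div_cancel₀ _ ht1.ne']
    module
  have hsmall : ε / (1 + t) * M < 1 :=
    (mul_le_mul_of_nonneg_right (div_le_self hε (by linarith)) hM0).trans_lt hεM
  rw [hvec, eval_smul_of_isHomogeneous hP, ← eval_lineRestrict]
  refine mul_pos (pow_pos ht1 d) (eval_neg_pos_of_derivative_le (M := M)
    (splits_lineRestrict_of_mem_openCone hP h ha y)
    (fun _ => eval_lineRestrict_pos hP h ha hy) ?_ (div_nonneg hε ht1.le) hsmall)
  simpa [derivative_lineRestrict, eval_lineRestrict] using hM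

end Monotone

/-! ### Order of vanishing along the cone -/

section Multiplicity

/-- The multiplicity of `x` relative to `P` and `e` (in the sense of Renegar): the order of
vanishing of `t ↦ P(x + t·e)` at `t = 0`. -/
noncomputable def coneMultiplicity {σ : Type*} (P : MvPolynomial σ ℝ) (e x : σ → ℝ) : ℕ :=
  (lineRestrict P x e).rootMultiplicity 0

variable {m d : ℕ} {P : MvPolynomial (Fin m) ℝ} {e x y : Fin m → ℝ}

theorem isTheta_eval_add_smul {σ : Type*} {P : MvPolynomial σ ℝ} {e x : σ → ℝ}
    (hx : x ∈ closedCone P e) :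
    (fun t : ℝ => eval (x + t • e) P) =Θ[𝓝 0] fun t => t ^ coneMultiplicity P e x := by
  have hne : lineRestrict P x e ≠ 0 := fun h0 => (hx 1 one_pos).ne' <| by
    rw [← eval_lineRestrict, h0, Polynomial.eval_zero]
  simpa only [eval_lineRestrict] using! isTheta_eval_nhds_zero hne

theorem eval_lineRestrictDeriv_nonneg (hP : P.IsHomogeneous d) (h : IsHyperbolicWrt P e)
    (hx : x ∈ closedCone P e) (hy : y ∈ closedCone P e) {t : ℝ} (ht : 0 < t) :
    0 ≤ (lineRestrictDeriv P x e y).eval t := by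
  rw [eval_lineRestrictDeriv]
  exact eval_directionalDeriv_nonneg hP h (add_smul_mem_openCone hx ht) hy

theorem X_pow_coneMultiplicity_add_dvd_lineRestrictDeriv (hP : P.IsHomogeneous d)
    (h : IsHyperbolicWrt P e) (hx : x ∈ closedCone P e) (hy : y ∈ closedCone P e) :
    Polynomial.X ^ coneMultiplicity P e (x + y) ∣ lineRestrictDeriv P x e y := by
  rw [← isBigO_pow_iff_X_pow_dvd (l := 𝓝[>] 0) (nhdsGT_le_nhdsNE 0)]
  refine IsBigO.trans (.of_norm_eventuallyLE ?_)
    ((isTheta_eval_add_smul (add_mem_closedCone hP h hx hy)).1.mono nhdsWithin_le_nhds)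
  filter_upwards [eventually_mem_nhdsWithin] with t ht
  rw [Real.norm_of_nonneg (eval_lineRestrictDeriv_nonneg hP h hx hy ht), eval_lineRestrictDeriv,
    add_right_comm]
  simpa using eval_directionalDeriv_mul_le hP h (add_smul_mem_openCone hx ht) hy zero_le_one

theorem exists_sub_smul_mem_openCone (hP : P.IsHomogeneous d) (h : IsHyperbolicWrt P e)
    (y : Fin m → ℝ) : ∃ ε > (0 : ℝ), e - ε • y ∈ openCone P e := by
  have hcont : Continuous fun ε : ℝ => e - ε • y := by fun_prop
  have hmem : ∀ᶠ ε in 𝓝[>] (0 : ℝ), e - ε • y ∈ openCone P e :=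
    ((hcont.tendsto' 0 e (by simp)).mono_left nhdsWithin_le_nhds).eventually_mem
      ((isOpen_openCone hP h.1).mem_nhds (self_mem_openCone hP h.1))
  obtain ⟨ε, hε, hpos⟩ := (hmem.and eventually_mem_nhdsWithin).exists
  exact ⟨ε, hpos, hε⟩

theorem X_pow_coneMultiplicity_dvd_X_mul_lineRestrictDeriv (hP : P.IsHomogeneous d)
    (h : IsHyperbolicWrt P e) (hx : x ∈ closedCone P e) (hy : y ∈ closedCone P e) :
    Polynomial.X ^ coneMultiplicity P e x ∣ Polynomial.X * lineRestrictDeriv P x e y := by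
  obtain ⟨ε, hε, hεy⟩ := exists_sub_smul_mem_openCone hP h y
  have hdouble : (fun t : ℝ => eval (x + (2 * t) • e) P) =O[𝓝[>] 0]
      fun t => t ^ coneMultiplicity P e x := by
    have hlim : Tendsto (fun t : ℝ => 2 * t) (𝓝[>] 0) (𝓝 0) :=
      ((continuous_const_mul 2).tendsto' 0 0 (mul_zero 2)).mono_left nhdsWithin_le_nhds
    refine ((isTheta_eval_add_smul hx).1.comp_tendsto hlim).trans ?_
    simpa only [Function.comp_def, mul_pow] using isBigO_const_mul_self _ _ _
  rw [← isBigO_pow_iff_X_pow_dvd (l := 𝓝[>] 0) (nhdsGT_le_nhdsNE 0)]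
  refine IsBigO.trans (.of_bound ε⁻¹ ?_) hdouble
  filter_upwards [eventually_mem_nhdsWithin] with t (ht : 0 < t)
  have hxt := add_smul_mem_openCone hx ht
  have hderiv := eval_directionalDeriv_nonneg hP h hxt hy
  have hxt2 : x + (2 * t) • e = x + t • e + (t * ε) • y + t • (e - ε • y) := by module
  have hle : eval (x + t • e) (directionalDeriv y P) * (t * ε) ≤ eval (x + (2 * t) • e) P := by
    rw [hxt2]
    exact (eval_directionalDeriv_mul_le hP h hxt hy (by positivity)).trans
      (eval_le_eval_add hP h
        (add_mem_openCone hP h hxt (smul_mem_closedCone hP hy (by positivity)))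
        (smul_mem_closedCone hP (openCone_subset_closedCone hεy) ht))
  rw [Polynomial.eval_mul, Polynomial.eval_X, eval_lineRestrictDeriv,
    Real.norm_of_nonneg (by positivity), Real.norm_of_nonneg (hx _ (by positivity)).le,
    le_inv_mul_iff₀ hε]
  linarith

theorem X_pow_dvd_lineRestrictDeriv (hP : P.IsHomogeneous d) (h : IsHyperbolicWrt P e)
    (hx : x ∈ closedCone P e) (hy : y ∈ closedCone P e) {k : ℕ}
    (hk : coneMultiplicity P e x = k + 1) :
    Polynomial.X ^ k ∣ lineRestrictDeriv P x e y := by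
  have hdvd := X_pow_coneMultiplicity_dvd_X_mul_lineRestrictDeriv hP h hx hy
  rwa [hk, pow_succ', mul_dvd_mul_iff_left Polynomial.X_ne_zero] at hdvd

theorem exists_sub_smul_mem_closedCone (hP : P.IsHomogeneous d) (h : IsHyperbolicWrt P e)
    (hx : x ∈ closedCone P e) (hy : y ∈ closedCone P e)
    (hdvd : Polynomial.X ^ coneMultiplicity P e x ∣ lineRestrictDeriv P x e y) :
    ∃ ε : ℝ, 0 < ε ∧ ε < 1 ∧ x - ε • y ∈ closedCone P e := by
  rw [← isBigO_pow_iff_X_pow_dvd (l := 𝓝[>] 0) (nhdsGT_le_nhdsNE 0)] at hdvd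
  obtain ⟨M, hM, hbound⟩ := (hdvd.trans
    ((isTheta_eval_add_smul hx).2.mono nhdsWithin_le_nhds)).exists_pos
  have hM1 : 0 < M + 1 := by linarith
  have hε1 : (M + 1)⁻¹ < 1 := inv_lt_one_of_one_lt₀ (by linarith)
  have hεM : (M + 1)⁻¹ * M < 1 := by rw [inv_mul_lt_iff₀ hM1]; linarith
  refine ⟨(M + 1)⁻¹, inv_pos.mpr hM1, hε1, ?_⟩
  have hcont : Continuous fun t : ℝ => x + t • e - (M + 1)⁻¹ • y := by fun_prop
  rw [← closure_openCone hP h]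
  refine mem_closure_of_tendsto
    ((hcont.tendsto' 0 _ (by simp)).mono_left (nhdsWithin_le_nhds (s := Set.Ioi 0))) ?_
  filter_upwards [hbound.bound, eventually_mem_nhdsWithin] with t htM ht
  rw [Real.norm_of_nonneg (eval_lineRestrictDeriv_nonneg hP h hx hy ht), eval_lineRestrictDeriv,
    Real.norm_of_nonneg (hx t ht).le] at htM
  exact sub_smul_mem_openCone hP h (add_smul_mem_openCone hx ht) hy htM
    (inv_nonneg.mpr hM1.le) hεM

end Multiplicity

/-! ### Faces -/

section Faces

variable {n : ℕ} {S F : Set (Fin n → ℝ)} {x y : Fin n → ℝ}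

theorem IsFaceOf.add_mem (hF : IsFaceOf S F) (h0 : 0 ∈ S) (hx : x ∈ F) (hy : y ∈ F)
    (hxy : x + y ∈ S) : x + y ∈ F := by
  obtain ⟨-, hconv, -, hface⟩ := hF
  have hmid : (1 / 2 : ℝ) • (x + y) + (1 - 1 / 2 : ℝ) • (0 : Fin n → ℝ) ∈ F := by
    rw [smul_zero, add_zero, smul_add]
    exact hconv hx hy (by norm_num) (by norm_num) (by norm_num)
  exact (hface _ hxy _ h0 _ (by norm_num) (by norm_num) hmid).1

theorem IsFaceOf.mem_of_inv_smul_sub_mem (hF : IsFaceOf S F) (hx : x ∈ F) (hy : y ∈ S) {ε : ℝ}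
    (hε : 0 < ε) (hε1 : ε < 1) (h : (1 - ε)⁻¹ • (x - ε • y) ∈ S) : y ∈ F := by
  refine (hF.2.2.2 y hy _ h ε hε hε1 ?_).1
  rwa [smul_inv_smul₀ (sub_pos.mpr hε1).ne', add_sub_cancel]

theorem affEval_zero (l : (Fin n → ℝ) →ₗ[ℝ] ℝ) :
    affEval (fun i => l (Pi.single i 1)) 0 = l := by
  funext x
  rw [affEval, zero_add, LinearMap.pi_apply_eq_sum_univ l x]
  refine Finset.sum_congr rfl fun i _ => ?_
  have hsingle : (Pi.single i 1 : Fin n → ℝ) = fun j => if i = j then 1 else 0 :=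
    funext fun j => by simp only [Pi.single_apply, eq_comm]
  rw [hsingle, smul_eq_mul, mul_comm]

theorem isExposedFaceOf_of_linearMap (hne : F.Nonempty) (hFS : F ⊆ S)
    (l : (Fin n → ℝ) →ₗ[ℝ] ℝ) (hnonneg : ∀ y ∈ S, 0 ≤ l y)
    (hmem : ∀ y ∈ S, y ∈ F ↔ l y = 0) : IsExposedFaceOf S F := by
  rcases eq_or_ne l 0 with rfl | hl
  · exact Or.inl (hFS.antisymm fun y hy => (hmem y hy).mpr rfl)
  have hzero : {x | l x = 0} ∩ S = F := by
    ext y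
    exact ⟨fun hy => (hmem y hy.2).mpr hy.1, fun hy => ⟨(hmem y (hFS hy)).mp hy, hFS hy⟩⟩
  refine Or.inr ⟨fun i => l (Pi.single i 1), 0, ?_⟩
  rw [affEval_zero, hzero]
  exact ⟨fun h0 => hl (DFunLike.coe_injective h0), hnonneg, hne, rfl⟩

end Faces

theorem exists_mem_face_iff_X_pow_dvd {m d : ℕ} {P : MvPolynomial (Fin m) ℝ} {e : Fin m → ℝ}
    {F : Set (Fin m → ℝ)} (hP : P.IsHomogeneous d) (h : IsHyperbolicWrt P e)
    (hF : IsFaceOf (closedCone P e) F) :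
    ∃ x ∈ closedCone P e, ∀ y ∈ closedCone P e,
      y ∈ F ↔ Polynomial.X ^ coneMultiplicity P e x ∣ lineRestrictDeriv P x e y := by
  obtain ⟨x, hxF, hmin⟩ :=
    exists_minimalFor_of_wellFoundedLT (· ∈ F) (coneMultiplicity P e) hF.1
  have hx := hF.2.2.1 hxF
  refine ⟨x, hx, fun y hy => ⟨fun hyF => ?_, fun hdvd => ?_⟩⟩
  · have hxyF := hF.add_mem (zero_mem_closedCone hP h.1) hxF hyF (add_mem_closedCone hP h hx hy)
    have hle : coneMultiplicity P e x ≤ coneMultiplicity P e (x + y) :=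
      (le_total _ _).elim id (hmin hxyF)
    exact (pow_dvd_pow _ hle).trans (X_pow_coneMultiplicity_add_dvd_lineRestrictDeriv hP h hx hy)
  · obtain ⟨ε, hε, hε1, hsub⟩ := exists_sub_smul_mem_closedCone hP h hx hy hdvd
    exact hF.mem_of_inv_smul_sub_mem hxF hy hε hε1
      (smul_mem_closedCone hP hsub (inv_pos.mpr (sub_pos.mpr hε1)))

/-- **Renegar.** Every face of a closed hyperbolicity cone is exposed. -/
theorem hyperbolicityCone_faces_exposed {m d : ℕ}
    (P : MvPolynomial (Fin m) ℝ) (hhom : P.IsHomogeneous d)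
    (e : Fin m → ℝ) (he : e ≠ 0) (hhyp : IsHyperbolicWrt P e)
    (C : Set (Fin m → ℝ))
    (hC : C = closure (connectedComponentIn {x | 0 < eval x P} e)) :
    ∀ F : Set (Fin m → ℝ), IsFaceOf C F → IsExposedFaceOf C F := by
  rw [connectedComponentIn_eq_openCone hhom hhyp, closure_openCone hhom hhyp] at hC
  subst hC
  intro F hF
  obtain ⟨x, hx, hmem⟩ := exists_mem_face_iff_X_pow_dvd hhom hhyp hF
  rcases hr : coneMultiplicity P e x with _ | k <;> simp only [hr] at hmem
  · exact Or.inl (hF.2.2.1.antisymm fun y hy => (hmem y hy).mpr (by simp))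
  · have hdvd : ∀ y ∈ closedCone P e, Polynomial.X ^ k ∣ lineRestrictDeriv P x e y :=
      fun y hy => X_pow_dvd_lineRestrictDeriv hhom hhyp hx hy hr
    exact isExposedFaceOf_of_linearMap hF.1 hF.2.2.1
      (Polynomial.lcoeff ℝ k ∘ₗ lineRestrictDeriv P x e)
      (fun y hy => coeff_nonneg_of_X_pow_dvd (hdvd y hy) fun t =>
        eval_lineRestrictDeriv_nonneg hhom hhyp hx hy)
      fun y hy => (hmem y hy).trans (X_pow_succ_dvd_iff_coeff_eq_zero (hdvd y hy))
end
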